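/- arXiv:1010.0646 — 5 statements merged into one kernel-verified Lean document; each statement's English description precedes it below -/
import Mathlib

section
/- Fix an integer N ≥ 2. The square matrix whose rows and columns are indexed by the 2-partitions of N and whose (μ,ν) entry is the rational number C(μ,ν) is nonsingular, i.e. its determinant over ℚ is nonzero. (This is the paper's combinatorial form of the theorem, cf. Milnor, that the matrix of characteristic numbers ⟨ch_{m_1}⋯ch_{m_s}(ξ^{(n_1)}⊠⋯⊠ξ^{(n_r)}), [S^{2n_1}×⋯×S^{2n_r}]⟩ indexed by partitions of N into parts ≥ 2 is nonsingular.) -/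
/-!
The matrix is triangular with respect to the number of parts. A function `g` counted by `C(μ,ν)`
is surjective, because every part of `μ` is a nonempty sum of parts of `ν` (the parts of `μ` being
positive). Hence `C(μ,ν) ≠ 0` forces `card μ ≤ card ν`, and if the cardinalities agree then `g` is
a bijection matching equal parts, so `μ = ν`. The matrix is therefore block triangular for the
grading by number of parts, with diagonal blocks that are themselves diagonal; the diagonal
entries are nonzero because the identity function is counted by `C(μ,μ)`.
-/

/-- The number `C(μ,ν)` computed from fixed enumerations `m` and `n` of the parts of
two partitions: the number of functions `g : {1,…,r} → {1,…,s}` such that for each `j`,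
the parts `n i` with `g i = j` sum to `m j`. -/
def partFnCount (m n : List ℕ) : ℕ :=
  Fintype.card {g : Fin n.length → Fin m.length //
    ∀ j : Fin m.length, (∑ i : Fin n.length, if g i = j then n.get i else 0) = m.get j}

/-- `C(μ,ν)` for multisets `μ ν`, using the canonical enumerations `μ.toList`, `ν.toList`
(the value is independent of the chosen enumerations). -/
noncomputable def Cnum (μ ν : Multiset ℕ) : ℕ :=
  partFnCount μ.toList ν.toList

lemma surjective_of_fiber_sum {m n : List ℕ} (hm : ∀ x ∈ m, 0 < x)
    {g : Fin n.length → Fin m.length}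
    (hg : ∀ j, (∑ i, if g i = j then n.get i else 0) = m.get j) : Function.Surjective g := by
  intro j
  by_contra! h
  have h0 : (∑ i, if g i = j then n.get i else 0) = 0 :=
    Finset.sum_eq_zero fun i _ => if_neg (h i)
  have hpos := hm (m.get j) (List.get_mem m j)
  have := hg j
  omega

lemma exists_of_partFnCount_ne_zero {m n : List ℕ} (h : partFnCount m n ≠ 0) :
    ∃ g : Fin n.length → Fin m.length,
      ∀ j, (∑ i, if g i = j then n.get i else 0) = m.get j := by
  obtain ⟨g, hg⟩ := Fintype.card_pos_iff.mp (Nat.pos_of_ne_zero h)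
  exact ⟨g, hg⟩

lemma length_le_of_partFnCount_ne_zero {m n : List ℕ} (hm : ∀ x ∈ m, 0 < x)
    (h : partFnCount m n ≠ 0) : m.length ≤ n.length := by
  obtain ⟨g, hg⟩ := exists_of_partFnCount_ne_zero h
  simpa using Fintype.card_le_of_surjective g (surjective_of_fiber_sum hm hg)

/-- With equally many parts on both sides, a counted function is a surjection between finite sets
of the same size, hence a bijection under which the parts correspond. -/
lemma coe_eq_of_partFnCount_ne_zero {m n : List ℕ} (hm : ∀ x ∈ m, 0 < x)
    (h : partFnCount m n ≠ 0) (hlen : m.length = n.length) :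
    (m : Multiset ℕ) = (n : Multiset ℕ) := by
  obtain ⟨g, hg⟩ := exists_of_partFnCount_ne_zero h
  have hbij : Function.Bijective g :=
    (Fintype.bijective_iff_surjective_and_card g).mpr
      ⟨surjective_of_fiber_sum hm hg, by simp [hlen]⟩
  have hget : n.get = m.get ∘ g := by
    funext i
    have := hg (g i)
    simpa [hbij.injective.eq_iff] using this
  have hcoe : ∀ l : List ℕ, (l : Multiset ℕ) = Finset.univ.val.map l.get := by
    intro l
    rw [Fin.univ_val_map, List.ofFn_get]
  have huniv : (Finset.univ : Finset (Fin n.length)).val.map g = Finset.univ.val :=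
    congrArg Finset.val (Finset.map_univ_equiv (Equiv.ofBijective g hbij))
  rw [hcoe m, hcoe n, hget, ← Multiset.map_map, huniv]

lemma partFnCount_self_ne_zero (m : List ℕ) : partFnCount m m ≠ 0 := by
  refine (Fintype.card_pos_iff.mpr ⟨⟨id, fun j => ?_⟩⟩).ne'
  simp

/-- The matrix of the numbers `C(μ,ν)`, indexed by the 2-partitions of `N`
(partitions of `N` all of whose parts are `≥ 2`), is nonsingular over `ℚ`. -/
theorem matrix_C_det_ne_zero (N : ℕ) (hN : 2 ≤ N) :
    Matrix.det
      (Matrix.of fun μ ν : {p : Nat.Partition N // ∀ i ∈ p.parts, 2 ≤ i} =>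
        (Cnum μ.1.parts ν.1.parts : ℚ)) ≠ 0 := by
  have hpos : ∀ μ : {p : Nat.Partition N // ∀ i ∈ p.parts, 2 ≤ i},
      ∀ x ∈ μ.1.parts.toList, 0 < x := fun μ x hx =>
    μ.1.parts_pos (Multiset.mem_toList.mp hx)
  have htri : (Matrix.of fun μ ν : {p : Nat.Partition N // ∀ i ∈ p.parts, 2 ≤ i} =>
      (Cnum μ.1.parts ν.1.parts : ℚ)).BlockTriangular fun μ => μ.1.parts.card := by
    intro μ ν hlt
    rw [Matrix.of_apply, Nat.cast_eq_zero]
    by_contra h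
    have hle := length_le_of_partFnCount_ne_zero (hpos μ) h
    simp only [Multiset.length_toList] at hle
    exact absurd hlt (not_lt.mpr hle)
  rw [htri.det]
  refine Finset.prod_ne_zero_iff.mpr fun k _ => ?_
  have hdiag : (Matrix.toSquareBlock
      (Matrix.of fun μ ν : {p : Nat.Partition N // ∀ i ∈ p.parts, 2 ≤ i} =>
        (Cnum μ.1.parts ν.1.parts : ℚ)) (fun μ => μ.1.parts.card) k).IsDiag := by
    rintro ⟨μ, hμ⟩ ⟨ν, hν⟩ hne
    rw [Matrix.toSquareBlock_def, Matrix.of_apply, Matrix.of_apply, Nat.cast_eq_zero]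
    by_contra h
    refine hne (Subtype.ext (Subtype.ext (Nat.Partition.ext ?_)))
    have heq := coe_eq_of_partFnCount_ne_zero (hpos μ) h
      (by simpa only [Multiset.length_toList] using hμ.trans hν.symm)
    simpa only [Multiset.coe_toList] using heq
  rw [← hdiag.diagonal_diag, Matrix.det_diagonal]
  exact Finset.prod_ne_zero_iff.mpr fun μ _ =>
    Nat.cast_ne_zero.mpr (partFnCount_self_ne_zero _)
end

section
/- Fix an integer N ≥ 2 and a 2-partition ν of N. Then the diagonal entry C(ν,ν) equals the product, over all integers v, of the factorial of the multiplicity of v as a part of ν; in particular C(ν,ν) ≠ 0. (These are the diagonal entries of the characteristic-number matrix, e.g. C((2,2,2),(2,2,2)) = 3! = 6.) -/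
/-- For a permutation `g`, each fibre is a singleton, so the fibre sums of `f` reproduce `f` exactly
when `g` preserves `f`. -/
lemma perm_fibre_sum_iff {α : Type*} [Fintype α] [DecidableEq α] (f : α → ℕ) (g : Equiv.Perm α) :
    (∀ j, (∑ i, if g i = j then f i else 0) = f j) ↔ f ∘ g = f := by
  have key : ∀ j, (∑ i, if g i = j then f i else 0) = f (g.symm j) := fun j => by
    simp only [← Equiv.eq_symm_apply]
    simp
  simp only [key, funext_iff, Function.comp_apply]
  exact ⟨fun h i => by simpa using (h (g i)).symm, fun h j => by simpa using (h (g.symm j)).symm⟩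

lemma bijective_of_fibre_sum {α : Type*} [Fintype α] [DecidableEq α] (f : α → ℕ)
    (hf : ∀ i, 0 < f i) (g : α → α)
    (h : ∀ j, (∑ i, if g i = j then f i else 0) = f j) : Function.Bijective g := by
  refine Finite.surjective_iff_bijective.mp fun j => ?_
  by_contra! hj
  have h0 := h j
  simp only [hj, if_false, Finset.sum_const_zero] at h0
  exact (hf j).ne h0

/-- For a positive weight, the self-maps whose fibre sums reproduce the weight are exactly the
permutations that preserve it. -/
noncomputable def fibreSumEquiv {α : Type*} [Fintype α] [DecidableEq α] (f : α → ℕ)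
    (hf : ∀ i, 0 < f i) :
    {g : α → α // ∀ j, (∑ i, if g i = j then f i else 0) = f j} ≃
      {g : Equiv.Perm α // f ∘ g = f} where
  toFun g := ⟨Equiv.ofBijective g.1 (bijective_of_fibre_sum f hf g.1 g.2),
    (perm_fibre_sum_iff f _).mp g.2⟩
  invFun g := ⟨g.1, (perm_fibre_sum_iff f g.1).mpr g.2⟩
  left_inv _ := rfl
  right_inv _ := Subtype.ext (Equiv.ext fun _ => rfl)

lemma card_get_eq (l : List ℕ) (v : ℕ) :
    Fintype.card {i : Fin l.length // l.get i = v} = l.count v := by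
  rw [Fintype.card_subtype]
  conv_rhs => rw [← List.ofFn_get l, ← Multiset.coe_count, ← Fin.univ_val_map, Multiset.count_map]
  rw [Finset.card_def, Finset.filter_val]
  simp only [eq_comm]

lemma partFnCount_self (l : List ℕ) (hl : ∀ i ∈ l, 0 < i) :
    partFnCount l l = ∏ v ∈ l.toFinset, (l.count v).factorial := by
  unfold partFnCount
  rw [Fintype.card_congr (fibreSumEquiv l.get fun i => hl _ (l.get_mem i)),
    DomMulAct.stabilizer_card']
  have himage : Finset.univ.image l.get = l.toFinset := by
    ext v
    simp [List.mem_iff_get]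
  rw [himage]
  exact Finset.prod_congr rfl fun v _ => by rw [card_get_eq]

/-- For a 2-partition `ν` of `N`, the diagonal entry `C(ν,ν)` equals the product over
all integers `v` of the factorial of the multiplicity of `v` in `ν`;
in particular `C(ν,ν) ≠ 0`. -/
theorem C_diagonal (N : ℕ) (hN : 2 ≤ N)
    (ν : {p : Nat.Partition N // ∀ i ∈ p.parts, 2 ≤ i}) :
    Cnum ν.1.parts ν.1.parts =
      ∏ v ∈ ν.1.parts.toFinset, (ν.1.parts.count v).factorial ∧
    Cnum ν.1.parts ν.1.parts ≠ 0 := by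
  have h : Cnum ν.1.parts ν.1.parts =
      ∏ v ∈ ν.1.parts.toFinset, (ν.1.parts.count v).factorial := by
    rw [Cnum, partFnCount_self _ fun i hi => ν.1.parts_pos (Multiset.mem_toList.mp hi)]
    simp only [← Multiset.coe_count, Multiset.coe_toList]
    congr 1
    ext v
    simp
  refine ⟨h, ?_⟩
  rw [h]
  exact Finset.prod_ne_zero_iff.mpr fun v _ => Nat.factorial_ne_zero _
end

section
/- Let k, l ≥ 1 be integers with gcd(k,l) = 1. Suppose T ∈ SU(kl) can be written as T = λ · (U ⊗ V) for some scalar λ ∈ ℂ and unitary matrices U ∈ U(k), V ∈ U(l). Then there exist A ∈ SU(k) and B ∈ SU(l) with T = A ⊗ B. (Equivalently, the preimage in SU(kl) of the subgroup PU(k) ⊗ PU(l) ⊆ PU(kl) is exactly SU(k) ⊗ SU(l); this is the fact underlying the paper's representation of the matrix Grassmannian PU(kl)/(PU(k) ⊗ PU(l)) as SU(kl)/(SU(k) ⊗ SU(l)) when (k,l) = 1.) -/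
/-!
Write `u = det U`, `v = det V`. Taking determinants in `T = λ (U ⊗ V)` gives
`λ ^ (kl) * u ^ l * v ^ k = 1`. It suffices to split `λ = a * b` with `a ^ k * u = 1` and
`b ^ l * v = 1`: then `A = a U` and `B = b V` have determinant one, and they are unitary because
`|u| = |v| = 1` forces `|a| = |b| = 1`.

For the splitting (`exists_scalar_splitting`), take any roots `a₀ ^ k = u⁻¹`, `b₀ ^ l = v⁻¹`. The
error `c = λ / (a₀ b₀)` is a `kl`-th root of unity, and by Bézout, `k x + l y = 1`, it is the product
of the `k`-th root of unity `c ^ (l y)` and the `l`-th root of unity `c ^ (k x)`; these correct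
`a₀` and `b₀`.
-/

open scoped Kronecker

/-- The Kronecker product of a `k×k` matrix and an `l×l` matrix, viewed as a
`(kl)×(kl)` matrix via the fixed bijection `finProdFinEquiv : Fin k × Fin l ≃ Fin (k*l)`. -/
noncomputable def kron {k l : ℕ} (A : Matrix (Fin k) (Fin k) ℂ)
    (B : Matrix (Fin l) (Fin l) ℂ) : Matrix (Fin (k * l)) (Fin (k * l)) ℂ :=
  Matrix.reindex finProdFinEquiv finProdFinEquiv (A ⊗ₖ B)

/-- For coprime `k, l`, the determinant constraint on `lam` lets it be split into a factor
normalizing a `k × k` determinant `u` and a factor normalizing an `l × l` determinant `v`. -/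
lemma exists_scalar_splitting {k l : ℕ} (hk : k ≠ 0) (hl : l ≠ 0) (hgcd : Nat.gcd k l = 1)
    {lam u v : ℂ} (h : lam ^ (k * l) * (u ^ l * v ^ k) = 1) :
    ∃ a b : ℂ, a * b = lam ∧ a ^ k * u = 1 ∧ b ^ l * v = 1 := by
  have hu : u ≠ 0 := by
    rintro rfl
    simp [hl] at h
  have hv : v ≠ 0 := by
    rintro rfl
    simp [hk] at h
  have hlam : lam ≠ 0 := by
    rintro rfl
    simp [hl, hk] at h
  obtain ⟨a, ha⟩ := IsAlgClosed.exists_pow_nat_eq u⁻¹ (Nat.pos_of_ne_zero hk)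
  obtain ⟨b, hb⟩ := IsAlgClosed.exists_pow_nat_eq v⁻¹ (Nat.pos_of_ne_zero hl)
  have ha0 : a ≠ 0 := by
    rintro rfl
    rw [zero_pow hk] at ha
    exact inv_ne_zero hu ha.symm
  have hb0 : b ≠ 0 := by
    rintro rfl
    rw [zero_pow hl] at hb
    exact inv_ne_zero hv hb.symm
  obtain ⟨c, hc⟩ : ∃ c, c = lam / (a * b) := ⟨_, rfl⟩
  have hc0 : c ≠ 0 := hc ▸ div_ne_zero hlam (mul_ne_zero ha0 hb0)
  have hclam : a * b * c = lam := by
    rw [hc]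
    field_simp
  have hc1 : c ^ (k * l) = 1 := by
    have hab : (a * b) ^ (k * l) * (u ^ l * v ^ k) = 1 := by
      rw [mul_pow, pow_mul a, ha, mul_comm k l, pow_mul b, hb, inv_pow, inv_pow]
      field_simp
    rw [← hclam, mul_pow] at h
    calc c ^ (k * l) = (a * b) ^ (k * l) * (u ^ l * v ^ k) * c ^ (k * l) := by rw [hab, one_mul]
      _ = (a * b) ^ (k * l) * c ^ (k * l) * (u ^ l * v ^ k) := by ring
      _ = 1 := h
  have hbez : (k : ℤ) * Nat.gcdA k l + l * Nat.gcdB k l = 1 := by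
    rw [← Nat.gcd_eq_gcd_ab, hgcd, Nat.cast_one]
  generalize Nat.gcdA k l = x at hbez
  generalize Nat.gcdB k l = y at hbez
  have hcz : c ^ ((k : ℤ) * l) = 1 := by exact_mod_cast hc1
  refine ⟨a * c ^ ((l : ℤ) * y), b * c ^ ((k : ℤ) * x), ?_, ?_, ?_⟩
  · calc a * c ^ ((l : ℤ) * y) * (b * c ^ ((k : ℤ) * x))
        = a * b * (c ^ ((k : ℤ) * x) * c ^ ((l : ℤ) * y)) := by ring
      _ = lam := by rw [← zpow_add₀ hc0, hbez, zpow_one, hclam]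
  · have : (c ^ ((l : ℤ) * y)) ^ k = 1 := by
      rw [← zpow_natCast, ← zpow_mul, show (l : ℤ) * y * k = k * l * y by ring, zpow_mul, hcz,
        one_zpow]
    rw [mul_pow, this, ha, mul_one, inv_mul_cancel₀ hu]
  · have : (c ^ ((k : ℤ) * x)) ^ l = 1 := by
      rw [← zpow_natCast, ← zpow_mul, show (k : ℤ) * x * l = k * l * x by ring, zpow_mul, hcz,
        one_zpow]
    rw [mul_pow, this, hb, mul_one, inv_mul_cancel₀ hv]

/-- A scalar multiple of a unitary matrix lies in the special unitary group as soon as it has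
determinant one, since the scalar then has modulus one. -/
lemma smul_mem_specialUnitaryGroup {n : ℕ} (hn : n ≠ 0) {U : Matrix (Fin n) (Fin n) ℂ}
    (hU : U ∈ Matrix.unitaryGroup (Fin n) ℂ) {a : ℂ} (ha : a ^ n * U.det = 1) :
    a • U ∈ Matrix.specialUnitaryGroup (Fin n) ℂ := by
  have hdet : ‖U.det‖ = 1 :=
    CStarRing.norm_of_mem_unitary (Matrix.det_of_mem_unitary hU)
  have hnorm : ‖a‖ = 1 := by
    have h := congrArg norm ha
    rw [norm_mul, norm_pow, hdet, mul_one, norm_one] at h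
    exact (pow_eq_one_iff_of_nonneg (norm_nonneg a) hn).mp h
  have haa : a * star a = 1 := by
    rw [Complex.star_def, Complex.mul_conj']
    simp [hnorm]
  rw [Matrix.mem_specialUnitaryGroup_iff]
  constructor
  · rw [Matrix.mem_unitaryGroup_iff] at hU ⊢
    rw [star_smul, smul_mul_smul_comm, haa, hU, one_smul]
  · rw [Matrix.det_smul, Fintype.card_fin, ha]

/-- For `k, l ≥ 1` with `gcd(k,l) = 1`: if `T ∈ SU(kl)` is a scalar multiple of a Kronecker
product `U ⊗ V` of unitaries `U ∈ U(k)`, `V ∈ U(l)`, then `T = A ⊗ B` for some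
`A ∈ SU(k)` and `B ∈ SU(l)`. -/
theorem scalar_kronecker_unitary_mem_SU_kron (k l : ℕ) (hk : 1 ≤ k) (hl : 1 ≤ l)
    (hgcd : Nat.gcd k l = 1)
    (T : Matrix (Fin (k * l)) (Fin (k * l)) ℂ)
    (hT : T ∈ Matrix.specialUnitaryGroup (Fin (k * l)) ℂ)
    (U : Matrix (Fin k) (Fin k) ℂ) (hU : U ∈ Matrix.unitaryGroup (Fin k) ℂ)
    (V : Matrix (Fin l) (Fin l) ℂ) (hV : V ∈ Matrix.unitaryGroup (Fin l) ℂ)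
    (lam : ℂ) (hTUV : T = lam • kron U V) :
    ∃ (A : Matrix (Fin k) (Fin k) ℂ) (B : Matrix (Fin l) (Fin l) ℂ),
      A ∈ Matrix.specialUnitaryGroup (Fin k) ℂ ∧
      B ∈ Matrix.specialUnitaryGroup (Fin l) ℂ ∧
      T = kron A B := by
  have hdet := (Matrix.mem_specialUnitaryGroup_iff.mp hT).2
  rw [hTUV, kron, Matrix.det_smul, Matrix.det_reindex_self, Matrix.det_kronecker] at hdet
  simp only [Fintype.card_fin] at hdet
  have hk0 : k ≠ 0 := Nat.one_le_iff_ne_zero.mp hk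
  have hl0 : l ≠ 0 := Nat.one_le_iff_ne_zero.mp hl
  obtain ⟨a, b, hab, ha, hb⟩ := exists_scalar_splitting hk0 hl0 hgcd hdet
  refine ⟨a • U, b • V, smul_mem_specialUnitaryGroup hk0 hU ha,
    smul_mem_specialUnitaryGroup hl0 hV hb, ?_⟩
  rw [hTUV, kron, kron, Matrix.smul_kronecker, Matrix.kronecker_smul, smul_smul, hab]
  rfl
end

section
/- Let k, l ≥ 1 and n = k·l, and let A be a unital *-subalgebra of M_n(ℂ) (a subalgebra closed under conjugate transpose and containing the identity) that is isomorphic as a ℂ-star-algebra to M_k(ℂ). Then there exists a unitary matrix W ∈ U(n) such that A = W · (M_k(ℂ) ⊗ 1_l) · W⁻¹, where M_k(ℂ) ⊗ 1_l denotes the image of the unital *-embedding M_k(ℂ) → M_n(ℂ), X ↦ X ⊗ I_l (Kronecker product with the l×l identity, reindexed along a fixed bijection Fin k × Fin l ≃ Fin (k·l)). (This transitivity of the unitary group on k-subalgebras of M_{kl}(ℂ) underlies the description of the matrix Grassmannian Gr_{k,l}, the parameter space of k-subalgebras, as the homogeneous space PU(kl)/(PU(k) ⊗ PU(l)).) -/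
/-!
Let `φ : M_k(ℂ) → M_n(ℂ)`, `n = kl`, be the injective unital `*`-homomorphism with image `A`, and put
`E i j = φ (e i j)` for the matrix units `e i j`. The projections `E i i` all have the same trace
(`E i i = E i 0 * E 0 i` and `E 0 0 = E 0 i * E i 0`) and sum to `1`, so each has trace, hence rank,
`l`. Choose an orthonormal basis `v a` (`a < l`) of the range of `E 0 0` (the columns of `V` in
`exists_isometry_of_idempotent`). The vectors `E i 0 v a` are `kl` orthonormal vectors, because
`⟪E i 0 v a, E j 0 v b⟫ = ⟪v a, E 0 i E j 0 v b⟫ = δ i j ⟪v a, v b⟫`, so they are the columns of a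
unitary `W`. Finally `φ X (E j 0 v a) = ∑ i, X i j • E i 0 v a`, which says
`φ X * W = W * (X ⊗ 1)`.
-/

open scoped Kronecker

/-- An idempotent matrix of trace `l` has rank `l`, so its range has an orthonormal basis of `l`
vectors; these are the columns of `V`. -/
lemma exists_isometry_of_idempotent {n l : ℕ} (P : Matrix (Fin n) (Fin n) ℂ)
    (hP : P * P = P) (ht : P.trace = l) :
    ∃ V : Matrix (Fin n) (Fin l) ℂ, V.conjTranspose * V = 1 ∧ P * V = V := by
  let f : EuclideanSpace ℂ (Fin n) →ₗ[ℂ] EuclideanSpace ℂ (Fin n) := P.toEuclideanLin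
  have hf : IsIdempotentElem f := by
    change f * f = f
    ext x : 1
    simp [f, Matrix.toLpLin_apply, Matrix.mulVec_mulVec, hP]
  have hproj := LinearMap.IsIdempotentElem.isProj_range f hf
  have htr : LinearMap.trace ℂ _ f = P.trace := by
    rw [LinearMap.trace_eq_matrix_trace ℂ (PiLp.basisFun 2 ℂ (Fin n))]
    congr 1
    simp [f, Matrix.toLpLin_eq_toLin]
  have hrank : Module.finrank ℂ (LinearMap.range f) = l := by
    have := hproj.trace
    rw [htr, ht] at this
    exact_mod_cast this.symm
  let b := (stdOrthonormalBasis ℂ (LinearMap.range f)).reindex (finCongr hrank)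
  refine ⟨Matrix.of fun x a => (b a : EuclideanSpace ℂ (Fin n)) x, ?_, ?_⟩
  · ext a c
    have h := orthonormal_iff_ite.1 b.orthonormal a c
    rw [Submodule.coe_inner, PiLp.inner_apply] at h
    simp only [Matrix.mul_apply, Matrix.conjTranspose_apply, Matrix.of_apply, Matrix.one_apply, ← h]
    exact Finset.sum_congr rfl fun x _ => by simp [mul_comm]
  · ext x a
    have h := hproj.map_id _ (b a).2
    have h' := congrArg (fun v : EuclideanSpace ℂ (Fin n) => v x) h
    simpa [f, Matrix.toLpLin_apply, Matrix.mulVec, dotProduct, Matrix.mul_apply] using h'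

/-- The trace of the image of a diagonal matrix unit under a unital homomorphism
`M_k(ℂ) → M_{kl}(ℂ)` is `l`: the images of the `k` diagonal units have equal trace and sum
to `1`. -/
lemma trace_map_single {k l : ℕ}
    (φ : Matrix (Fin k) (Fin k) ℂ →⋆ₐ[ℂ] Matrix (Fin (k * l)) (Fin (k * l)) ℂ) (z : Fin k) :
    (φ (Matrix.single z z 1)).trace = l := by
  have hsame (i : Fin k) :
      (φ (Matrix.single i i 1)).trace = (φ (Matrix.single z z 1)).trace := by
    have h1 : φ (Matrix.single i i 1) = φ (Matrix.single i z 1) * φ (Matrix.single z i 1) := by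
      rw [← map_mul]; simp
    have h2 : φ (Matrix.single z z 1) = φ (Matrix.single z i 1) * φ (Matrix.single i z 1) := by
      rw [← map_mul]; simp
    rw [h1, h2, Matrix.trace_mul_comm]
  have hsum : ∑ i, (φ (Matrix.single i i 1)).trace = ((k * l : ℕ) : ℂ) := by
    rw [← Matrix.trace_sum, ← map_sum, Matrix.sum_single_one, map_one]
    simp
  simp only [hsame, Finset.sum_const, Finset.card_univ, Fintype.card_fin, nsmul_eq_mul,
    Nat.cast_mul] at hsum
  have hk : (k : ℂ) ≠ 0 := by exact_mod_cast (Fin.pos z).ne'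
  exact mul_left_cancel₀ hk hsum

/-- Every unital `*`-homomorphism `M_k(ℂ) → M_{kl}(ℂ)` is unitarily equivalent to
`X ↦ X ⊗ 1_l`. -/
lemma exists_unitary_intertwiner {k l : ℕ} (hk : 1 ≤ k)
    (φ : Matrix (Fin k) (Fin k) ℂ →⋆ₐ[ℂ] Matrix (Fin (k * l)) (Fin (k * l)) ℂ) :
    ∃ W ∈ Matrix.unitaryGroup (Fin (k * l)) ℂ, ∀ X, φ X * W = W * kron X 1 := by
  let z : Fin k := ⟨0, hk⟩
  obtain ⟨V, hV, hPV⟩ := exists_isometry_of_idempotent (φ (Matrix.single z z 1))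
    (by rw [← map_mul]; simp) (trace_map_single φ z)
  let W₀ : Matrix (Fin (k * l)) (Fin k × Fin l) ℂ :=
    Matrix.of fun x p => (φ (Matrix.single p.1 z 1) * V) x p.2
  have hblock (i j : Fin k) :
      (φ (Matrix.single i z 1) * V).conjTranspose * (φ (Matrix.single j z 1) * V) =
        if i = j then 1 else 0 := by
    have hstar : (φ (Matrix.single i z 1)).conjTranspose = φ (Matrix.single z i 1) := by
      rw [← Matrix.star_eq_conjTranspose, ← map_star, Matrix.star_eq_conjTranspose,
        Matrix.conjTranspose_single, star_one]
    rw [Matrix.conjTranspose_mul, hstar, Matrix.mul_assoc,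
      ← Matrix.mul_assoc (φ (Matrix.single z i 1)), ← map_mul]
    split_ifs with h
    · subst h
      rw [Matrix.single_mul_single_same, one_mul, hPV, hV]
    · rw [Matrix.single_mul_single_of_ne (h := h), map_zero, Matrix.zero_mul, Matrix.mul_zero]
  have hiso : W₀.conjTranspose * W₀ = 1 := by
    ext ⟨i, a⟩ ⟨j, b⟩
    have h : (W₀.conjTranspose * W₀) (i, a) (j, b) =
        ((φ (Matrix.single i z 1) * V).conjTranspose * (φ (Matrix.single j z 1) * V)) a b := rfl
    rw [h, hblock]
    by_cases hij : i = j <;> simp [hij, Matrix.one_apply]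
  have hint (X : Matrix (Fin k) (Fin k) ℂ) :
      φ X * W₀ = W₀ * Matrix.kroneckerMap (· * ·) X (1 : Matrix (Fin l) (Fin l) ℂ) := by
    ext x ⟨j, a⟩
    have h : (φ X * W₀) x (j, a) = (φ X * (φ (Matrix.single j z 1) * V)) x a := rfl
    have hX : X * Matrix.single j z 1 = ∑ i, X i j • Matrix.single i z 1 := by
      ext p q
      by_cases hq : z = q <;>
        simp [Matrix.sum_apply, Matrix.mul_apply, Matrix.single_apply, hq]
    rw [h, ← Matrix.mul_assoc, ← map_mul, hX, map_sum, Matrix.sum_mul, Matrix.sum_apply,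
      Matrix.mul_apply, Fintype.sum_prod_type]
    refine Finset.sum_congr rfl fun i _ => ?_
    rw [map_smul]
    simp [W₀, Matrix.kroneckerMap_apply, Matrix.one_apply, mul_comm]
  refine ⟨W₀.submatrix id finProdFinEquiv.symm, ?_, fun X => ?_⟩
  · rw [Matrix.mem_unitaryGroup_iff', Matrix.star_eq_conjTranspose, Matrix.conjTranspose_submatrix,
      Matrix.submatrix_mul _ _ _ id _ Function.bijective_id |>.symm, hiso,
      Matrix.submatrix_one_equiv]
  · have h := congrArg (fun M => M.submatrix id finProdFinEquiv.symm) (hint X)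
    simp only [kron, Matrix.reindex_apply]
    rw [Matrix.submatrix_mul_equiv, ← h]
    rfl

/-- Every unital `*`-subalgebra of `M_{kl}(ℂ)` that is `*`-isomorphic to `M_k(ℂ)` is
unitarily conjugate to the standard subalgebra `M_k(ℂ) ⊗ 1_l`, the image of the
embedding `X ↦ X ⊗ I_l`. -/
theorem star_subalgebra_unitarily_conjugate (k l : ℕ) (hk : 1 ≤ k) (hl : 1 ≤ l)
    (A : StarSubalgebra ℂ (Matrix (Fin (k * l)) (Fin (k * l)) ℂ))
    (hA : Nonempty (A ≃⋆ₐ[ℂ] Matrix (Fin k) (Fin k) ℂ)) :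
    ∃ W ∈ Matrix.unitaryGroup (Fin (k * l)) ℂ,
      (A : Set (Matrix (Fin (k * l)) (Fin (k * l)) ℂ)) =
        Set.range (fun X : Matrix (Fin k) (Fin k) ℂ =>
          W * kron X (1 : Matrix (Fin l) (Fin l) ℂ) * W⁻¹) := by
  obtain ⟨e⟩ := hA
  let φ : Matrix (Fin k) (Fin k) ℂ →⋆ₐ[ℂ] Matrix (Fin (k * l)) (Fin (k * l)) ℂ :=
    A.subtype.comp (e.symm : Matrix (Fin k) (Fin k) ℂ →⋆ₐ[ℂ] A)
  obtain ⟨W, hW, hφ⟩ := exists_unitary_intertwiner hk φ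
  refine ⟨W, hW, ?_⟩
  have hinv : W⁻¹ = star W := Matrix.inv_eq_right_inv (Matrix.mem_unitaryGroup_iff.1 hW)
  have hconj (X : Matrix (Fin k) (Fin k) ℂ) :
      W * kron X 1 * W⁻¹ = (e.symm X).1 := by
    rw [← hφ, hinv, Matrix.mul_assoc, Matrix.mem_unitaryGroup_iff.1 hW, Matrix.mul_one]
    rfl
  ext M
  simp only [hconj, Set.mem_range, SetLike.mem_coe]
  constructor
  · intro hM
    exact ⟨e ⟨M, hM⟩, by simp⟩
  · rintro ⟨X, rfl⟩
    exact (e.symm X).2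
end

section
/- Let k, l, m, n be positive integers with gcd(k,l) = 1 and gcd(km, ln) = 1. Let Gr_{k,l} := SU(kl) ⧸ (SU(k) ⊗ SU(l)) and Gr_{km,ln} := SU(klmn) ⧸ (SU(km) ⊗ SU(ln)) be the matrix Grassmannians, where SU(a) ⊗ SU(b) denotes the image of the Kronecker homomorphism SU(a) × SU(b) → SU(ab). Then the map Gr_{k,l} → Gr_{km,ln} induced by the unital embedding SU(kl) → SU(klmn), A ↦ A ⊗ I_{mn} (Kronecker product with the mn×mn identity, with indices reshuffled along a fixed bijection (Fin k × Fin l) × (Fin m × Fin n) ≃ Fin(km) × Fin(ln)) is a well-defined continuous map that induces an isomorphism of homotopy groups π_d for every d with 1 ≤ d < 2·min(k,l). (This is the paper's Proposition that the embedding Gr_{k,l} → Gr_{km,ln} induced by a unital *-homomorphism M_{kl}(ℂ) → M_{klmn}(ℂ) is an isomorphism on homotopy groups up to dimension ~2·min(k,l).) -/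
/-!
Write `K = SU(k) × SU(l)`, mapped to `G = SU(kl)` by the Kronecker homomorphism, which is injective
because `k` and `l` are coprime. The homotopy groups of a coset space `G / K` are computed from
those of `G` and `K`.

* For a topological group, `PiG e G` is the group of `e`-dimensional loops under pointwise
  multiplication, modulo null-homotopic ones.
* Maps from cubes lift along `G → G / K` (`IsCosetProj.lift`): moving along the map in small steps,
  the next point of the lift is the point of the new coset nearest to the previous one. It is unique
  because otherwise the midpoint of two nearest points, formed with a square root in `K`, would be
  nearer still. The lift can be prescribed on all faces of a cube but one (`IsCosetProj.relLift`).
* Restricting such a lift to the free face gives the boundary map `π_{e+1}(G / K) → π_e(K)`, with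
  image the kernel of `π_e(K) → π_e(G)`; it is injective if `π_{e+1}(K) → π_{e+1}(G)` is onto.
  Thus a map of coset spaces is bijective on `π_{e+1}` as soon as both these surjectivity
  conditions hold and the kernels in degree `e` correspond (`bijective_of_kernels`).
* The same lifting, for `SU(a+1) / SU(a) = S^{2a+1}`, together with the contractibility of
  low-dimensional loops in spheres, shows that `π_e(SU(a)) → π_e(SU(a+1))` is onto for `e ≤ 2a` and
  bijective for `e < 2a` (`stle_surj`, `stle_inj`). In this range the groups are commutative, and
  block inclusions which differ by a permutation of the basis induce the same map.
* Stably, the Kronecker homomorphism is therefore `(α, β) ↦ α ^ l * β ^ k` (`PiG.map_kron`), which is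
  onto as `k` and `l` are coprime, and `(A, B) ↦ (A ⊗ I_m, B ⊗ I_n)` is
  `(α, β) ↦ (α ^ m, β ^ n)` (`PiG.map_kronL`). That the latter is a bijection between the kernels
  `α ^ l * β ^ k = 1` and `α ^ (l * n) * β ^ (k * m) = 1` is arithmetic with `gcd (km, ln) = 1`
  (`kernel_inj`, `kernel_surj`).
-/

open scoped Kronecker Topology Topology.Homotopy

/-- The special unitary group `SU(n)`: the subgroup of the unitary group `U(n)` of
`n×n` complex matrices consisting of the matrices of determinant `1`. -/
noncomputable def SU (n : ℕ) : Subgroup (Matrix.unitaryGroup (Fin n) ℂ) :=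
  MonoidHom.ker (Matrix.detMonoidHom.comp (Matrix.unitaryGroup (Fin n) ℂ).subtype)

/-- The underlying matrix of an element of `SU(n)`. -/
def SU.toMat {n : ℕ} (x : SU n) : Matrix (Fin n) (Fin n) ℂ :=
  ((x : Matrix.unitaryGroup (Fin n) ℂ) : Matrix (Fin n) (Fin n) ℂ)

/-- The fixed reshuffling bijection `(Fin k × Fin l) × (Fin m × Fin n) ≃ Fin (km) × Fin (ln)`,
read as `Fin (kl) × Fin (mn) ≃ Fin (km) × Fin (ln)`. -/
def reshuffle (k l m n : ℕ) : Fin (k * l) × Fin (m * n) ≃ Fin (k * m) × Fin (l * n) :=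
  (finProdFinEquiv.symm.prodCongr finProdFinEquiv.symm).trans
    ((Equiv.prodProdProdComm (Fin k) (Fin l) (Fin m) (Fin n)).trans
      (finProdFinEquiv.prodCongr finProdFinEquiv))

/-- The unital embedding `M_{kl}(ℂ) → M_{klmn}(ℂ)`, `A ↦ A ⊗ I_{mn}`, with indices
reshuffled along the fixed bijection `(Fin k × Fin l) × (Fin m × Fin n) ≃ Fin (km) × Fin (ln)`. -/
noncomputable def embMat (k l m n : ℕ) (A : Matrix (Fin (k * l)) (Fin (k * l)) ℂ) :
    Matrix (Fin (k * m * (l * n))) (Fin (k * m * (l * n))) ℂ :=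
  Matrix.reindex ((reshuffle k l m n).trans finProdFinEquiv)
    ((reshuffle k l m n).trans finProdFinEquiv)
    (A ⊗ₖ (1 : Matrix (Fin (m * n)) (Fin (m * n)) ℂ))

section Auxiliary

open Set Filter Topology

/-! ### Loop groups of a topological group -/

/-- The cube `I^e`. -/
abbrev Cb (e : ℕ) : Type := Fin e → unitInterval

section Loops

variable {G G' G'' : Type*} [Group G] [TopologicalSpace G] [IsTopologicalGroup G]
  [Group G'] [TopologicalSpace G'] [IsTopologicalGroup G']
  [Group G''] [TopologicalSpace G''] [IsTopologicalGroup G'']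

/-- The group of `e`-dimensional loops of `G` based at `1`, under pointwise multiplication. -/
def Lp (e : ℕ) (G : Type*) [Group G] [TopologicalSpace G] [IsTopologicalGroup G] :
    Subgroup C(Cb e, G) where
  carrier := {f | ∀ y ∈ Cube.boundary (Fin e), f y = 1}
  mul_mem' := fun ha hb y hy => by simp [ha y hy, hb y hy]
  one_mem' := fun y _ => rfl
  inv_mem' := fun ha y hy => by simp [ha y hy]

/-- `Γ`, a map on `I^{e+1}`, is a null-homotopy rel boundary of `f`, the zeroth coordinate of the
cube being the homotopy parameter. -/
structure NullBy {e : ℕ} (f : C(Cb e, G)) (Γ : C(Cb (e + 1), G)) : Prop where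
  one' : ∀ y, Γ (Fin.cons 1 y) = f y
  zero' : ∀ y, Γ (Fin.cons 0 y) = 1
  side' : ∀ t, ∀ y ∈ Cube.boundary (Fin e), Γ (Fin.cons t y) = 1

/-- The normal subgroup of null-homotopic loops. -/
def Nl (e : ℕ) (G : Type*) [Group G] [TopologicalSpace G] [IsTopologicalGroup G] :
    Subgroup (Lp e G) where
  carrier := {f | ∃ Γ, NullBy f.1 Γ}
  mul_mem' := by
    rintro a b ⟨Γ, h⟩ ⟨Γ', h'⟩
    exact ⟨Γ * Γ', fun y => by simp [h.one', h'.one'], fun y => by simp [h.zero', h'.zero'],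
      fun t y hy => by simp [h.side' t y hy, h'.side' t y hy]⟩
  one_mem' := ⟨1, fun y => rfl, fun y => rfl, fun t y hy => rfl⟩
  inv_mem' := by
    rintro a ⟨Γ, h⟩
    exact ⟨Γ⁻¹, fun y => by simp [h.one'], fun y => by simp [h.zero'],
      fun t y hy => by simp [h.side' t y hy]⟩

theorem continuous_cons {n : ℕ} :
    Continuous fun p : unitInterval × Cb n => (Fin.cons p.1 p.2 : Cb (n + 1)) :=
  continuous_pi fun i => by
    refine Fin.cases ?_ (fun j => ?_) i
    · simpa using continuous_fst
    · simp only [Fin.cons_succ]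
      exact (continuous_apply j).comp continuous_snd

theorem continuous_tail {n : ℕ} : Continuous fun x : Cb (n + 1) => (Fin.tail x : Cb n) :=
  continuous_pi fun j => continuous_apply j.succ

/-- The projection `I^{n+1} → I^n` forgetting the zeroth coordinate. -/
def tailC (n : ℕ) : C(Cb (n + 1), Cb n) := ⟨fun x => Fin.tail x, continuous_tail⟩

instance (e : ℕ) : (Nl e G).Normal where
  conj_mem := by
    rintro a ⟨Γ, h⟩ g
    refine ⟨g.1.comp (tailC e) * Γ * (g.1.comp (tailC e))⁻¹, fun y => ?_, fun y => ?_,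
      fun t y hy => ?_⟩
    · simp [h.one', tailC]
    · simp [h.zero', tailC]
    · simp [h.side' t y hy, tailC]

/-- The homotopy group `π_e(G, 1)` of a topological group, with the group structure coming from
the pointwise multiplication of loops. -/
abbrev PiG (e : ℕ) (G : Type*) [Group G] [TopologicalSpace G] [IsTopologicalGroup G] : Type _ :=
  Lp e G ⧸ Nl e G

/-- Composition of loops with a continuous homomorphism. -/
def Lp.map (e : ℕ) (f : G →ₜ* G') : Lp e G →* Lp e G' where
  toFun a := ⟨(f : C(G, G')).comp a.1, fun y hy => by simp [a.2 y hy]⟩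
  map_one' := by ext y; simp
  map_mul' a b := by ext y; simp

@[simp] theorem Lp.map_apply (e : ℕ) (f : G →ₜ* G') (a : Lp e G) (y : Cb e) :
    (Lp.map e f a).1 y = f (a.1 y) := rfl

theorem Nl_map (e : ℕ) (f : G →ₜ* G') {a : Lp e G} (ha : a ∈ Nl e G) :
    Lp.map e f a ∈ Nl e G' := by
  obtain ⟨Γ, h⟩ := ha
  exact ⟨(f : C(G, G')).comp Γ, fun y => by simp [h.one'], fun y => by simp [h.zero'],
    fun t y hy => by simp [h.side' t y hy]⟩

/-- The homomorphism induced on homotopy groups. -/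
def PiG.map (e : ℕ) (f : G →ₜ* G') : PiG e G →* PiG e G' :=
  QuotientGroup.map _ _ (Lp.map e f) fun _ ha => Nl_map e f ha

@[simp] theorem PiG.map_mk (e : ℕ) (f : G →ₜ* G') (a : Lp e G) :
    PiG.map e f (a : PiG e G) = ((Lp.map e f a : Lp e G') : PiG e G') := rfl

theorem PiG.mk_eq_one {e : ℕ} {a : Lp e G} : (a : PiG e G) = 1 ↔ a ∈ Nl e G :=
  QuotientGroup.eq_one_iff a

theorem PiG.map_map (e : ℕ) (f : G →ₜ* G') (g : G' →ₜ* G'') (x : PiG e G) :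
    PiG.map e g (PiG.map e f x) = PiG.map e (g.comp f) x := by
  induction x using QuotientGroup.induction_on
  rfl

/-- A homomorphism that differs from another one by conjugation with an element joined to `1` by a
path induces the same map on homotopy groups. -/
theorem PiG.map_eq_of_conj (e : ℕ) (f g : G →ₜ* G') (p : C(unitInterval, G')) (hp : p 0 = 1)
    (h : ∀ x, g x = p 1 * f x * (p 1)⁻¹) : PiG.map e f = PiG.map e g := by
  refine MonoidHom.ext fun x => ?_
  induction x using QuotientGroup.induction_on with | _ a => ?_
  rw [PiG.map_mk, PiG.map_mk, QuotientGroup.eq]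
  let P : C(Cb (e + 1), G') := p.comp ⟨fun x => x 0, continuous_apply 0⟩
  let A : C(Cb (e + 1), G') := ((f : C(G, G')).comp a.1).comp (tailC e)
  refine ⟨A⁻¹ * (P * A * P⁻¹), fun y => ?_, fun y => ?_, fun t y hy => ?_⟩
  · simp [A, P, tailC, h]
  · simp [A, P, tailC, hp]
  · simp [A, P, tailC, a.2 y hy]

end Loops

/-! ### The groups `SU(n)` as compact groups of matrices -/

namespace SU

variable {n a b : ℕ}

theorem toMat_injective : Function.Injective (SU.toMat (n := n)) := fun _ _ h =>
  Subtype.ext (Subtype.ext h)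

@[simp] theorem toMat_mul (x y : SU n) : (SU.toMat (x * y)) = (SU.toMat x) * (SU.toMat y) := rfl

@[simp] theorem toMat_one : (SU.toMat (1 : SU n)) = 1 := rfl

@[simp] theorem toMat_inv (x : SU n) : (SU.toMat (x⁻¹)) = star (SU.toMat x) := rfl

theorem det_toMat (x : SU n) : (SU.toMat x).det = 1 := x.2

theorem star_mul_toMat (x : SU n) : star (SU.toMat x) * (SU.toMat x) = 1 := x.1.2.1

theorem toMat_mul_star (x : SU n) : (SU.toMat x) * star (SU.toMat x) = 1 := x.1.2.2

/-- The element of `SU(n)` with a given underlying matrix. -/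
def ofMat (M : Matrix (Fin n) (Fin n) ℂ) (h : star M * M = 1) (hd : M.det = 1) : SU n :=
  ⟨⟨M, Matrix.mem_unitaryGroup_iff'.2 h⟩, hd⟩

@[simp] theorem toMat_ofMat (M : Matrix (Fin n) (Fin n) ℂ) (h : star M * M = 1)
    (hd : M.det = 1) : (SU.toMat (ofMat M h hd)) = M := rfl

theorem isEmbedding_toMat : IsEmbedding (SU.toMat (n := n)) :=
  IsEmbedding.subtypeVal.comp IsEmbedding.subtypeVal

theorem continuous_toMat : Continuous (SU.toMat (n := n)) := isEmbedding_toMat.continuous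

theorem range_toMat :
    range (SU.toMat (n := n)) = {M | star M * M = 1 ∧ M.det = 1} := by
  ext M
  constructor
  · rintro ⟨x, rfl⟩
    exact ⟨(SU.star_mul_toMat x), (SU.det_toMat x)⟩
  · rintro ⟨h, hd⟩
    exact ⟨ofMat M h hd, rfl⟩

instance : CompactSpace (SU n) := by
  have hcl : IsClosed (range (SU.toMat (n := n))) := by
    rw [range_toMat]
    refine IsClosed.inter (isClosed_eq (by fun_prop) continuous_const)
      (isClosed_eq (by fun_prop) continuous_const)
  have hK : IsCompact (Set.univ.pi fun _ : Fin n => Set.univ.pi fun _ : Fin n =>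
      Metric.closedBall (0 : ℂ) 1) :=
    isCompact_univ_pi fun _ => isCompact_univ_pi fun _ => isCompact_closedBall _ _
  have hsub : range (SU.toMat (n := n)) ⊆ (Set.univ.pi fun _ : Fin n => Set.univ.pi
      fun _ : Fin n => Metric.closedBall (0 : ℂ) 1) := by
    rintro _ ⟨x, rfl⟩ i - j -
    simpa [SU.toMat] using entry_norm_bound_of_unitary x.1.2 i j
  have := hK.of_isClosed_subset hcl hsub
  refine ⟨isEmbedding_toMat.isCompact_iff.2 ?_⟩
  rwa [image_univ]

/-- A continuous homomorphism from `SU(a)` given by a formula on matrices. -/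
def homMk {G : Type*} [Group G] [TopologicalSpace G]
    (f : G → Matrix (Fin b) (Fin b) ℂ) (hf : Continuous f) (h1 : f 1 = 1)
    (hm : ∀ x y, f (x * y) = f x * f y) (hs : ∀ x, star (f x) * f x = 1)
    (hd : ∀ x, (f x).det = 1) : G →ₜ* SU b where
  toFun x := ofMat (f x) (hs x) (hd x)
  map_one' := toMat_injective h1
  map_mul' x y := toMat_injective (hm x y)
  continuous_toFun := isEmbedding_toMat.continuous_iff.2 hf

@[simp] theorem toMat_homMk {G : Type*} [Group G] [TopologicalSpace G]
    (f : G → Matrix (Fin b) (Fin b) ℂ) (hf : Continuous f) (h1 : f 1 = 1)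
    (hm : ∀ x y, f (x * y) = f x * f y) (hs : ∀ x, star (f x) * f x = 1)
    (hd : ∀ x, (f x).det = 1) (x : G) : (SU.toMat (homMk f hf h1 hm hs hd x)) = f x := rfl

end SU

/-! ### The Hilbert–Schmidt distance -/

section HS

variable {n : ℕ}

/-- The squared Hilbert–Schmidt norm. -/
noncomputable def nsq (M : Matrix (Fin n) (Fin n) ℂ) : ℝ := ∑ i, ∑ j, ‖M i j‖ ^ 2

theorem nsq_nonneg (M : Matrix (Fin n) (Fin n) ℂ) : 0 ≤ nsq M := by
  unfold nsq; positivity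

theorem nsq_eq_trace (M : Matrix (Fin n) (Fin n) ℂ) : nsq M = (star M * M).trace.re := by
  simp only [nsq, Matrix.trace, Matrix.diag, Matrix.mul_apply, Matrix.star_apply, Complex.re_sum]
  rw [Finset.sum_comm]
  refine Finset.sum_congr rfl fun i _ => Finset.sum_congr rfl fun j _ => ?_
  rw [Complex.star_def, ← Complex.normSq_eq_conj_mul_self, Complex.ofReal_re,
    Complex.normSq_eq_norm_sq]

theorem nsq_eq_zero {M : Matrix (Fin n) (Fin n) ℂ} (h : nsq M = 0) : M = 0 := by
  ext i j
  have h1 := (Finset.sum_eq_zero_iff_of_nonneg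
    (fun i _ => Finset.sum_nonneg fun j _ => sq_nonneg ‖M i j‖)).1 h i (Finset.mem_univ _)
  have h2 := (Finset.sum_eq_zero_iff_of_nonneg (fun j _ => sq_nonneg ‖M i j‖)).1 h1 j
    (Finset.mem_univ _)
  simpa using h2

theorem nsq_sub_le (A B C : Matrix (Fin n) (Fin n) ℂ) :
    nsq (A - C) ≤ 2 * nsq (A - B) + 2 * nsq (B - C) := by
  simp only [nsq, Finset.mul_sum, ← Finset.sum_add_distrib]
  refine Finset.sum_le_sum fun i _ => Finset.sum_le_sum fun j _ => ?_
  have h : ‖(A - C) i j‖ ≤ ‖(A - B) i j‖ + ‖(B - C) i j‖ := by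
    have : (A - C) i j = (A - B) i j + (B - C) i j := by simp
    rw [this]; exact norm_add_le _ _
  nlinarith [norm_nonneg ((A - C) i j), sq_nonneg (‖(A - B) i j‖ - ‖(B - C) i j‖)]

theorem nsq_mul_le (A B : Matrix (Fin n) (Fin n) ℂ) : nsq (A * B) ≤ nsq A * nsq B := by
  have h : ∀ i j, ‖(A * B) i j‖ ^ 2 ≤ (∑ k, ‖A i k‖ ^ 2) * ∑ k, ‖B k j‖ ^ 2 := by
    intro i j
    have h1 : ‖(A * B) i j‖ ≤ ∑ k, ‖A i k‖ * ‖B k j‖ := by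
      rw [Matrix.mul_apply]
      exact (norm_sum_le _ _).trans (Finset.sum_le_sum fun k _ => (norm_mul _ _).le)
    exact (pow_le_pow_left₀ (norm_nonneg _) h1 2).trans (Finset.sum_mul_sq_le_sq_mul_sq _ _ _)
  calc nsq (A * B) ≤ ∑ i, ∑ j, (∑ k, ‖A i k‖ ^ 2) * ∑ k, ‖B k j‖ ^ 2 :=
        Finset.sum_le_sum fun i _ => Finset.sum_le_sum fun j _ => h i j
    _ = nsq A * nsq B := by
        simp only [nsq, ← Finset.mul_sum, ← Finset.sum_mul]
        congr 1
        exact Finset.sum_comm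

theorem nsq_star (A : Matrix (Fin n) (Fin n) ℂ) : nsq (star A) = nsq A := by
  simp only [nsq, Matrix.star_apply, norm_star]
  exact Finset.sum_comm

theorem nsq_unitary_mul (U A : Matrix (Fin n) (Fin n) ℂ) (h : star U * U = 1) :
    nsq (U * A) = nsq A := by
  rw [nsq_eq_trace, nsq_eq_trace, star_mul, mul_assoc, ← mul_assoc (star U), h, one_mul]

/-- The real Hilbert–Schmidt pairing on `SU(n)`. -/
noncomputable def pr (x y : SU n) : ℝ := (star (SU.toMat x) * (SU.toMat y)).trace.re

theorem Continuous.pr {X : Type*} [TopologicalSpace X] {f g : X → SU n} (hf : Continuous f)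
    (hg : Continuous g) : Continuous fun x => pr (f x) (g x) := by
  have h1 : Continuous fun x => SU.toMat (f x) := SU.continuous_toMat.comp hf
  have h2 : Continuous fun x => SU.toMat (g x) := SU.continuous_toMat.comp hg
  exact Complex.continuous_re.comp ((h1.star.matrix_mul h2).matrix_trace)

theorem re_trace_star (M : Matrix (Fin n) (Fin n) ℂ) : (star M).trace.re = M.trace.re := by
  rw [Matrix.star_eq_conjTranspose, Matrix.trace_conjTranspose]; simp

theorem pr_comm (x y : SU n) : pr x y = pr y x := by
  rw [pr, ← re_trace_star, star_mul, star_star, pr]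

theorem pr_mul_left (z x y : SU n) : pr (z * x) (z * y) = pr x y := by
  simp only [pr, SU.toMat_mul, star_mul]
  rw [mul_assoc, ← mul_assoc (star (SU.toMat z)), (SU.star_mul_toMat z), one_mul]

theorem pr_mul_right (z x y : SU n) : pr (x * z) (y * z) = pr x y := by
  simp only [pr, SU.toMat_mul, star_mul]
  rw [mul_assoc, Matrix.trace_mul_comm, mul_assoc, mul_assoc, (SU.toMat_mul_star z), mul_one]

/-- The pairing measures the distance. -/
theorem pr_eq (x y : SU n) : pr x y = n - nsq ((SU.toMat x) - (SU.toMat y)) / 2 := by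
  have h : nsq ((SU.toMat x) - (SU.toMat y)) = 2 * n - 2 * pr x y := by
    have h1 : star ((SU.toMat x) - (SU.toMat y)) * ((SU.toMat x) - (SU.toMat y))
        = 1 + 1 - star (SU.toMat x) * (SU.toMat y) - star (SU.toMat y) * (SU.toMat x) := by
      rw [star_sub, sub_mul, mul_sub, mul_sub, (SU.star_mul_toMat x), (SU.star_mul_toMat y)]
      abel
    have h2 := pr_comm x y
    simp only [pr] at h2
    rw [nsq_eq_trace, h1]
    simp only [Matrix.trace_sub, Matrix.trace_add, Matrix.trace_one, Complex.sub_re,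
      Complex.add_re, Fintype.card_fin, Complex.natCast_re, pr]
    linarith
  linarith

/-- Strict concavity of the pairing with `b` along one-parameter subgroups, in midpoint form: the
value at `q` exceeds the mean of the values at `1` and `q ^ 2`, when `b` and `q` are close. -/
theorem pr_midpoint (b q : SU n) (hbq : nsq ((SU.toMat q) - (SU.toMat b)) < 2)
    (h : 2 * pr b q ≤ pr b 1 + pr b (q ^ 2)) : q = 1 := by
  set B := (SU.toMat b) with hB
  set Q := (SU.toMat q) with hQ
  set X := 1 - Q with hX
  set W := star B * Q with hW
  have hW1 : star W * W = 1 := by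
    rw [hW, star_mul, star_star, mul_assoc, ← mul_assoc B, (SU.toMat_mul_star b), one_mul,
      (SU.star_mul_toMat q)]
  have e1 : nsq (W - 1) < 2 := by
    have : W - 1 = star B * (Q - B) := by rw [mul_sub, (SU.star_mul_toMat b)]
    rw [this, nsq_unitary_mul _ _ (by rw [star_star, (SU.toMat_mul_star b)])]
    exact hbq
  have e2 : nsq ((W - 1) * X) = 2 * nsq X - 2 * (star X * W * X).trace.re := by
    have h1 : star ((W - 1) * X) * ((W - 1) * X)
        = star X * X + star X * X - star X * W * X - star (star X * W * X) := by
      have : star X * X = star X * (star W * W) * X := by rw [hW1, mul_one]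
      have ha : star ((W - 1) * X) = star X * (star W - 1) := by
        rw [star_mul, star_sub W 1, star_one]
      have hb : star (star X * W * X) = star X * (star W * X) := by
        rw [star_mul, star_mul, star_star]
      nth_rewrite 2 [this]
      rw [ha, hb]
      clear_value W X
      noncomm_ring
    rw [nsq_eq_trace, h1]
    simp only [Matrix.trace_sub, Matrix.trace_add, Complex.sub_re, Complex.add_re,
      re_trace_star, ← nsq_eq_trace]
    ring
  have e3 : (star X * W * X).trace.re = 2 * pr b q - pr b 1 - pr b (q ^ 2) := by
    have hQX : Q * (X * star X) = 2 * Q - 1 - Q * Q := by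
      have := (SU.toMat_mul_star q)
      rw [← hQ] at this
      rw [hX, star_sub, star_one, sub_mul, one_mul, mul_sub, mul_sub, mul_sub]
      simp only [this, mul_one, two_mul]
      abel
    rw [mul_assoc, Matrix.trace_mul_comm, mul_assoc, hW, mul_assoc, hQX]
    simp only [pr, pow_two, SU.toMat_mul, SU.toMat_one, ← hB, ← hQ, mul_sub, Matrix.trace_sub,
      Complex.sub_re, two_mul, mul_add, Matrix.trace_add, Complex.add_re]
  have e4 := nsq_mul_le (W - 1) X
  have hX0 : nsq X = 0 := by
    have := nsq_nonneg X
    nlinarith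
  have := nsq_eq_zero hX0
  exact SU.toMat_injective (sub_eq_zero.1 this).symm

end HS

/-! ### Square roots near the identity -/

/-- Every neighbourhood of `1` contains square roots of all elements close enough to `1`. -/
def SqrtNear (K : Type*) [Group K] [TopologicalSpace K] : Prop :=
  𝓝 (1 : K) ≤ map (fun x => x * x) (𝓝 1)

/-- The derivative of squaring at `1` is multiplication by `2`, which is onto. -/
theorem map_sq_nhds_one (A : Type*) [NormedRing A] [NormedAlgebra ℝ A] [CompleteSpace A] :
    map (fun x : A => x * x) (𝓝 1) = 𝓝 1 := by
  have h := (hasStrictFDerivAt_id (𝕜 := ℝ) (1 : A)).mul' (hasStrictFDerivAt_id (𝕜 := ℝ) (1 : A))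
  have := h.map_nhds_eq_of_surj (by
    rw [LinearMap.range_eq_top]
    intro y
    refine ⟨(2⁻¹ : ℝ) • y, ?_⟩
    simp
    rw [← add_smul]
    norm_num)
  simpa only [id, Pi.mul_def, mul_one] using this

theorem sq_inj_near_one {A : Type*} [NormedRing A] {x y : A} (hx : ‖1 - x‖ < 1)
    (hy : ‖1 - y‖ < 1) (h : x * x = y * y) (h2 : ∀ z : A, ‖z + z‖ = 2 * ‖z‖) : x = y := by
  have e : (x - y) + (x - y) = (1 - x) * (x - y) + (x - y) * (1 - y) := by
    have : x * x - y * y = 0 := sub_eq_zero.2 h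
    have e2 : (1 - x) * (x - y) + (x - y) * (1 - y) = (x - y) + (x - y) - (x * x - y * y) := by
      noncomm_ring
    rw [e2, this, sub_zero]
  by_contra hne
  have h0 : 0 < ‖x - y‖ := norm_pos_iff.2 (sub_ne_zero.2 hne)
  have h3 := h2 (x - y)
  have h4 := norm_add_le ((1 - x) * (x - y)) ((x - y) * (1 - y))
  have h5 := norm_mul_le (1 - x) (x - y)
  have h6 := norm_mul_le (x - y) (1 - y)
  rw [e] at h3
  nlinarith

/-- A square root close to `1` of a special unitary matrix close to `1` is unique, hence unitary,
and its determinant is a sign close to `1`. -/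
theorem SU.sqrtNear (n : ℕ) : SqrtNear (SU n) := by
  have hsq : map (fun x : Matrix (Fin n) (Fin n) ℂ => x * x) (𝓝 1) = 𝓝 1 :=
    letI := Matrix.linftyOpNormedRing (n := Fin n) (α := ℂ)
    letI : NormedAlgebra ℝ (Matrix (Fin n) (Fin n) ℂ) := Matrix.linftyOpNormedAlgebra
    map_sq_nhds_one (Matrix (Fin n) (Fin n) ℂ)
  let := Matrix.linftyOpNormedRing (n := Fin n) (α := ℂ)
  let : NormedAlgebra ℝ (Matrix (Fin n) (Fin n) ℂ) := Matrix.linftyOpNormedAlgebra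
  have hnb : ∀ V ∈ 𝓝 (1 : SU n), ∃ W ∈ 𝓝 (1 : Matrix (Fin n) (Fin n) ℂ),
      SU.toMat ⁻¹' W ⊆ V := by
    intro V hV
    rw [SU.isEmbedding_toMat.nhds_eq_comap, mem_comap] at hV
    exact hV
  intro V hV
  obtain ⟨W, hW, hWV⟩ := hnb _ hV
  have hW1 : ∀ᶠ M in 𝓝 (1 : Matrix (Fin n) (Fin n) ℂ), M ∈ W ∧ ‖1 - M‖ < 1 ∧
      ‖1 - (star M)⁻¹‖ < 1 ∧ IsUnit M.det ∧ M.det ≠ -1 := by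
    have hdet : Tendsto (fun M : Matrix (Fin n) (Fin n) ℂ => M.det) (𝓝 1) (𝓝 1) := by
      have : Continuous fun M : Matrix (Fin n) (Fin n) ℂ => M.det := by fun_prop
      simpa using this.tendsto 1
    refine (Filter.eventually_of_mem hW fun _ h => h).and (Eventually.and ?_
      (Eventually.and ?_ (Eventually.and ?_ ?_)))
    · have : Tendsto (fun M : Matrix (Fin n) (Fin n) ℂ => ‖1 - M‖) (𝓝 1) (𝓝 0) := by
        have : Continuous fun M : Matrix (Fin n) (Fin n) ℂ => ‖1 - M‖ := by fun_prop
        simpa using this.tendsto 1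
      exact this.eventually_lt_const one_pos
    · have h1 : Tendsto (fun M : Matrix (Fin n) (Fin n) ℂ => (star M)⁻¹) (𝓝 1) (𝓝 1) := by
        simp only [Matrix.nonsing_inv_eq_ringInverse]
        have h2 : ContinuousAt Ring.inverse (1 : Matrix (Fin n) (Fin n) ℂ) :=
          NormedRing.inverse_continuousAt 1
        have h3 : Tendsto (fun M : Matrix (Fin n) (Fin n) ℂ => star M) (𝓝 1) (𝓝 1) := by
          have : Continuous fun M : Matrix (Fin n) (Fin n) ℂ => star M := continuous_star
          simpa using this.tendsto 1
        rw [ContinuousAt, Ring.inverse_one] at h2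
        exact h2.comp h3
      have : Tendsto (fun M : Matrix (Fin n) (Fin n) ℂ => ‖1 - (star M)⁻¹‖) (𝓝 1) (𝓝 0) := by
        have h4 : Tendsto (fun _ : Matrix (Fin n) (Fin n) ℂ => (1 : Matrix (Fin n) (Fin n) ℂ))
          (𝓝 1) (𝓝 1) := tendsto_const_nhds
        simpa using (h4.sub h1).norm
      exact this.eventually_lt_const one_pos
    · filter_upwards [hdet.eventually_ne one_ne_zero] with M hM
      exact isUnit_iff_ne_zero.2 hM
    · exact hdet.eventually_ne (by norm_num)
  have hsqW : ∀ᶠ M in 𝓝 (1 : Matrix (Fin n) (Fin n) ℂ), ∃ q, (q ∈ W ∧ ‖1 - q‖ < 1 ∧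
      ‖1 - (star q)⁻¹‖ < 1 ∧ IsUnit q.det ∧ q.det ≠ -1) ∧ q * q = M := by
    rw [← hsq, Filter.eventually_map]
    filter_upwards [hW1] with q hq
    exact ⟨q, hq, rfl⟩
  have hev : ∀ᶠ x in 𝓝 (1 : SU n), ∃ q, (q ∈ W ∧ ‖1 - q‖ < 1 ∧
      ‖1 - (star q)⁻¹‖ < 1 ∧ IsUnit q.det ∧ q.det ≠ -1) ∧ q * q = SU.toMat x := by
    have := SU.continuous_toMat.tendsto (1 : SU n)
    rw [SU.toMat_one] at this
    exact this.eventually hsqW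
  filter_upwards [hev] with x ⟨q, ⟨hqW, hq1, hq2, hqd, hqm⟩, hqx⟩
  have hqs : IsUnit (star q).det := by
    rw [Matrix.star_eq_conjTranspose, Matrix.det_conjTranspose]
    exact hqd.star
  have hqq : (star q)⁻¹ * (star q)⁻¹ = q * q := by
    rw [← Matrix.mul_inv_rev, ← star_mul, hqx]
    exact Matrix.inv_eq_right_inv (SU.star_mul_toMat x)
  have hinv : (star q)⁻¹ = q := sq_inj_near_one hq2 hq1 hqq fun z => by
    rw [← two_smul ℝ z, norm_smul]; norm_num
  have hun : star q * q = 1 := by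
    conv_lhs => rw [← hinv]
    rw [hinv]
    nth_rewrite 2 [← hinv]
    exact Matrix.mul_nonsing_inv _ hqs
  have hdet : q.det = 1 := by
    have : q.det * q.det = 1 := by rw [← Matrix.det_mul, hqx, SU.det_toMat]
    exact (mul_self_eq_one_iff.1 this).resolve_right hqm
  have hmem := hWV (show SU.ofMat q hun hdet ∈ SU.toMat ⁻¹' W from hqW)
  have : SU.ofMat q hun hdet * SU.ofMat q hun hdet = x := SU.toMat_injective hqx
  rw [← this]
  exact hmem

theorem SqrtNear.prod {K L : Type*} [Group K] [TopologicalSpace K] [Group L] [TopologicalSpace L]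
    (hK : SqrtNear K) (hL : SqrtNear L) : SqrtNear (K × L) := by
  unfold SqrtNear at *
  rw [Prod.one_eq_mk, nhds_prod_eq]
  exact (Filter.prod_mono hK hL).trans (Filter.prod_map_map_eq).le

/-! ### Lifting of maps from cubes along coset projections -/

/-- A map into a compact space with closed graph is continuous. -/
theorem continuous_of_closed_graph {X Y : Type*} [TopologicalSpace X] [TopologicalSpace Y]
    [CompactSpace Y] {f : X → Y} {C : Set (X × Y)} (hC : IsClosed C)
    (h : ∀ x y, (x, y) ∈ C ↔ y = f x) : Continuous f := by
  rw [continuous_iff_ultrafilter]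
  intro x U hU
  have hy := (U.map f).le_nhds_lim
  set y := (U.map f).lim
  have h1 : Tendsto (fun z => (z, f z)) (U : Filter X) (𝓝 (x, y)) := by
    rw [nhds_prod_eq]
    exact Tendsto.prodMk hU hy
  have h2 := hC.mem_of_tendsto h1 (Eventually.of_forall fun z => (h z (f z)).2 rfl)
  rw [← (h x y).1 h2]
  exact hy

/-- `q` is a continuous surjection whose fibres are the cosets of the image of `φ`. -/
structure IsCosetProj {K : Type*} [Group K] [TopologicalSpace K] {N : ℕ} (φ : K →ₜ* SU N)
    {B : Type*} [TopologicalSpace B] (q : SU N → B) : Prop where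
  cont : Continuous q
  surj : Function.Surjective q
  fib : ∀ x y, q x = q y ↔ ∃ h, y = x * φ h

section Lift

variable {K : Type*} [Group K] [TopologicalSpace K]
  {N : ℕ} {φ : K →ₜ* SU N}

theorem pr_self (a : SU N) : pr a a = N := by simp [pr_eq, nsq]

theorem exists_sqrt_radius [CompactSpace K] (hK : SqrtNear K) (hφ : Function.Injective φ) :
    ∃ ε > 0, ∀ h : K, N - ε < pr 1 (φ h) →
      ∃ r : K, r * r = h ∧ nsq (SU.toMat (φ r) - 1) < 1 / 4 := by
  have hcn : Continuous fun r : K => nsq (SU.toMat (φ r) - 1) := by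
    have h1 : Continuous fun r : K => SU.toMat (φ r) :=
      SU.continuous_toMat.comp φ.continuous_toFun
    unfold nsq
    refine continuous_finsetSum _ fun i _ => continuous_finsetSum _ fun j _ => ?_
    exact (((continuous_apply_apply i j).comp (h1.sub continuous_const)).norm).pow 2
  have hV : {r : K | nsq (SU.toMat (φ r) - 1) < 1 / 4} ∈ 𝓝 (1 : K) := by
    refine (isOpen_lt hcn continuous_const).mem_nhds ?_
    simp [nsq]
  have hU : {h : K | ∃ r : K, r * r = h ∧ nsq (SU.toMat (φ r) - 1) < 1 / 4} ∈ 𝓝 (1 : K) := by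
    refine hK ?_
    rw [mem_map]
    filter_upwards [hV] with r hr using ⟨r, rfl, hr⟩
  obtain ⟨O, hOU, hO, h1O⟩ := mem_nhds_iff.1 hU
  have hC : IsCompact Oᶜ := hO.isClosed_compl.isCompact
  have hcD : Continuous fun h : K => pr 1 (φ h) :=
    continuous_const.pr φ.continuous_toFun
  rcases Oᶜ.eq_empty_or_nonempty with hemp | hne
  · refine ⟨1, one_pos, fun h _ => hOU ?_⟩
    by_contra hh
    exact (hemp ▸ (show h ∈ Oᶜ from hh) : h ∈ (∅ : Set K))
  · obtain ⟨h0, hh0, hmax⟩ := hC.exists_isMaxOn hne hcD.continuousOn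
    have hlt : pr 1 (φ h0) < N := by
      have h2 := nsq_nonneg (SU.toMat (1 : SU N) - SU.toMat (φ h0))
      rcases h2.lt_or_eq with h3 | h3
      · rw [pr_eq]; linarith
      · exfalso
        have h4 := SU.toMat_injective (sub_eq_zero.1 (nsq_eq_zero h3.symm))
        have : h0 = 1 := hφ (by rw [← h4, map_one])
        exact hh0 (this ▸ h1O)
    refine ⟨N - pr 1 (φ h0), by linarith, fun h hh => hOU ?_⟩
    by_contra hh'
    have := hmax hh'
    simp only [mem_ofPred_eq] at this
    linarith

/-- If a coset comes close enough to `a`, its point nearest to `a` is unique. -/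
theorem exists_unique_radius [CompactSpace K] (hK : SqrtNear K) (hφ : Function.Injective φ) :
    ∃ ε > 0, ∀ a y : SU N, N - ε < pr a y → (∀ h, pr a (y * φ h) ≤ pr a y) →
      ∀ h, pr a y ≤ pr a (y * φ h) → φ h = 1 := by
  obtain ⟨ε, hε, H⟩ := exists_sqrt_radius hK hφ
  refine ⟨min (ε / 4) (1 / 8), by positivity, fun a y hay hmax h hh => ?_⟩
  have m1 := min_le_left (ε / 4) (1 / 8 : ℝ)
  have m2 := min_le_right (ε / 4) (1 / 8 : ℝ)
  set b := y⁻¹ * a with hb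
  have key : ∀ z : SU N, pr b z = pr a (y * z) := fun z => by
    rw [← pr_mul_left y b z, hb, mul_inv_cancel_left]
  have hb1 : pr b 1 = pr a y := by rw [key, mul_one]
  have e1 := pr_eq b 1
  have e2 := pr_eq b (φ h)
  have e3 := pr_eq 1 (φ h)
  rw [hb1] at e1
  rw [key] at e2
  have e4 := nsq_sub_le (SU.toMat (1 : SU N)) (SU.toMat b) (SU.toMat (φ h))
  have e5 : nsq (SU.toMat (1 : SU N) - SU.toMat b) = nsq (SU.toMat b - SU.toMat (1 : SU N)) := by
    simp only [nsq, Matrix.sub_apply, norm_sub_rev]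
  obtain ⟨r, rfl, hr⟩ := H h (by linarith)
  have e6 := nsq_sub_le (SU.toMat (φ r)) (SU.toMat (1 : SU N)) (SU.toMat b)
  have hr1 : φ r = 1 := by
    refine pr_midpoint b (φ r) ?_ ?_
    · rw [SU.toMat_one] at *
      linarith
    · have h1 := hmax r
      rw [pow_two, key, hb1, key]
      rw [map_mul] at hh
      linarith
  rw [map_mul, hr1, one_mul]

/-- Two cosets have representatives closer to each other than a given bound. -/
def CosetRel {B : Type*} (q : SU N → B) (ε : ℝ) (c' c : B) : Prop :=
  ∃ a y, q a = c' ∧ q y = c ∧ N - ε < pr a y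

theorem CosetRel.symm {B : Type*} {q : SU N → B} {ε : ℝ} {c c' : B} (h : CosetRel q ε c' c) :
    CosetRel q ε c c' := by
  obtain ⟨a, y, ha, hy, h⟩ := h
  exact ⟨y, a, hy, ha, by rwa [pr_comm]⟩

variable {B : Type*} [TopologicalSpace B] [T2Space B] {q : SU N → B}

theorem isOpen_cosetRel (hq : IsCosetProj φ q) (ε : ℝ) :
    IsOpen {p : B × B | CosetRel q ε p.1 p.2} := by
  rw [← isClosed_compl_iff]
  have hA : IsClosed {p : SU N × SU N | ∀ h : K, pr p.1 (p.2 * φ h) ≤ N - ε} := by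
    simp only [Set.ofPred_forall]
    refine isClosed_iInter fun h => isClosed_le ?_ continuous_const
    exact continuous_fst.pr (continuous_snd.mul continuous_const)
  have hI := (hA.isCompact.image (hq.cont.prodMap hq.cont)).isClosed
  convert hI using 1
  ext ⟨c', c⟩
  simp only [mem_compl_iff, mem_ofPred_eq, mem_image, Prod.exists, Prod.map_apply, Prod.mk.injEq]
  constructor
  · intro hR
    obtain ⟨a, rfl⟩ := hq.surj c'
    obtain ⟨y, rfl⟩ := hq.surj c
    refine ⟨a, y, fun h => ?_, rfl, rfl⟩
    by_contra hlt
    exact hR ⟨a, y * φ h, rfl, ((hq.fib _ _).2 ⟨h, rfl⟩).symm, not_le.1 hlt⟩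
  · rintro ⟨a, y, hall, rfl, rfl⟩ ⟨a', y', ha, hy, hlt⟩
    obtain ⟨h1, rfl⟩ := (hq.fib _ _).1 ha.symm
    obtain ⟨h2, rfl⟩ := (hq.fib _ _).1 hy.symm
    have := hall (h2 * h1⁻¹)
    rw [← pr_mul_right (φ h1), mul_assoc y, ← map_mul, inv_mul_cancel_right] at this
    linarith

/-- A map which stays close to a liftable map is liftable. -/
theorem lift_step (hq : IsCosetProj φ q) {ε : ℝ}
    (hε : ∀ a y : SU N, N - ε < pr a y → (∀ h, pr a (y * φ h) ≤ pr a y) →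
      ∀ h, pr a y ≤ pr a (y * φ h) → φ h = 1)
    {X : Type*} [TopologicalSpace X] (g : C(X, SU N)) (c : C(X, B))
    (h : ∀ x, CosetRel q ε (q (g x)) (c x)) : ∃ g' : C(X, SU N), ∀ x, q (g' x) = c x := by
  have hex : ∀ x, ∃ y, q y = c x ∧ N - ε < pr (g x) y ∧
      ∀ h : K, pr (g x) (y * φ h) ≤ pr (g x) y := by
    intro x
    obtain ⟨a, y, ha, hy, hay⟩ := h x
    obtain ⟨h1, rfl⟩ := (hq.fib _ _).1 ha.symm
    have hF : IsCompact (q ⁻¹' {c x}) := (isClosed_singleton.preimage hq.cont).isCompact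
    have hcp : Continuous fun z => pr (g x) z := continuous_const.pr continuous_id
    obtain ⟨y0, hy0, hmax⟩ := hF.exists_isMaxOn ⟨y, hy⟩ hcp.continuousOn
    have hfib : ∀ z ∈ q ⁻¹' {c x}, ∀ h, z * φ h ∈ q ⁻¹' {c x} := fun z hz h => by
      have := (hq.fib z (z * φ h)).2 ⟨h, rfl⟩
      simp only [mem_preimage, mem_singleton_iff] at *
      rw [← this, hz]
    refine ⟨y0, hy0, ?_, fun h => hmax (hfib _ hy0 h)⟩
    have h2 := hmax (hfib y hy h1⁻¹)
    simp only [mem_ofPred_eq] at h2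
    rw [← pr_mul_right (φ h1), mul_assoc y, ← map_mul, inv_mul_cancel, map_one, mul_one] at h2
    linarith
  choose f hf1 hf2 hf3 using hex
  refine ⟨⟨f, continuous_of_closed_graph (C := {p : X × SU N | q p.2 = c p.1 ∧
    ∀ h : K, pr (g p.1) (p.2 * φ h) ≤ pr (g p.1) p.2}) ?_ ?_⟩, hf1⟩
  · refine IsClosed.inter (isClosed_eq (hq.cont.comp continuous_snd) (by fun_prop))
      (s₂ := {p : X × SU N | ∀ h : K, pr (g p.1) (p.2 * φ h) ≤ pr (g p.1) p.2}) ?_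
    rw [Set.ofPred_forall]
    refine isClosed_iInter fun h => isClosed_le ?_ ?_
    · exact (g.continuous.comp continuous_fst).pr (continuous_snd.mul continuous_const)
    · exact (g.continuous.comp continuous_fst).pr continuous_snd
  · intro x y
    constructor
    · rintro ⟨h1, h2⟩
      obtain ⟨k, rfl⟩ := (hq.fib (f x) y).1 (by rw [hf1]; exact h1.symm)
      have h3 := h2 k⁻¹
      rw [mul_assoc, ← map_mul, mul_inv_cancel, map_one, mul_one] at h3
      rw [hε _ _ (hf2 x) (hf3 x) k h3, mul_one]
    · rintro rfl
      exact ⟨hf1 x, hf3 x⟩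

/-- Maps from cubes lift along coset projections of compact groups. -/
theorem IsCosetProj.lift [CompactSpace K] (hq : IsCosetProj φ q) (hK : SqrtNear K) (hφ : Function.Injective φ)
    {n : ℕ} (c : C(Cb n, B)) : ∃ g : C(Cb n, SU N), ∀ x, q (g x) = c x := by
  obtain ⟨ε, hε, H⟩ := exists_unique_radius hK hφ
  let F : unitInterval → C(Cb n, B) := fun s =>
    ⟨fun x => c fun i => s * x i, by fun_prop⟩
  have hFc : Continuous fun p : unitInterval × Cb n => F p.1 p.2 := by
    change Continuous fun p : unitInterval × Cb n => c fun i => p.1 * p.2 i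
    fun_prop
  let S : Set unitInterval := {s | ∃ g : C(Cb n, SU N), ∀ x, q (g x) = F s x}
  have hdiag : ∀ b : B, CosetRel q ε b b := fun b => by
    obtain ⟨a, rfl⟩ := hq.surj b
    exact ⟨a, a, rfl, rfl, by rw [pr_self]; linarith⟩
  have hnear : ∀ s0, ∀ᶠ s in 𝓝 s0, ∀ x ∈ (univ : Set (Cb n)),
      CosetRel q ε (F s0 x) (F s x) := by
    intro s0
    refine isCompact_univ.eventually_forall_of_forall_eventually fun x _ => ?_
    have hcont : Continuous fun p : unitInterval × Cb n => (F s0 p.2, F p.1 p.2) :=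
      ((F s0).continuous.comp continuous_snd).prodMk hFc
    exact ((isOpen_cosetRel hq ε).preimage hcont).mem_nhds (hdiag _)
  have hSo : IsOpen S := by
    rw [isOpen_iff_mem_nhds]
    rintro s0 ⟨g, hg⟩
    filter_upwards [hnear s0] with s hs
    exact lift_step hq H g (F s) fun x => by rw [hg]; exact hs x (mem_univ _)
  have hSc : IsClosed S := by
    rw [← isOpen_compl_iff, isOpen_iff_mem_nhds]
    intro s0 hs0
    filter_upwards [hnear s0] with s hs
    rintro ⟨g, hg⟩
    exact hs0 (lift_step hq H g (F s0) fun x => by rw [hg]; exact (hs x (mem_univ _)).symm)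
  have hS0 : (0 : unitInterval) ∈ S := by
    obtain ⟨a, ha⟩ := hq.surj (c fun _ => 0)
    exact ⟨ContinuousMap.const _ a, fun x => by simp [F, ha]⟩
  have hS : S = univ := (isClopen_iff.1 ⟨hSc, hSo⟩).resolve_left (Set.Nonempty.ne_empty ⟨0, hS0⟩)
  obtain ⟨g, hg⟩ : (1 : unitInterval) ∈ S := hS ▸ mem_univ _
  exact ⟨g, fun x => by rw [hg]; simp [F]⟩

end Lift

/-! ### Relative lifting -/

/-- The union of all faces of `I^{n+1}` except the face where the zeroth coordinate is `1`. -/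
def Jx (n : ℕ) : Set (Cb (n + 1)) := {x | x 0 = 0 ∨ Fin.tail x ∈ Cube.boundary (Fin n)}

/-- The cube `I^n` in the coordinates `[-1,1]^n`, for the variables other than the zeroth. -/
noncomputable def cy {n : ℕ} (x : Cb (n + 1)) : Fin n → ℝ := fun i => 2 * (x i.succ : ℝ) - 1

/-- The inverse of the factor by which `x` is moved away from the projection centre. -/
noncomputable def cm {n : ℕ} (x : Cb (n + 1)) : ℝ := max ‖cy x‖ ((2 - (x 0 : ℝ)) / 2)

/-- The radial projection of the cube onto `Jx n`, from a centre above the free face. The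
coordinates are clamped to `[0,1]`. -/
noncomputable def retr {n : ℕ} (x : Cb (n + 1)) : Cb (n + 1) :=
  Fin.cons (projIcc 0 1 zero_le_one (2 - (2 - (x 0 : ℝ)) / cm x))
    fun i => projIcc 0 1 zero_le_one ((1 + cy x i / cm x) / 2)

theorem continuous_cy {n : ℕ} : Continuous (cy (n := n)) := by
  unfold cy; fun_prop

theorem half_le_cm {n : ℕ} (x : Cb (n + 1)) : 1 / 2 ≤ cm x := by
  have := (x 0).2.2
  exact le_trans (by linarith) (le_max_right _ _)

theorem continuous_retr {n : ℕ} : Continuous (retr (n := n)) := by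
  have hm : Continuous (cm (n := n)) := by
    unfold cm
    exact (continuous_cy.norm).max (by fun_prop)
  have h0 : ∀ x : Cb (n + 1), cm x ≠ 0 := fun x => by
    have := half_le_cm x
    linarith
  refine continuous_cons.comp (Continuous.prodMk ?_ (continuous_pi fun i => ?_))
  · exact (continuous_projIcc (h := zero_le_one)).comp (continuous_const.sub (Continuous.div (by fun_prop) hm h0))
  · refine (continuous_projIcc (h := zero_le_one)).comp (Continuous.div_const (continuous_const.add
      (Continuous.div ?_ hm h0)) 2)
    exact (continuous_apply i).comp continuous_cy

theorem norm_cy_le {n : ℕ} (x : Cb (n + 1)) : ‖cy x‖ ≤ 1 := by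
  refine (pi_norm_le_iff_of_nonneg zero_le_one).2 fun i => ?_
  have h1 := (x i.succ).2.1
  have h2 := (x i.succ).2.2
  rw [Real.norm_eq_abs, abs_le]
  constructor <;> simp only [cy] <;> linarith

theorem retr_mem {n : ℕ} (x : Cb (n + 1)) : retr x ∈ Jx n := by
  have hm := half_le_cm x
  rcases max_choice ‖cy x‖ ((2 - (x 0 : ℝ)) / 2) with h | h
  · right
    have h1 : ∃ i, ‖cy x‖ ≤ ‖cy x i‖ := by
      by_contra hcon
      push Not at hcon
      have hpos : 0 < ‖cy x‖ := by rw [← h]; change 0 < cm x; linarith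
      exact lt_irrefl _ ((pi_norm_lt_iff hpos).2 hcon)
    obtain ⟨i, hi⟩ := h1
    have h2 : |cy x i| = cm x := by
      rw [cm, h]
      exact le_antisymm (norm_le_pi_norm (cy x) i) hi
    refine ⟨i, ?_⟩
    have hm0 : cm x ≠ 0 := by linarith
    rcases abs_choice (cy x i) with h3 | h3
    · right
      rw [h3] at h2
      simp [retr, Fin.tail, h2, hm0]
    · left
      rw [h3] at h2
      have : cy x i = - cm x := by linarith
      simp [retr, Fin.tail, this, hm0]
  · left
    have h2 : cm x = (2 - (x 0 : ℝ)) / 2 := h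
    have h3 : 2 - (x 0 : ℝ) = 2 * cm x := by linarith
    have hm0 : cm x ≠ 0 := by linarith
    simp [retr, h3, hm0]

theorem retr_of_mem {n : ℕ} {x : Cb (n + 1)} (hx : x ∈ Jx n) : retr x = x := by
  have h1 : cm x = 1 := by
    have h0 := (x 0).2.1
    refine le_antisymm (max_le (norm_cy_le x) (by linarith)) ?_
    rcases hx with h | ⟨i, h⟩
    · refine le_trans ?_ (le_max_right _ _)
      rw [h]; norm_num
    · refine le_trans (le_trans ?_ (norm_le_pi_norm _ i)) (le_max_left _ _)
      simp only [Fin.tail] at h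
      rcases h with h | h <;> simp [cy, h] <;> norm_num
  refine funext fun j => ?_
  refine Fin.cases ?_ (fun i => ?_) j
  · simp [retr, h1]
  · simp [retr, h1, cy]

/-- A lift prescribed on all faces but the free one extends to the cube. -/
theorem IsCosetProj.relLift {K : Type*} [Group K] [TopologicalSpace K] [CompactSpace K]
    {N : ℕ} {φ : K →ₜ* SU N} {B : Type*} [TopologicalSpace B] [T2Space B] {q : SU N → B}
    (hq : IsCosetProj φ q) (hK : SqrtNear K) (hφ : Function.Injective φ)
    {n : ℕ} (c : C(Cb (n + 1), B)) (u : Cb (n + 1) → SU N) (hu : ContinuousOn u (Jx n))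
    (huc : ∀ x ∈ Jx n, q (u x) = c x) :
    ∃ g : C(Cb (n + 1), SU N), (∀ x, q (g x) = c x) ∧ ∀ x ∈ Jx n, g x = u x := by
  obtain ⟨g, hg⟩ := hq.lift hK hφ c
  have hur : Continuous fun x => u (retr x) :=
    hu.comp_continuous continuous_retr retr_mem
  refine ⟨⟨fun x => g x * ((g (retr x))⁻¹ * u (retr x)), ?_⟩, fun x => ?_, fun x hx => ?_⟩
  · exact g.continuous.mul (((g.continuous.comp continuous_retr).inv).mul hur)
  · obtain ⟨h, hh⟩ := (hq.fib (g (retr x)) (u (retr x))).1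
      (by rw [hg, huc _ (retr_mem x)])
    simp only [ContinuousMap.coe_mk]
    rw [hh, inv_mul_cancel_left, ← hg x]
    exact ((hq.fib _ _).2 ⟨h, rfl⟩).symm
  · simp [retr_of_mem hx]

/-! ### The boundary map of a coset projection -/

theorem mem_boundary_cons {n : ℕ} {t : unitInterval} {y : Cb n} :
    (Fin.cons t y : Cb (n + 1)) ∈ Cube.boundary (Fin (n + 1)) ↔
      t = 0 ∨ t = 1 ∨ y ∈ Cube.boundary (Fin n) := by
  constructor
  · rintro ⟨i, hi⟩
    induction i using Fin.cases with
    | zero => simpa [or_assoc] using Or.inl hi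
    | succ j =>
      simp only [Fin.cons_succ] at hi
      exact Or.inr (Or.inr ⟨j, hi⟩)
  · rintro (h | h | ⟨j, h⟩)
    · exact ⟨0, by simp [h]⟩
    · exact ⟨0, by simp [h]⟩
    · exact ⟨j.succ, by simpa using h⟩

theorem mem_Jx_cons {n : ℕ} {t : unitInterval} {y : Cb n} :
    (Fin.cons t y : Cb (n + 1)) ∈ Jx n ↔ t = 0 ∨ y ∈ Cube.boundary (Fin n) := by
  simp [Jx]

theorem mem_boundary_iff {n : ℕ} {x : Cb (n + 1)} :
    x ∈ Cube.boundary (Fin (n + 1)) ↔ x ∈ Jx n ∨ x 0 = 1 := by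
  rw [← Fin.cons_self_tail x, mem_boundary_cons, mem_Jx_cons]
  simp only [Fin.cons_zero]
  tauto

section Trace

variable {K : Type*} [Group K] [TopologicalSpace K] [IsTopologicalGroup K] {N : ℕ}
  {B : Type*} [TopologicalSpace B] {e : ℕ}

/-- `Γ` lifts the loop `γ` of the base and is trivial on all faces except the free one, where it is
the image of the loop `δ`: so `δ` represents the value of the boundary map on the class of `γ`. -/
structure IsTr (φ : K →ₜ* SU N) (q : SU N → B) {b : B} (γ : GenLoop (Fin (e + 1)) B b)
    (Γ : C(Cb (e + 1), SU N)) (δ : Lp e K) : Prop where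
  proj : ∀ x, q (Γ x) = γ x
  triv : ∀ x ∈ Jx e, Γ x = 1
  face : ∀ y, Γ (Fin.cons 1 y) = φ (δ.1 y)

variable {φ : K →ₜ* SU N} {q : SU N → B}

theorem IsTr.map_mem {b : B} {γ : GenLoop (Fin (e + 1)) B b} {Γ : C(Cb (e + 1), SU N)}
    {δ : Lp e K} (h : IsTr φ q γ Γ δ) : Lp.map e φ δ ∈ Nl e (SU N) :=
  ⟨Γ, h.face, fun _ => h.triv _ (mem_Jx_cons.2 (Or.inl rfl)),
    fun _ _ hy => h.triv _ (mem_Jx_cons.2 (Or.inr hy))⟩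

/-- Every loop in the kernel of `π_e(φ)` is the boundary of a loop of the base. -/
theorem IsTr.exists_of_mem (hq : IsCosetProj φ q) {b : B} (hb : q 1 = b) {δ : Lp e K}
    (h : Lp.map e φ δ ∈ Nl e (SU N)) :
    ∃ (γ : GenLoop (Fin (e + 1)) B b) (Γ : C(Cb (e + 1), SU N)), IsTr φ q γ Γ δ := by
  obtain ⟨Γ, hΓ⟩ := h
  have htriv : ∀ x ∈ Jx e, Γ x = 1 := by
    intro x hx
    rw [← Fin.cons_self_tail x] at hx ⊢
    rcases mem_Jx_cons.1 hx with h | h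
    · rw [h]; exact hΓ.zero' _
    · exact hΓ.side' _ _ h
  refine ⟨⟨⟨fun x => q (Γ x), hq.cont.comp Γ.continuous⟩, fun x hx => ?_⟩, Γ, fun x => rfl, htriv,
    fun y => hΓ.one' y⟩
  change q (Γ x) = b
  rcases mem_boundary_iff.1 hx with h | h
  · rw [htriv x h, hb]
  · rw [← Fin.cons_self_tail x, h, hΓ.one', ← hb]
    exact ((hq.fib _ _).2 ⟨δ.1 (Fin.tail x), by simp⟩).symm

/-- Loops in the base which have a common boundary are homotopic if `π_{e+1}(φ)` is onto. -/
theorem IsTr.homotopic (hq : IsCosetProj φ q) (hs : Function.Surjective (PiG.map (e + 1) φ))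
    {b : B} {γ γ' : GenLoop (Fin (e + 1)) B b} {Γ Γ' : C(Cb (e + 1), SU N)} {δ δ' : Lp e K}
    (h : IsTr φ q γ Γ δ) (h' : IsTr φ q γ' Γ' δ') (hδ : (δ : PiG e K) = δ') :
    GenLoop.Homotopic γ γ' := by
  obtain ⟨k, hk⟩ := QuotientGroup.eq.1 hδ
  let Γ₂ : C(Cb (e + 1), SU N) := Γ' * ((φ : C(K, SU N)).comp k)⁻¹
  have hkJ : ∀ x ∈ Jx e, k x = 1 := by
    intro x hx
    rw [← Fin.cons_self_tail x] at hx ⊢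
    rcases mem_Jx_cons.1 hx with h | h
    · rw [h]; exact hk.zero' _
    · exact hk.side' _ _ h
  have hqφ : ∀ x h, q (x * φ h) = q x := fun x h => ((hq.fib _ _).2 ⟨h, rfl⟩).symm
  have hΓ₂q : ∀ x, q (Γ₂ x) = γ' x := fun x => by
    rw [← h'.proj x]
    simp only [Γ₂, ContinuousMap.mul_apply, ContinuousMap.inv_apply, ContinuousMap.comp_apply,
      ContinuousMap.coe_coe, ← map_inv]
    exact hqφ _ _
  let ω : Lp (e + 1) (SU N) := ⟨Γ⁻¹ * Γ₂, fun x hx => by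
    rcases mem_boundary_iff.1 hx with hx | hx
    · simp [Γ₂, h.triv x hx, h'.triv x hx, hkJ x hx]
    · rw [← Fin.cons_self_tail x, hx]
      simp [Γ₂, h.face, h'.face, hk.one']⟩
  obtain ⟨η', hη'⟩ := hs (ω : PiG (e + 1) (SU N))
  obtain ⟨η, rfl⟩ := QuotientGroup.mk_surjective η'
  obtain ⟨W, hW⟩ := QuotientGroup.eq.1 hη'
  refine ⟨⟨⟨⟨fun p => q (Γ p.2 * φ (η.1 p.2) * W (Fin.cons p.1 p.2)), ?_⟩, fun x => ?_,
    fun x => ?_⟩, fun t x hx => ?_⟩⟩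
  · refine hq.cont.comp (((Γ.continuous.comp continuous_snd).mul (φ.continuous_toFun.comp
      (η.1.continuous.comp continuous_snd))).mul (W.continuous.comp continuous_cons))
  · change q (Γ x * φ (η.1 x) * W (Fin.cons 0 x)) = γ x
    rw [hW.zero', mul_one, hqφ, h.proj]
  · change q (Γ x * φ (η.1 x) * W (Fin.cons 1 x)) = γ' x
    rw [hW.one', ← hΓ₂q]
    simp [ω]
  · change q (Γ x * φ (η.1 x) * W (Fin.cons t x)) = γ x
    rw [hW.side' t x hx, mul_one, hqφ, h.proj]

variable [CompactSpace K]

/-- A map into `SU(N)` with values in the image of a compact group lifts to that group. -/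
theorem exists_factor (hφ : Function.Injective φ) {X : Type*} [TopologicalSpace X]
    (g : C(X, SU N)) (h : ∀ x, ∃ k, g x = φ k) : ∃ g' : C(X, K), ∀ x, g x = φ (g' x) := by
  choose f hf using h
  have hemb := (Continuous.isClosedEmbedding φ.continuous_toFun hφ).isEmbedding
  refine ⟨⟨f, hemb.continuous_iff.2 ?_⟩, hf⟩
  have : (φ : K → SU N) ∘ f = g := funext fun x => (hf x).symm
  exact this ▸ g.continuous

variable [T2Space B]

/-- Every loop of the base has a boundary. -/
theorem IsTr.exists (hq : IsCosetProj φ q) (hK : SqrtNear K) (hφ : Function.Injective φ)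
    {b : B} (hb : q 1 = b) (γ : GenLoop (Fin (e + 1)) B b) :
    ∃ (Γ : C(Cb (e + 1), SU N)) (δ : Lp e K), IsTr φ q γ Γ δ := by
  obtain ⟨Γ, h1, h2⟩ := hq.relLift hK hφ γ.1 (fun _ => 1) continuousOn_const fun x hx => by
    rw [hb, γ.2 x (mem_boundary_iff.2 (Or.inl hx))]
  let Γ₁ : C(Cb e, SU N) := ⟨fun y => Γ (Fin.cons 1 y),
    Γ.continuous.comp (continuous_cons.comp (continuous_const.prodMk continuous_id))⟩
  obtain ⟨δ, hδ⟩ := exists_factor hφ Γ₁ fun y => by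
    have h3 : q 1 = q (Γ₁ y) := by
      rw [hb, ← γ.2 (Fin.cons 1 y) (mem_boundary_cons.2 (Or.inr (Or.inl rfl)))]
      exact (h1 _).symm
    obtain ⟨k, hk⟩ := (hq.fib _ _).1 h3
    exact ⟨k, by rw [hk, one_mul]⟩
  refine ⟨Γ, ⟨δ, fun y hy => hφ ?_⟩, h1, h2, hδ⟩
  rw [← hδ, map_one]
  exact h2 _ (mem_Jx_cons.2 (Or.inr hy))

/-- Homotopic loops of the base have homotopic boundaries. -/
theorem IsTr.eq_of_homotopic (hq : IsCosetProj φ q) (hK : SqrtNear K)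
    (hφ : Function.Injective φ) {b : B} (hb : q 1 = b) {γ γ' : GenLoop (Fin (e + 1)) B b}
    {Γ Γ' : C(Cb (e + 1), SU N)} {δ δ' : Lp e K} (h : IsTr φ q γ Γ δ) (h' : IsTr φ q γ' Γ' δ')
    (hγ : GenLoop.Homotopic γ γ') : (δ : PiG e K) = δ' := by
  obtain ⟨F⟩ := hγ
  -- coordinates on `I^{e+2}`: `x 0` is the free direction and `x 1` the homotopy parameter
  let pt : Cb (e + 2) → unitInterval × Cb (e + 1) := fun x =>
    (x 1, Fin.cons (x 0) (Fin.tail (Fin.tail x)))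
  have hpt : Continuous pt := (continuous_apply 1).prodMk (continuous_cons.comp
    ((continuous_apply 0).prodMk (continuous_tail.comp continuous_tail)))
  let c : C(Cb (e + 2), B) := ⟨fun x => F (pt x), F.continuous.comp hpt⟩
  let s0 : unitInterval → unitInterval := fun s => projIcc 0 1 zero_le_one (1 - 2 * (s : ℝ))
  let s1 : unitInterval → unitInterval := fun s => projIcc 0 1 zero_le_one (2 * (s : ℝ) - 1)
  have hs0 : Continuous s0 := (continuous_projIcc (h := zero_le_one)).comp (by fun_prop)
  have hs1 : Continuous s1 := (continuous_projIcc (h := zero_le_one)).comp (by fun_prop)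
  -- this map is `Γ` on the face `x 1 = 0`, `Γ'` on the face `x 1 = 1`, and `1` on the other
  -- faces that are not free
  let u : Cb (e + 2) → SU N := fun x =>
    Γ (Fin.cons (x 0 * s0 (x 1)) (Fin.tail (Fin.tail x))) *
      Γ' (Fin.cons (x 0 * s1 (x 1)) (Fin.tail (Fin.tail x)))
  have hu : Continuous u := by
    refine (Γ.continuous.comp (continuous_cons.comp (Continuous.prodMk ?_
      (continuous_tail.comp continuous_tail)))).mul (Γ'.continuous.comp
      (continuous_cons.comp (Continuous.prodMk ?_ (continuous_tail.comp continuous_tail))))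
    · exact (continuous_apply 0).mul (hs0.comp (continuous_apply 1))
    · exact (continuous_apply 0).mul (hs1.comp (continuous_apply 1))
  have hΓ0 : ∀ y, Γ (Fin.cons 0 y) = 1 := fun y => h.triv _ (mem_Jx_cons.2 (Or.inl rfl))
  have hΓ0' : ∀ y, Γ' (Fin.cons 0 y) = 1 := fun y => h'.triv _ (mem_Jx_cons.2 (Or.inl rfl))
  have u0 : ∀ t y, u (Fin.cons t (Fin.cons 0 y)) = Γ (Fin.cons t y) := fun t y => by
    have e0 : s0 0 = 1 := by simp [s0]
    have e1 : s1 0 = 0 := by simp [s1, projIcc_of_le_left]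
    have : (Fin.cons t (Fin.cons 0 y) : Cb (e + 2)) 1 = 0 := rfl
    simp [u, this, e0, e1, hΓ0']
  have u1 : ∀ t y, u (Fin.cons t (Fin.cons 1 y)) = Γ' (Fin.cons t y) := fun t y => by
    have e0 : s0 1 = 0 := by
      simp only [s0, Icc.coe_one]; exact projIcc_of_le_left _ (by norm_num)
    have e1 : s1 1 = 1 := by
      simp only [s1, Icc.coe_one]; exact projIcc_of_right_le _ (by norm_num)
    have : (Fin.cons t (Fin.cons 1 y) : Cb (e + 2)) 1 = 1 := rfl
    simp [u, this, e0, e1, hΓ0]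
  have u2 : ∀ s y, u (Fin.cons 0 (Fin.cons s y)) = 1 := fun s y => by
    simp [u, hΓ0, hΓ0']
  have u3 : ∀ t s, ∀ y ∈ Cube.boundary (Fin e), u (Fin.cons t (Fin.cons s y)) = 1 :=
    fun t s y hy => by
      simp [u, h.triv _ (mem_Jx_cons.2 (Or.inr hy)), h'.triv _ (mem_Jx_cons.2 (Or.inr hy))]
  have hc : ∀ t s y, c (Fin.cons t (Fin.cons s y)) = F (s, Fin.cons t y) := fun t s y => rfl
  have cases3 : ∀ x : Cb (e + 2), ∃ t s y, x = Fin.cons t (Fin.cons s y) := fun x =>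
    ⟨x 0, x 1, Fin.tail (Fin.tail x), by
      conv_lhs => rw [← Fin.cons_self_tail x, ← Fin.cons_self_tail (Fin.tail x)]
      rfl⟩
  have hbγ : ∀ x ∈ Jx e, γ x = b := fun x hx => γ.2 x (mem_boundary_iff.2 (Or.inl hx))
  obtain ⟨g, hg1, hg2⟩ := hq.relLift hK hφ c u hu.continuousOn fun x hx => by
    obtain ⟨t, s, y, rfl⟩ := cases3 x
    rw [hc]
    rcases mem_Jx_cons.1 hx with rfl | hx
    · rw [u2, hb, F.eq_fst _ (mem_boundary_cons.2 (Or.inl rfl))]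
      exact (hbγ _ (mem_Jx_cons.2 (Or.inl rfl))).symm
    rcases mem_boundary_cons.1 hx with rfl | rfl | hx
    · rw [u0, h.proj]; exact (F.apply_zero _).symm
    · rw [u1, h'.proj]; exact (F.apply_one _).symm
    · rw [u3 _ _ _ hx, hb, F.eq_fst _ (mem_boundary_cons.2 (Or.inr (Or.inr hx)))]
      exact (hbγ _ (mem_Jx_cons.2 (Or.inr hx))).symm
  let g₁ : C(Cb (e + 1), SU N) := ⟨fun z => g (Fin.cons 1 z),
    g.continuous.comp (continuous_cons.comp (continuous_const.prodMk continuous_id))⟩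
  obtain ⟨k, hk⟩ := exists_factor hφ g₁ fun z => by
    have h3 : q 1 = q (g₁ z) := by
      change q 1 = q (g (Fin.cons 1 z))
      rw [hg1, ← Fin.cons_self_tail z, hc, F.eq_fst _ (mem_boundary_cons.2 (Or.inr (Or.inl rfl))),
        hb]
      exact (γ.2 _ (mem_boundary_cons.2 (Or.inr (Or.inl rfl)))).symm
    obtain ⟨k, hk⟩ := (hq.fib _ _).1 h3
    exact ⟨k, by rw [hk, one_mul]⟩
  have k0 : ∀ y, k (Fin.cons 0 y) = δ.1 y := fun y => hφ (by
    rw [← hk]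
    change g (Fin.cons 1 (Fin.cons 0 y)) = _
    rw [hg2 _ (mem_Jx_cons.2 (Or.inr (mem_boundary_cons.2 (Or.inl rfl)))), u0, h.face])
  have k1 : ∀ y, k (Fin.cons 1 y) = δ'.1 y := fun y => hφ (by
    rw [← hk]
    change g (Fin.cons 1 (Fin.cons 1 y)) = _
    rw [hg2 _ (mem_Jx_cons.2 (Or.inr (mem_boundary_cons.2 (Or.inr (Or.inl rfl))))), u1, h'.face])
  have k2 : ∀ s, ∀ y ∈ Cube.boundary (Fin e), k (Fin.cons s y) = 1 := fun s y hy => hφ (by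
    rw [← hk]
    change g (Fin.cons 1 (Fin.cons s y)) = _
    rw [hg2 _ (mem_Jx_cons.2 (Or.inr (mem_boundary_cons.2 (Or.inr (Or.inr hy))))), u3 _ _ _ hy,
      map_one])
  rw [QuotientGroup.eq]
  refine ⟨(δ.1.comp (tailC e))⁻¹ * k, fun y => ?_, fun y => ?_, fun s y hy => ?_⟩
  · simp [tailC, k1]
  · simp [tailC, k0]
  · simp [tailC, k2 s y hy, δ.2 y hy]

end Trace

/-- Comparison of two coset spaces: a map of coset spaces is bijective on `π_{e+1}`, if the maps
`π_{e+1}(φ_i)` are onto and `κ` restricts to a bijection between the kernels of `π_e(φ_i)`. -/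
theorem bijective_of_kernels {e N₁ N₂ : ℕ} {K₁ K₂ B₁ B₂ : Type*}
    [Group K₁] [TopologicalSpace K₁] [IsTopologicalGroup K₁] [CompactSpace K₁]
    [Group K₂] [TopologicalSpace K₂] [IsTopologicalGroup K₂] [CompactSpace K₂]
    [TopologicalSpace B₁] [T2Space B₁] [TopologicalSpace B₂] [T2Space B₂]
    {φ₁ : K₁ →ₜ* SU N₁} {φ₂ : K₂ →ₜ* SU N₂} {q₁ : SU N₁ → B₁} {q₂ : SU N₂ → B₂}
    (hq₁ : IsCosetProj φ₁ q₁) (hq₂ : IsCosetProj φ₂ q₂) (hK₁ : SqrtNear K₁) (hK₂ : SqrtNear K₂)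
    (hφ₁ : Function.Injective φ₁) (hφ₂ : Function.Injective φ₂)
    {b₁ : B₁} {b₂ : B₂} (hb₁ : q₁ 1 = b₁) (hb₂ : q₂ 1 = b₂)
    (ι : SU N₁ →ₜ* SU N₂) (κ : K₁ →ₜ* K₂) (hικ : ∀ x, ι (φ₁ x) = φ₂ (κ x))
    {f : B₁ → B₂} (hf : Continuous f) (hfq : ∀ x, f (q₁ x) = q₂ (ι x))
    (hs₁ : Function.Surjective (PiG.map (e + 1) φ₁))
    (hs₂ : Function.Surjective (PiG.map (e + 1) φ₂))
    (hki : ∀ x : PiG e K₁, PiG.map e φ₁ x = 1 → PiG.map e κ x = 1 → x = 1)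
    (hks : ∀ y : PiG e K₂, PiG.map e φ₂ y = 1 →
      ∃ x : PiG e K₁, PiG.map e φ₁ x = 1 ∧ PiG.map e κ x = y)
    (Φ : HomotopyGroup (Fin (e + 1)) B₁ b₁ → HomotopyGroup (Fin (e + 1)) B₂ b₂)
    (hΦ : ∀ (γ : GenLoop (Fin (e + 1)) B₁ b₁) (δ : GenLoop (Fin (e + 1)) B₂ b₂),
      (∀ t, δ t = f (γ t)) → Φ (Quotient.mk _ γ) = Quotient.mk _ δ) :
    Function.Bijective Φ := by
  have hfb : f b₁ = b₂ := by rw [← hb₁, hfq, map_one, hb₂]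
  let fl : GenLoop (Fin (e + 1)) B₁ b₁ → GenLoop (Fin (e + 1)) B₂ b₂ := fun γ =>
    ⟨⟨fun x => f (γ x), hf.comp γ.1.continuous⟩, fun x hx => by
      change f (γ x) = b₂
      rw [← hfb]; exact congrArg f (γ.2 x hx)⟩
  have hfl : ∀ γ, Φ (Quotient.mk _ γ) = Quotient.mk _ (fl γ) := fun γ => hΦ γ _ fun t => rfl
  have htr : ∀ {γ Γ δ}, IsTr φ₁ q₁ γ Γ δ →
      IsTr φ₂ q₂ (fl γ) ((ι : C(SU N₁, SU N₂)).comp Γ) (Lp.map e κ δ) := by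
    intro γ Γ δ h
    refine ⟨fun x => ?_, fun x hx => ?_, fun y => ?_⟩
    · change q₂ (ι (Γ x)) = f (γ x)
      rw [← hfq, h.proj]
    · change ι (Γ x) = 1
      rw [h.triv x hx, map_one]
    · change ι (Γ (Fin.cons 1 y)) = φ₂ (κ (δ.1 y))
      rw [h.face, hικ]
  constructor
  · intro x x' hxx
    induction x using Quotient.inductionOn with | _ γ => ?_
    induction x' using Quotient.inductionOn with | _ γ' => ?_
    obtain ⟨Γ, δ, h⟩ := IsTr.exists hq₁ hK₁ hφ₁ hb₁ γ
    obtain ⟨Γ', δ', h'⟩ := IsTr.exists hq₁ hK₁ hφ₁ hb₁ γ'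
    rw [hfl, hfl] at hxx
    have h2 := (htr h).eq_of_homotopic hq₂ hK₂ hφ₂ hb₂ (htr h') (Quotient.exact hxx)
    have h3 : (δ : PiG e K₁)⁻¹ * δ' = 1 := by
      refine hki _ ?_ ?_
      · rw [map_mul, map_inv, PiG.map_mk, PiG.map_mk, PiG.mk_eq_one.2 h.map_mem,
          PiG.mk_eq_one.2 h'.map_mem, inv_one, one_mul]
      · rw [map_mul, map_inv, PiG.map_mk, PiG.map_mk, h2, inv_mul_cancel]
    exact Quotient.sound (h.homotopic hq₁ hs₁ h' (inv_mul_eq_one.1 h3))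
  · intro y
    induction y using Quotient.inductionOn with | _ γ₂ => ?_
    obtain ⟨Γ₂, δ₂, h₂⟩ := IsTr.exists hq₂ hK₂ hφ₂ hb₂ γ₂
    obtain ⟨x, hx1, hx2⟩ := hks δ₂ (PiG.mk_eq_one.2 h₂.map_mem)
    obtain ⟨δ₁, rfl⟩ := QuotientGroup.mk_surjective x
    obtain ⟨γ₁, Γ₁, h₁⟩ := IsTr.exists_of_mem hq₁ hb₁ (PiG.mk_eq_one.1 hx1)
    refine ⟨Quotient.mk _ γ₁, ?_⟩
    rw [hfl]
    exact Quotient.sound ((htr h₁).homotopic hq₂ hs₂ h₂ hx2)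

/-! ### Low-dimensional loops in spheres are contractible -/

/-- A continuous map from a cube to a normed space of large dimension can be approximated by maps
that avoid the line through a given vector. -/
theorem exists_approx_avoid {E : Type*} [NormedAddCommGroup E] [NormedSpace ℝ E]
    [FiniteDimensional ℝ E] {e : ℕ} (he : e + 1 < Module.finrank ℝ E) (c : C(Cb e, E)) (v : E) :
    ∃ p : C(Cb e, E), (∀ x, ‖p x - c x‖ < 1 / 4) ∧ ∀ x (s : ℝ), p x ≠ s • v := by
  let pj : (Fin e → ℝ) → Cb e := fun x i => projIcc 0 1 zero_le_one (x i)
  have hpj : Continuous pj := continuous_pi fun i => continuous_projIcc.comp (continuous_apply i)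
  obtain ⟨g, hg, hgc⟩ := (c.continuous.comp hpj).exists_contDiff_approx 1
    (ε := fun _ => (1 / 8 : ℝ)) continuous_const (fun _ => by norm_num)
  have hF : ContDiff ℝ 1 fun z : (Fin e → ℝ) × ℝ => z.2 • v - g z.1 := by
    have h1 : ContDiff ℝ 1 g := by simpa using hg
    fun_prop
  have hd := hF.dense_compl_range_of_finrank_lt_finrank (by simpa using he)
  obtain ⟨w, hw, hw0⟩ := hd.exists_dist_lt (0 : E) (ε := 1 / 8) (by norm_num)
  let inc : Cb e → Fin e → ℝ := fun x i => x i
  have hinc : Continuous inc := by fun_prop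
  have hpi : ∀ x, pj (inc x) = x := fun x => funext fun i => by simp [pj, inc]
  refine ⟨⟨fun x => g (inc x) + w, (hg.continuous.comp hinc).add continuous_const⟩,
    fun x => ?_, fun x s h => ?_⟩
  · have h1 := hgc.1 (inc x)
    simp only [Function.comp_apply, hpi, dist_eq_norm] at h1
    rw [dist_eq_norm, zero_sub, norm_neg] at hw0
    have h2 : g (inc x) + w - c x = (g (inc x) - c x) + w := by abel
    change ‖g (inc x) + w - c x‖ < 1 / 4
    rw [h2]
    have := norm_add_le (g (inc x) - c x) w
    linarith
  · refine hw ⟨(inc x, s), ?_⟩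
    change s • v - g (inc x) = w
    rw [← h]
    simp

/-- The homotopy of maps to the sphere which contracts a low-dimensional loop. -/
theorem sphere_contract {E : Type*} [NormedAddCommGroup E] [NormedSpace ℝ E]
    [FiniteDimensional ℝ E] {e : ℕ} (he : e + 1 < Module.finrank ℝ E)
    (c : C(Cb e, Metric.sphere (0 : E) 1)) (v : Metric.sphere (0 : E) 1)
    (hc : ∀ y ∈ Cube.boundary (Fin e), c y = v) :
    ∃ H : C(Cb (e + 1), Metric.sphere (0 : E) 1), (∀ y, H (Fin.cons 0 y) = c y) ∧
      (∀ y, H (Fin.cons 1 y) = v) ∧ ∀ t, ∀ y ∈ Cube.boundary (Fin e), H (Fin.cons t y) = v := by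
  obtain ⟨p, hp, hpv⟩ := exists_approx_avoid he
    ⟨fun x => (c x : E), continuous_subtype_val.comp c.continuous⟩ (v : E)
  simp only [ContinuousMap.coe_mk] at hp
  have hv1 : ‖(v : E)‖ = 1 := by simp
  have hc1 : ∀ y, ‖(c y : E)‖ = 1 := fun y => by simp
  -- the perturbation is switched off near the points where `c` is close to `v`
  let χ : Cb e → ℝ := fun y => min 1 (2 * ‖(c y : E) - v‖)
  have hχ0 : ∀ y, 0 ≤ χ y := fun y => by positivity
  have hχ1 : ∀ y, χ y ≤ 1 := fun y => min_le_left _ _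
  have hcc : Continuous fun y => (c y : E) := continuous_subtype_val.comp c.continuous
  have hχ : Continuous χ := by fun_prop
  let α : ℝ → ℝ := fun t => min 1 (2 * t)
  let β : ℝ → ℝ := fun t => max 0 (2 * t - 1)
  let h : unitInterval → Cb e → E := fun t y =>
    (1 - β t) • ((c y : E) + (α t * χ y) • (p y - c y)) + β t • (v : E)
  have hh : Continuous fun z : Cb (e + 1) => h (z 0) (Fin.tail z) := by
    have hcy : Continuous fun z : Cb (e + 1) => (c (Fin.tail z) : E) := hcc.comp continuous_tail
    have hχy : Continuous fun z : Cb (e + 1) => χ (Fin.tail z) := hχ.comp continuous_tail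
    have hpy : Continuous fun z : Cb (e + 1) => p (Fin.tail z) := p.continuous.comp continuous_tail
    have hα : Continuous fun z : Cb (e + 1) => α (z 0) := by fun_prop
    have hβ : Continuous fun z : Cb (e + 1) => β (z 0) := by fun_prop
    exact ((continuous_const.sub hβ).smul (hcy.add ((hα.mul hχy).smul (hpy.sub hcy)))).add
      (hβ.smul continuous_const)
  have hsm : ∀ y (r : ℝ), 0 ≤ r → r ≤ 1 → ‖r • (p y - (c y : E))‖ ≤ 1 / 4 := fun y r h0 h1 => by
    rw [norm_smul, Real.norm_of_nonneg h0]
    have := (hp y).le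
    have := norm_nonneg (p y - (c y : E))
    nlinarith
  have hne : ∀ t y, h t y ≠ 0 := by
    intro t y h0
    have ht0 := t.2.1
    have ht1 := t.2.2
    rcases le_total (t : ℝ) (1 / 2) with ht | ht
    · have hβ : β t = 0 := max_eq_left (by linarith)
      simp only [h, hβ, sub_zero, one_smul, zero_smul, add_zero] at h0
      have h1 := hsm y (α t * χ y) (mul_nonneg (le_min zero_le_one (by linarith)) (hχ0 y))
        (mul_le_one₀ (min_le_left _ _) (hχ0 y) (hχ1 y))
      have h2 : (c y : E) = -((α t * χ y) • (p y - (c y : E))) := eq_neg_of_add_eq_zero_left h0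
      have h3 := hc1 y
      rw [h2, norm_neg] at h3
      linarith
    · have hα : α t = 1 := min_eq_left (by linarith)
      have hβ : β t = 2 * t - 1 := max_eq_right (by linarith)
      rcases eq_or_lt_of_le ht1 with ht1 | ht1
      · have hβ1 : β t = 1 := by rw [hβ, ht1]; norm_num
        simp only [h, hβ1, sub_self, zero_smul, one_smul, zero_add] at h0
        rw [h0, norm_zero] at hv1
        norm_num at hv1
      · have hpos : 0 < 1 - β t := by rw [hβ]; linarith
        have hβ0 : 0 ≤ β t := le_max_left _ _
        have hw : (c y : E) + χ y • (p y - c y) = (-(β t / (1 - β t))) • (v : E) := by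
          simp only [h, hα, one_mul] at h0
          have h4 := eq_neg_of_add_eq_zero_left h0
          rw [← inv_smul_smul₀ hpos.ne' ((c y : E) + χ y • (p y - c y)), h4, ← neg_smul, smul_smul]
          congr 1
          field_simp
        rcases le_total 1 (2 * ‖(c y : E) - v‖) with hχy | hχy
        · have : χ y = 1 := min_eq_left hχy
          rw [this, one_smul, add_sub_cancel] at hw
          exact hpv y _ hw
        · have h5 := hsm y (χ y) (hχ0 y) (hχ1 y)
          have h6 : (-(β t / (1 - β t)) - 1) • (v : E)
              = ((c y : E) - v) + χ y • (p y - c y) := by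
            rw [sub_smul, ← hw, one_smul]; abel
          have h7 := norm_add_le ((c y : E) - v) (χ y • (p y - c y))
          have h9 : 0 ≤ β t / (1 - β t) := by positivity
          rw [← h6, norm_smul, hv1, mul_one, Real.norm_eq_abs] at h7
          have h8 := neg_abs_le (-(β t / (1 - β t)) - 1)
          linarith
  refine ⟨⟨fun z => ⟨‖h (z 0) (Fin.tail z)‖⁻¹ • h (z 0) (Fin.tail z), ?_⟩, ?_⟩, fun y => ?_,
    fun y => ?_, fun t y hy => ?_⟩
  · rw [mem_sphere_zero_iff_norm, norm_smul, norm_inv, norm_norm,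
      inv_mul_cancel₀ (norm_ne_zero_iff.2 (hne _ _))]
  · exact Continuous.subtype_mk ((hh.norm.inv₀ fun z => norm_ne_zero_iff.2 (hne _ _)).smul hh) _
  · have : h 0 y = c y := by simp [h, α, β]
    simp [this, hc1]
  · have : h 1 y = v := by simp [h, α, β]; norm_num
    simp [this, hv1]
  · have hχy : χ y = 0 := by simp [χ, hc y hy]
    have : h t y = v := by
      simp only [h, hχy, mul_zero, zero_smul, add_zero, hc y hy]
      rw [← add_smul]; simp
    simp [this, hv1]

/-! ### Extension of unitary matrices along isometries -/

section Ext

open Matrix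

variable {a b c : ℕ}

/-- For an isometry `F : ℂ^a → ℂ^b`, the embedding `SU(a) → SU(b)` that lets `SU(a)` act on the
range of `F`, and trivially on the orthogonal complement of that range. -/
noncomputable def ext (F : Matrix (Fin b) (Fin a) ℂ) (hF : Fᴴ * F = 1) : SU a →ₜ* SU b :=
  SU.homMk (fun x => 1 + F * (SU.toMat x - 1) * Fᴴ)
    (continuous_const.add ((continuous_const.matrix_mul
      (SU.continuous_toMat.sub continuous_const)).matrix_mul continuous_const))
    (by simp)
    (fun x y => by
      have h : SU.toMat (x * y) - 1 = (SU.toMat x - 1) + (SU.toMat y - 1)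
          + (SU.toMat x - 1) * (SU.toMat y - 1) := by rw [SU.toMat_mul]; noncomm_ring
      have h2 : F * (SU.toMat x - 1) * Fᴴ * (F * (SU.toMat y - 1) * Fᴴ)
          = F * ((SU.toMat x - 1) * (SU.toMat y - 1)) * Fᴴ := by
        simp only [Matrix.mul_assoc]
        rw [← Matrix.mul_assoc Fᴴ F, hF, Matrix.one_mul]
      rw [h, Matrix.mul_add, Matrix.mul_add, Matrix.add_mul, Matrix.add_mul, mul_add, add_mul,
        add_mul, h2]
      simp only [one_mul, mul_one]
      abel)
    (fun x => by
      have hx := SU.star_mul_toMat x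
      have h : star (SU.toMat x - 1) + (SU.toMat x - 1)
          + star (SU.toMat x - 1) * (SU.toMat x - 1) = 0 := by
        rw [star_sub, star_one, sub_mul, mul_sub, hx]; noncomm_ring
      have hs : star (1 + F * (SU.toMat x - 1) * Fᴴ) = 1 + F * star (SU.toMat x - 1) * Fᴴ := by
        simp only [star_eq_conjTranspose, conjTranspose_add, conjTranspose_mul,
          conjTranspose_conjTranspose, conjTranspose_one, Matrix.mul_assoc]
      have h2 : F * star (SU.toMat x - 1) * Fᴴ * (F * (SU.toMat x - 1) * Fᴴ)
          = F * (star (SU.toMat x - 1) * (SU.toMat x - 1)) * Fᴴ := by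
        simp only [Matrix.mul_assoc]
        rw [← Matrix.mul_assoc Fᴴ F, hF, Matrix.one_mul]
      rw [hs, mul_add, add_mul, add_mul, h2, one_mul, mul_one, one_mul]
      have h3 : F * star (SU.toMat x - 1) * Fᴴ + F * (SU.toMat x - 1) * Fᴴ
          + F * (star (SU.toMat x - 1) * (SU.toMat x - 1)) * Fᴴ = 0 := by
        rw [← Matrix.add_mul, ← Matrix.mul_add, ← Matrix.add_mul, ← Matrix.mul_add, h]
        simp
      rw [add_assoc, ← add_assoc (F * star (SU.toMat x - 1) * Fᴴ), h3, add_zero])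
    (fun x => by
      rw [Matrix.mul_assoc, Matrix.det_one_add_mul_comm, Matrix.mul_assoc, hF, Matrix.mul_one,
        add_sub_cancel, SU.det_toMat])

theorem toMat_ext (F : Matrix (Fin b) (Fin a) ℂ) (hF : Fᴴ * F = 1) (x : SU a) :
    SU.toMat (ext F hF x) = 1 + F * (SU.toMat x - 1) * Fᴴ := rfl

theorem ext_comp (F : Matrix (Fin b) (Fin a) ℂ) (hF : Fᴴ * F = 1) (F' : Matrix (Fin c) (Fin b) ℂ)
    (hF' : F'ᴴ * F' = 1) (h : (F' * F)ᴴ * (F' * F) = 1) :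
    (ext F' hF').comp (ext F hF) = ext (F' * F) h := by
  refine DFunLike.ext _ _ fun x => SU.toMat_injective ?_
  change SU.toMat (ext F' hF' (ext F hF x)) = _
  rw [toMat_ext, toMat_ext, toMat_ext, add_sub_cancel_left, conjTranspose_mul]
  simp only [Matrix.mul_assoc]

/-- Conjugation by `U` turns the extension along `F` into the one along `U F`, up to phase. -/
theorem ext_conj (F F' : Matrix (Fin b) (Fin a) ℂ) (hF : Fᴴ * F = 1) (hF' : F'ᴴ * F' = 1)
    (U : SU b) (ζ : ℂ) (hζ : ζ * star ζ = 1) (h : SU.toMat U * F = ζ • F') (x : SU a) :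
    ext F' hF' x = U * ext F hF x * U⁻¹ := by
  apply SU.toMat_injective
  rw [SU.toMat_mul, SU.toMat_mul, toMat_ext, toMat_ext, SU.toMat_inv, mul_add, mul_one, add_mul,
    SU.toMat_mul_star]
  have h2 : Fᴴ * star (SU.toMat U) = star ζ • F'ᴴ := by
    rw [star_eq_conjTranspose, ← conjTranspose_mul, h, conjTranspose_smul]
  have h3 : SU.toMat U * (F * (SU.toMat x - 1) * Fᴴ) * star (SU.toMat U)
      = (SU.toMat U * F) * (SU.toMat x - 1) * (Fᴴ * star (SU.toMat U)) := by
    simp only [Matrix.mul_assoc]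
  rw [h3, h, h2, Matrix.smul_mul, Matrix.smul_mul, Matrix.mul_smul, smul_smul, hζ, one_smul]

/-- The isometry given by an injection of the standard bases. -/
def inj (f : Fin a → Fin b) : Matrix (Fin b) (Fin a) ℂ :=
  Matrix.of fun i j => if i = f j then 1 else 0

theorem inj_isometry {f : Fin a → Fin b} (hf : Function.Injective f) : (inj f)ᴴ * inj f = 1 := by
  ext i j
  by_cases h : i = j
  · subst h; simp [inj, Matrix.mul_apply]
  · have h' : ¬ j = i := fun h' => h h'.symm
    simp [inj, Matrix.mul_apply, Matrix.one_apply, hf.eq_iff, h, h']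

theorem inj_comp (f : Fin a → Fin b) (g : Fin b → Fin c) : inj g * inj f = inj (g ∘ f) := by
  ext i j
  simp [inj, Matrix.mul_apply]

/-- The embedding `SU(a) → SU(b)` that permutes the indices by an injection. -/
noncomputable def exi (f : Fin a → Fin b) (hf : Function.Injective f) : SU a →ₜ* SU b :=
  ext (inj f) (inj_isometry hf)

theorem exi_comp (f : Fin a → Fin b) (hf : Function.Injective f) (g : Fin b → Fin c)
    (hg : Function.Injective g) : (exi g hg).comp (exi f hf) = exi (g ∘ f) (hg.comp hf) := by
  have h := ext_comp (inj f) (inj_isometry hf) (inj g) (inj_isometry hg)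
    (by rw [inj_comp]; exact inj_isometry (hg.comp hf))
  unfold exi
  rw [h]
  congr 1
  exact inj_comp f g

theorem ext_injective (F : Matrix (Fin b) (Fin a) ℂ) (hF : Fᴴ * F = 1) :
    Function.Injective (ext F hF) := by
  intro x y h
  have h1 := congrArg SU.toMat h
  rw [toMat_ext, toMat_ext, add_right_inj] at h1
  have h2 := congrArg (fun M => Fᴴ * M * F) h1
  have h3 : ∀ X : Matrix (Fin a) (Fin a) ℂ, Fᴴ * (F * X * Fᴴ) * F = X := fun X => by
    have : Fᴴ * (F * X * Fᴴ) * F = (Fᴴ * F) * X * (Fᴴ * F) := by simp only [Matrix.mul_assoc]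
    rw [this, hF, Matrix.one_mul, Matrix.mul_one]
  simp only [h3] at h2
  exact SU.toMat_injective (sub_left_injective h2)

/-! ### The sphere as a coset space -/

/-- The embedding `SU(a) → SU(a+1)` on the first `a` coordinates. -/
noncomputable def st (a : ℕ) : SU a →ₜ* SU (a + 1) := exi Fin.castSucc (Fin.castSucc_injective a)

/-- The last column of a matrix in `SU(a+1)`, as a point of the unit sphere. -/
noncomputable def lastCol (x : SU (a + 1)) :
    Metric.sphere (0 : EuclideanSpace ℂ (Fin (a + 1))) 1 :=
  ⟨WithLp.toLp 2 fun i => SU.toMat x i (Fin.last a), by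
    rw [mem_sphere_zero_iff_norm, EuclideanSpace.norm_eq, Real.sqrt_eq_one]
    have h := congrFun (congrFun (SU.star_mul_toMat x) (Fin.last a)) (Fin.last a)
    rw [Matrix.mul_apply, Matrix.one_apply_eq] at h
    have h2 := congrArg Complex.re h
    rw [Complex.re_sum] at h2
    rw [← Complex.one_re, ← h2]
    refine Finset.sum_congr rfl fun i _ => ?_
    simp only [Matrix.star_apply]
    rw [Complex.star_def, ← Complex.normSq_eq_conj_mul_self, Complex.ofReal_re,
      Complex.normSq_eq_norm_sq]⟩

theorem lastCol_eq_iff (x y : SU (a + 1)) :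
    lastCol x = lastCol y ↔ ∀ i, SU.toMat x i (Fin.last a) = SU.toMat y i (Fin.last a) := by
  constructor
  · intro h i
    have := congrArg (fun v : Metric.sphere (0 : EuclideanSpace ℂ (Fin (a + 1))) 1 => (v : EuclideanSpace ℂ (Fin (a + 1))) i) h
    exact this
  · intro h
    refine Subtype.ext ?_
    change WithLp.toLp 2 _ = WithLp.toLp 2 _
    congr 1
    exact funext h

theorem continuous_lastCol : Continuous (lastCol (a := a)) := by
  refine Continuous.subtype_mk ?_ _
  refine (PiLp.continuous_toLp 2 _).comp (continuous_pi fun i => ?_)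
  exact (continuous_apply_apply i (Fin.last a)).comp SU.continuous_toMat

theorem lastCol_surjective (ha : 1 ≤ a) : Function.Surjective (lastCol (a := a)) := by
  intro v
  have hv : ‖(v : EuclideanSpace ℂ (Fin (a + 1)))‖ = 1 := by simp
  obtain ⟨B, hB⟩ := Orthonormal.exists_orthonormalBasis_extension_of_card_eq (𝕜 := ℂ)
    (ι := Fin (a + 1)) (E := EuclideanSpace ℂ (Fin (a + 1))) (by simp)
    (v := fun _ => (v : EuclideanSpace ℂ (Fin (a + 1)))) (s := {Fin.last a})
    ⟨fun i => by simp, fun i j hij => (hij (Subsingleton.elim _ _)).elim⟩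
  have hBl := hB (Fin.last a) rfl
  have hU := (EuclideanSpace.basisFun (Fin (a + 1)) ℂ).toMatrix_orthonormalBasis_mem_unitary B
  set U := (EuclideanSpace.basisFun (Fin (a + 1)) ℂ).toBasis.toMatrix B with hUdef
  have hUe : ∀ i j, U i j = B j i := fun i j => by
    simp [hUdef, Module.Basis.toMatrix_apply]
  have hU1 : star U * U = 1 := hU.1
  have hdet : star U.det * U.det = 1 := by
    rw [← Matrix.det_conjTranspose, ← Matrix.det_mul, ← star_eq_conjTranspose, hU1, Matrix.det_one]
  -- the determinant is corrected in the zeroth column, which is not the last one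
  let D : Matrix (Fin (a + 1)) (Fin (a + 1)) ℂ :=
    Matrix.diagonal fun i => if i = 0 then star U.det else 1
  have hD : star D * D = 1 := by
    rw [star_eq_conjTranspose, Matrix.diagonal_conjTranspose, Matrix.diagonal_mul_diagonal,
      ← Matrix.diagonal_one]
    congr 1
    funext i
    by_cases hi : i = 0
    · simp only [hi, Pi.star_apply, if_true, star_star]
      rw [mul_comm]; exact hdet
    · simp [hi]
  have hDd : D.det = star U.det := by
    rw [Matrix.det_diagonal, Finset.prod_ite_eq' Finset.univ]
    simp
  refine ⟨SU.ofMat (U * D) ?_ ?_, ?_⟩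
  · rw [star_mul, mul_assoc, ← mul_assoc (star U), hU1, one_mul, hD]
  · rw [Matrix.det_mul, hDd, mul_comm, hdet]
  · refine Subtype.ext ?_
    rw [← hBl]
    refine (WithLp.ofLp_injective 2) (funext fun i => ?_)
    change (U * D) i (Fin.last a) = _
    have h0 : Fin.last a ≠ 0 := by
      intro h; have := congrArg Fin.val h; simp at this; omega
    rw [Matrix.mul_diagonal, if_neg h0, mul_one, hUe]

/-- The last column map exhibits the sphere as the quotient of `SU(a+1)` by `SU(a)`. -/
theorem isCosetProj_lastCol (ha : 1 ≤ a) : IsCosetProj (st a) (lastCol (a := a)) where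
  cont := continuous_lastCol
  surj := lastCol_surjective ha
  fib x y := by
    let F : Matrix (Fin (a + 1)) (Fin a) ℂ := inj Fin.castSucc
    let E : Matrix (Fin (a + 1)) (Fin (a + 1)) ℂ := Matrix.single (Fin.last a) (Fin.last a) 1
    have hF : Fᴴ * F = 1 := inj_isometry (Fin.castSucc_injective a)
    have hFE : Fᴴ * E = 0 := by
      ext i j
      rw [Matrix.mul_apply]
      refine Finset.sum_eq_zero fun k _ => ?_
      by_cases hk : k = Fin.last a
      · subst hk
        have : Fin.last a ≠ i.castSucc := (Fin.castSucc_lt_last i).ne'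
        simp [F, inj, this]
      · have : Fin.last a ≠ k := fun h => hk h.symm
        simp [E, Matrix.single_apply, this]
    have hEs : Eᴴ = E := by simp [E]
    have hEF : E * F = 0 := by
      have := congrArg conjTranspose hFE
      simpa [hEs] using this
    have hFF : F * Fᴴ = 1 - E := by
      ext i j
      induction i using Fin.lastCases with
      | last =>
        induction j using Fin.lastCases with
        | last => simp [F, inj, Matrix.mul_apply, E, (Fin.castSucc_lt_last _).ne']
        | cast j =>
          simp [F, inj, Matrix.mul_apply, E, (Fin.castSucc_lt_last _).ne',
            Matrix.single_apply, Matrix.one_apply, (Fin.castSucc_lt_last _).ne]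
      | cast i =>
        induction j using Fin.lastCases with
        | last =>
          simp [F, inj, Matrix.mul_apply, E, (Fin.castSucc_lt_last _).ne',
            Matrix.single_apply, Matrix.one_apply, (Fin.castSucc_lt_last _).ne]
        | cast j =>
          by_cases h : i = j
          · subst h
            simp [F, inj, Matrix.mul_apply, E, Matrix.single_apply, (Fin.castSucc_lt_last _).ne']
          · have h' : ¬ j = i := fun h' => h h'.symm
            simp [F, inj, Matrix.mul_apply, E, Matrix.single_apply, Matrix.one_apply,
              (Fin.castSucc_lt_last _).ne', h, h']
    have hcol : ∀ M M' : Matrix (Fin (a + 1)) (Fin (a + 1)) ℂ, M * E = M' * E ↔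
        ∀ i, M i (Fin.last a) = M' i (Fin.last a) := by
      intro M M'
      constructor
      · intro h i
        have := congrFun (congrFun h i) (Fin.last a)
        simpa [E] using this
      · intro h
        ext i j
        by_cases hj : j = Fin.last a
        · subst hj; simpa [E] using h i
        · have hj' : Fin.last a ≠ j := fun h => hj h.symm
          simp [E, Matrix.mul_apply, Matrix.single_apply, hj']
    rw [lastCol_eq_iff, ← hcol]
    constructor
    · intro h
      set g := x⁻¹ * y with hg
      have hgE : SU.toMat g * E = E := by
        rw [hg, SU.toMat_mul, mul_assoc, ← h, ← mul_assoc, SU.toMat_inv, SU.star_mul_toMat,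
          one_mul]
      have hEg : E * SU.toMat g = E := by
        have h1 : star (SU.toMat g) * E = E := by
          conv_lhs => rw [← hgE]
          rw [← mul_assoc, SU.star_mul_toMat, one_mul]
        have h2 := congrArg star h1
        rw [star_mul, star_star, star_eq_conjTranspose, hEs] at h2
        exact h2
      have hEE : E * E = E := by simp [E]
      set M := Fᴴ * SU.toMat g * F with hM
      have hrep : SU.toMat g = 1 + F * (M - 1) * Fᴴ := by
        have h1 : F * M * Fᴴ = (F * Fᴴ) * SU.toMat g * (F * Fᴴ) := by
          rw [hM]; simp only [Matrix.mul_assoc]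
        rw [Matrix.mul_sub, Matrix.sub_mul, h1, hFF, Matrix.mul_one, hFF, sub_mul, one_mul, hEg,
          mul_sub, mul_one, sub_mul, hgE, hEE]
        abel
      have hMu : star M * M = 1 := by
        have h1 : star M * M = Fᴴ * star (SU.toMat g) * (F * Fᴴ) * SU.toMat g * F := by
          rw [hM]
          simp only [star_eq_conjTranspose, conjTranspose_mul, conjTranspose_conjTranspose,
            Matrix.mul_assoc]
        rw [h1, hFF, Matrix.mul_sub, Matrix.mul_one, Matrix.sub_mul, Matrix.sub_mul,
          Matrix.mul_assoc Fᴴ (star (SU.toMat g)) (SU.toMat g), SU.star_mul_toMat, Matrix.mul_one,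
          hF, Matrix.mul_assoc _ E, hEg, Matrix.mul_assoc _ E, hEF, Matrix.mul_zero, sub_zero]
      have hMd : M.det = 1 := by
        have h1 := SU.det_toMat g
        rw [hrep, Matrix.mul_assoc, Matrix.det_one_add_mul_comm, Matrix.mul_assoc, hF,
          Matrix.mul_one, add_sub_cancel] at h1
        exact h1
      refine ⟨SU.ofMat M hMu hMd, ?_⟩
      have : st a (SU.ofMat M hMu hMd) = g := SU.toMat_injective hrep.symm
      rw [this, hg, mul_inv_cancel_left]
    · rintro ⟨h, rfl⟩
      have h1 : SU.toMat (st a h) = 1 + F * (SU.toMat h - 1) * Fᴴ := rfl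
      rw [SU.toMat_mul, mul_assoc, h1, add_mul, Matrix.mul_assoc _ Fᴴ, hFE, Matrix.mul_zero,
        add_zero, one_mul]

end Ext

/-! ### The stable range -/

section Stable

open scoped Matrix

variable {a b d e : ℕ}

theorem st_injective (a : ℕ) : Function.Injective (st a) :=
  ext_injective _ (inj_isometry (Fin.castSucc_injective a))

/-- A map of `I^e` into `SU(a+1)`, `e ≤ 2a`, that takes the boundary into `SU(a)` is deformed rel
boundary into `SU(a)`: its last column, a map to `S^{2a+1}`, is contracted, and the contraction is
lifted. -/
theorem compress (ha : 1 ≤ a) (he : e ≤ 2 * a) (Γ : C(Cb e, SU (a + 1)))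
    (hΓ : ∀ y ∈ Cube.boundary (Fin e), ∃ k, Γ y = st a k) :
    ∃ H : C(Cb (e + 1), SU (a + 1)), (∀ y, H (Fin.cons 0 y) = Γ y) ∧
      (∀ t, ∀ y ∈ Cube.boundary (Fin e), H (Fin.cons t y) = Γ y) ∧
      ∀ y, ∃ k, H (Fin.cons 1 y) = st a k := by
  have hq := isCosetProj_lastCol ha
  have hfin : e + 1 < Module.finrank ℝ (EuclideanSpace ℂ (Fin (a + 1))) := by
    have : Module.finrank ℝ (EuclideanSpace ℂ (Fin (a + 1))) = 2 * (a + 1) := by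
      rw [← Module.finrank_mul_finrank ℝ ℂ, Complex.finrank_real_complex, finrank_euclideanSpace,
        Fintype.card_fin]
    omega
  have hv : ∀ g : SU (a + 1), lastCol g = lastCol 1 ↔ ∃ k, g = st a k := fun g => by
    rw [eq_comm, hq.fib]; simp
  let c : C(Cb e, Metric.sphere (0 : EuclideanSpace ℂ (Fin (a + 1))) 1) :=
    ⟨fun y => lastCol (Γ y), continuous_lastCol.comp Γ.continuous⟩
  have hc : ∀ y ∈ Cube.boundary (Fin e), c y = lastCol 1 := fun y hy => (hv _).2 (hΓ y hy)
  obtain ⟨C, hC0, hC1, hCs⟩ := sphere_contract hfin c (lastCol 1) hc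
  obtain ⟨H, hH, hHu⟩ := hq.relLift (SU.sqrtNear a) (st_injective a) C (fun x => Γ (Fin.tail x))
    (Γ.continuous.comp continuous_tail).continuousOn (by
      intro x
      rw [← Fin.cons_self_tail x, mem_Jx_cons, Fin.tail_cons]
      rintro (h | h)
      · rw [h, hC0]; rfl
      · rw [hCs _ _ h]; exact hc _ h)
  refine ⟨H, fun y => ?_, fun t y hy => ?_, fun y => ?_⟩
  · rw [hHu _ (mem_Jx_cons.2 (Or.inl rfl)), Fin.tail_cons]
  · rw [hHu _ (mem_Jx_cons.2 (Or.inr hy)), Fin.tail_cons]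
  · rw [← hv, hH, hC1]

/-- Loops of dimension at most `2a` in `SU(a+1)` can be compressed into `SU(a)`. -/
theorem st_surj (ha : 1 ≤ a) (hd : d ≤ 2 * a) : Function.Surjective (PiG.map d (st a)) := by
  intro x
  induction x using QuotientGroup.induction_on with | _ Γ => ?_
  obtain ⟨H, h0, hs, h1⟩ := compress ha hd Γ.1 fun y hy => ⟨1, by rw [Γ.2 y hy, map_one]⟩
  let i1 : C(Cb d, Cb (d + 1)) :=
    ⟨fun y => Fin.cons 1 y, continuous_cons.comp (continuous_const.prodMk continuous_id)⟩
  obtain ⟨k, hk⟩ := exists_factor (st_injective a) (H.comp i1) h1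
  have hk' : ∀ y, H (Fin.cons 1 y) = st a (k y) := hk
  refine ⟨((⟨k, fun y hy => st_injective a ?_⟩ : Lp d (SU a)) : PiG d (SU a)), ?_⟩
  · rw [← hk', hs _ _ hy, Γ.2 y hy, map_one]
  rw [PiG.map_mk, QuotientGroup.eq]
  let r : C(Cb (d + 1), Cb (d + 1)) :=
    ⟨fun x => Fin.cons (unitInterval.symm (x 0)) (Fin.tail x), continuous_cons.comp
      ((unitInterval.continuous_symm.comp (continuous_apply 0)).prodMk continuous_tail)⟩
  have hr : ∀ t y, r (Fin.cons t y) = Fin.cons (unitInterval.symm t) y := fun t y => rfl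
  refine ⟨(((st a : C(SU a, SU (a + 1))).comp k).comp (tailC d))⁻¹ * H.comp r, fun y => ?_,
    fun y => ?_, fun t y hy => ?_⟩
  · simp [hr, h0, tailC]
  · simp [hr, hk', tailC]
  · have h2 : st a (k y) = 1 := by rw [← hk', hs _ _ hy, Γ.2 y hy]
    simp [hr, hs _ _ hy, tailC, Γ.2 y hy, h2]

theorem st_inj (ha : 1 ≤ a) (hd : d < 2 * a) : Function.Injective (PiG.map d (st a)) := by
  rw [injective_iff_map_eq_one]
  intro x
  induction x using QuotientGroup.induction_on with | _ f => ?_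
  rw [PiG.map_mk, PiG.mk_eq_one, PiG.mk_eq_one]
  rintro ⟨Γ, hΓ⟩
  have hb : ∀ x ∈ Cube.boundary (Fin (d + 1)), ∃ k, Γ x = st a k := by
    intro x
    rw [← Fin.cons_self_tail x, mem_boundary_cons]
    rintro (h | h | h)
    · exact ⟨1, by rw [h, hΓ.zero', map_one]⟩
    · exact ⟨f.1 (Fin.tail x), by rw [h, hΓ.one']; rfl⟩
    · exact ⟨1, by rw [hΓ.side' _ _ h, map_one]⟩
  obtain ⟨H, h0, hs, h1⟩ := compress ha hd Γ hb
  let i1 : C(Cb (d + 1), Cb (d + 1 + 1)) :=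
    ⟨fun y => Fin.cons 1 y, continuous_cons.comp (continuous_const.prodMk continuous_id)⟩
  obtain ⟨k, hk⟩ := exists_factor (st_injective a) (H.comp i1) h1
  have hk' : ∀ y ∈ Cube.boundary (Fin (d + 1)), st a (k y) = Γ y := fun y hy => by
    rw [← hs 1 y hy]; exact (hk y).symm
  refine ⟨k, fun y => ?_, fun y => ?_, fun t y hy => ?_⟩ <;> apply st_injective a
  · rw [hk' _ (mem_boundary_cons.2 (Or.inr (Or.inl rfl))), hΓ.one']; rfl
  · rw [hk' _ (mem_boundary_cons.2 (Or.inl rfl)), hΓ.zero', map_one]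
  · rw [hk' _ (mem_boundary_cons.2 (Or.inr (Or.inr hy))), hΓ.side' _ _ hy, map_one]

/-- The stabilization map `SU(a) → SU(b)`, `a ≤ b`. -/
noncomputable def stle (h : a ≤ b) : SU a →ₜ* SU b := exi (Fin.castLE h) (Fin.castLE_injective h)

theorem stle_self (x : SU a) : stle le_rfl x = x := by
  apply SU.toMat_injective
  have h : inj (Fin.castLE (le_refl a)) = 1 := by
    ext i j
    simp [inj, Matrix.one_apply]
  change 1 + inj (Fin.castLE (le_refl a)) * _ * _ = _
  rw [h]
  simp

theorem stle_succ (h : a ≤ b) : stle (h.trans (Nat.le_succ b)) = (st b).comp (stle h) := by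
  unfold stle st
  rw [exi_comp]
  rfl

theorem stle_surj (ha : 1 ≤ a) (h : a ≤ b) (hd : d ≤ 2 * a) :
    Function.Surjective (PiG.map d (stle h)) := by
  induction b, h using Nat.le_induction with
  | base =>
    intro x
    refine ⟨x, ?_⟩
    induction x using QuotientGroup.induction_on with | _ f => ?_
    rw [PiG.map_mk]
    congr 1
    exact Subtype.ext (ContinuousMap.ext fun y => stle_self _)
  | succ b h ih =>
    intro x
    obtain ⟨y, rfl⟩ := st_surj (ha.trans h) (hd.trans (by omega)) x
    obtain ⟨z, rfl⟩ := ih y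
    exact ⟨z, by rw [PiG.map_map, ← stle_succ]⟩

theorem stle_inj (ha : 1 ≤ a) (h : a ≤ b) (hd : d < 2 * a) :
    Function.Injective (PiG.map d (stle h)) := by
  induction b, h using Nat.le_induction with
  | base =>
    have : ∀ x, PiG.map d (stle (le_refl a)) x = x := by
      intro x
      induction x using QuotientGroup.induction_on with | _ f => ?_
      rw [PiG.map_mk]
      congr 1
      exact Subtype.ext (ContinuousMap.ext fun y => stle_self _)
    intro x y hxy
    rwa [this, this] at hxy
  | succ b h ih =>
    intro x y hxy
    rw [stle_succ h, ← PiG.map_map, ← PiG.map_map] at hxy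
    exact ih (st_inj (ha.trans h) (by omega) hxy)

/-- `SU(b)` is path connected, by the stable range down to the trivial group `SU(1)`. -/
theorem SU.exists_path (hb : 1 ≤ b) (U : SU b) :
    ∃ p : C(unitInterval, SU b), p 0 = 1 ∧ p 1 = U := by
  let L : Lp 0 (SU b) := ⟨ContinuousMap.const _ U, fun y ⟨i, _⟩ => i.elim0⟩
  obtain ⟨x, hx⟩ := stle_surj (le_refl 1) hb (Nat.zero_le _) (L : PiG 0 (SU b))
  have h1 : ∀ y : SU 1, y = 1 := fun y => by
    apply SU.toMat_injective
    ext i j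
    have := SU.det_toMat y
    rw [Matrix.det_fin_one] at this
    rw [Subsingleton.elim i 0, Subsingleton.elim j 0, this, SU.toMat_one, Matrix.one_apply_eq]
  have hx1 : x = 1 := by
    induction x using QuotientGroup.induction_on with | _ f => ?_
    have : f = 1 := Subtype.ext (ContinuousMap.ext fun y => h1 _)
    rw [this]; rfl
  rw [hx1, map_one, eq_comm, PiG.mk_eq_one] at hx
  obtain ⟨Γ, hΓ⟩ := hx
  refine ⟨Γ.comp ⟨fun t => Fin.cons t Fin.elim0, continuous_cons.comp
    (continuous_id.prodMk continuous_const)⟩, hΓ.zero' _, hΓ.one' _⟩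

/-- All embeddings `SU(a) → SU(b)` given by injections of the index sets are homotopic, being
conjugate under signed permutation matrices. -/
theorem PiG.map_exi_eq (hb : 1 ≤ b) (f f' : Fin a → Fin b) (hf : Function.Injective f)
    (hf' : Function.Injective f') : PiG.map e (exi f hf) = PiG.map e (exi f' hf') := by
  obtain ⟨σ, hσ⟩ : ∃ σ : Equiv.Perm (Fin b), ∀ i, σ (f i) = f' i :=
    Equiv.Perm.exists_extending_pair f f' hf hf'
  obtain ⟨ζ, hζ⟩ := IsAlgClosed.exists_pow_nat_eq (((Equiv.Perm.sign σ : ℤˣ) : ℤ) : ℂ) hb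
  have hsq : (((Equiv.Perm.sign σ : ℤˣ) : ℤ) : ℂ) * (((Equiv.Perm.sign σ : ℤˣ) : ℤ) : ℂ) = 1 := by
    rw [← Int.cast_mul]; simp
  have hn : ζ * star ζ = 1 := by
    have h1 : ‖ζ‖ ^ b = 1 := by
      rw [← norm_pow, hζ]
      rcases Int.units_eq_one_or (Equiv.Perm.sign σ) with h | h <;> simp [h]
    have h2 : ‖ζ‖ = 1 := (pow_eq_one_iff_of_nonneg (norm_nonneg _) (by omega)).1 h1
    rw [Complex.star_def, Complex.mul_conj, Complex.normSq_eq_norm_sq, h2]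
    simp
  have hP : (inj σ)ᴴ * inj σ = 1 := inj_isometry σ.injective
  have hPd : (inj σ).det = (((Equiv.Perm.sign σ : ℤˣ) : ℤ) : ℂ) := by
    have : inj σ = Equiv.Perm.permMatrix ℂ σ⁻¹ := by
      ext i j
      simp [inj, Equiv.Perm.permMatrix, PEquiv.toMatrix_apply, Equiv.symm_apply_eq]
    rw [this, Matrix.det_permutation]
    simp
  have hu : star (ζ • inj σ) * (ζ • inj σ) = 1 := by
    rw [star_smul, Matrix.star_eq_conjTranspose, Matrix.smul_mul, Matrix.mul_smul, hP, smul_smul,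
      mul_comm, hn, one_smul]
  have hd : (ζ • inj σ).det = 1 := by
    rw [Matrix.det_smul, hPd, Fintype.card_fin, hζ, hsq]
  obtain ⟨p, hp0, hp1⟩ := SU.exists_path hb (SU.ofMat (ζ • inj σ) hu hd)
  refine PiG.map_eq_of_conj e _ _ p hp0 fun x => ?_
  rw [hp1]
  refine ext_conj _ _ _ _ _ ζ hn ?_ x
  rw [SU.toMat_ofMat, Matrix.smul_mul, inj_comp]
  congr 2
  exact funext hσ

/-- `π_e(SU(a))` is commutative in the stable range: in `SU(a+a)` the two factors are moved to
complementary blocks. -/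
theorem PiG.comm (ha : 1 ≤ a) (he : e < 2 * a) (x y : PiG e (SU a)) : x * y = y * x := by
  have hl : Function.Injective (Fin.castAdd a : Fin a → Fin (a + a)) := Fin.castAdd_injective a a
  have hr : Function.Injective (Fin.natAdd a : Fin a → Fin (a + a)) := Fin.natAdd_injective a a
  have hinj : Function.Injective (PiG.map e (exi (Fin.castAdd a) hl)) :=
    stle_inj ha (Nat.le_add_left a a) he
  have heq := PiG.map_exi_eq (e := e) (by omega : 1 ≤ a + a) _ _ hl hr
  apply hinj
  rw [map_mul, map_mul]
  nth_rewrite 2 [heq]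
  nth_rewrite 2 [heq]
  induction x using QuotientGroup.induction_on with | _ f => ?_
  induction y using QuotientGroup.induction_on with | _ g => ?_
  rw [PiG.map_mk, PiG.map_mk, ← QuotientGroup.mk_mul, ← QuotientGroup.mk_mul]
  congr 1
  refine Subtype.ext (ContinuousMap.ext fun t => SU.toMat_injective ?_)
  change SU.toMat (exi _ hl (f.1 t) * exi _ hr (g.1 t)) =
    SU.toMat (exi _ hr (g.1 t) * exi _ hl (f.1 t))
  have h0 : (inj (Fin.castAdd a : Fin a → Fin (a + a)))ᴴ *
      inj (Fin.natAdd a : Fin a → Fin (a + a)) = 0 := by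
    ext i j
    rw [Matrix.mul_apply]
    refine Finset.sum_eq_zero fun k _ => ?_
    by_cases hk : k = Fin.castAdd a i
    · have : k ≠ Fin.natAdd a j := by
        intro h; have := congrArg Fin.val (hk.symm.trans h); simp at this; omega
      have h : inj (Fin.natAdd a : Fin a → Fin (a + a)) k j = 0 := if_neg this
      rw [h, mul_zero]
    · simp [inj, hk]
  have h0' : (inj (Fin.natAdd a : Fin a → Fin (a + a)))ᴴ *
      inj (Fin.castAdd a : Fin a → Fin (a + a)) = 0 := by
    have := congrArg Matrix.conjTranspose h0
    simpa using this
  rw [SU.toMat_mul, SU.toMat_mul]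
  unfold exi
  rw [toMat_ext, toMat_ext, add_mul, one_mul, mul_add, mul_one, add_mul, one_mul, mul_add, mul_one]
  have hz : ∀ (F G : Matrix (Fin (a + a)) (Fin a) ℂ) (M M' : Matrix (Fin a) (Fin a) ℂ),
      Fᴴ * G = 0 → F * M * Fᴴ * (G * M' * Gᴴ) = 0 := fun F G M M' h => by
    have : F * M * Fᴴ * (G * M' * Gᴴ) = F * M * (Fᴴ * G) * (M' * Gᴴ) := by
      simp only [Matrix.mul_assoc]
    rw [this, h, Matrix.mul_zero, Matrix.zero_mul]
  rw [hz _ _ _ _ h0, hz _ _ _ _ h0']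
  abel

end Stable

/-! ### Kronecker products on homotopy groups -/

section Kron

open scoped Matrix Kronecker

variable {a c b e r N : ℕ}

theorem kron_mul (A A' : Matrix (Fin a) (Fin a) ℂ) (B B' : Matrix (Fin c) (Fin c) ℂ) :
    kron (A * A') (B * B') = kron A B * kron A' B' := by
  unfold kron
  rw [Matrix.mul_kronecker_mul]
  simp [Matrix.submatrix_mul_equiv]

theorem kron_one_one : kron (1 : Matrix (Fin a) (Fin a) ℂ) (1 : Matrix (Fin c) (Fin c) ℂ) = 1 := by
  simp [kron]

theorem kron_star (A : Matrix (Fin a) (Fin a) ℂ) (B : Matrix (Fin c) (Fin c) ℂ) :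
    star (kron A B) = kron (star A) (star B) := by
  simp [kron, Matrix.star_eq_conjTranspose, Matrix.conjTranspose_kronecker]

theorem kron_det (A : Matrix (Fin a) (Fin a) ℂ) (B : Matrix (Fin c) (Fin c) ℂ) :
    (kron A B).det = A.det ^ c * B.det ^ a := by
  unfold kron
  rw [Matrix.det_reindex_self, Matrix.det_kronecker, Fintype.card_fin, Fintype.card_fin]

theorem kron_apply (A : Matrix (Fin a) (Fin a) ℂ) (B : Matrix (Fin c) (Fin c) ℂ)
    (p q : Fin a × Fin c) :
    kron A B (finProdFinEquiv p) (finProdFinEquiv q) = A p.1 q.1 * B p.2 q.2 := by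
  simp [kron, Matrix.kroneckerMap_apply]

theorem Continuous.kron {X : Type*} [TopologicalSpace X] {A : X → Matrix (Fin a) (Fin a) ℂ}
    {B : X → Matrix (Fin c) (Fin c) ℂ} (hA : Continuous A) (hB : Continuous B) :
    Continuous fun x => kron (A x) (B x) := by
  refine continuous_matrix fun i j => ?_
  obtain ⟨p, rfl⟩ := finProdFinEquiv.surjective i
  obtain ⟨q, rfl⟩ := finProdFinEquiv.surjective j
  simp only [kron_apply]
  exact ((continuous_apply_apply p.1 q.1).comp hA).mul ((continuous_apply_apply p.2 q.2).comp hB)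

/-- The homomorphism `SU(a) → SU(ac)`, `A ↦ A ⊗ I_c`. -/
noncomputable def kronL (a c : ℕ) : SU a →ₜ* SU (a * c) :=
  SU.homMk (fun x => kron (SU.toMat x) 1) (SU.continuous_toMat.kron continuous_const)
    (by rw [SU.toMat_one, kron_one_one])
    (fun x y => by rw [SU.toMat_mul, ← kron_mul, one_mul])
    (fun x => by rw [kron_star, ← kron_mul, SU.star_mul_toMat, star_one, one_mul, kron_one_one])
    (fun x => by rw [kron_det, SU.det_toMat]; simp)

/-- The homomorphism `SU(c) → SU(ac)`, `B ↦ I_a ⊗ B`. -/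
noncomputable def kronR (a c : ℕ) : SU c →ₜ* SU (a * c) :=
  SU.homMk (fun x => kron 1 (SU.toMat x)) (continuous_const.kron SU.continuous_toMat)
    (by rw [SU.toMat_one, kron_one_one])
    (fun x y => by rw [SU.toMat_mul, ← kron_mul, one_mul])
    (fun x => by rw [kron_star, ← kron_mul, SU.star_mul_toMat, star_one, one_mul, kron_one_one])
    (fun x => by rw [kron_det, SU.det_toMat]; simp)

theorem toMat_kronL (x : SU a) : SU.toMat (kronL a c x) = kron (SU.toMat x) 1 := rfl

theorem toMat_kronR (x : SU c) : SU.toMat (kronR a c x) = kron 1 (SU.toMat x) := rfl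

theorem kron_one_right (A : Matrix (Fin a) (Fin a) ℂ) : kron A (1 : Matrix (Fin c) (Fin c) ℂ) =
    ∑ j : Fin c, inj (fun i : Fin a => finProdFinEquiv (i, j)) * A *
      (inj fun i : Fin a => finProdFinEquiv (i, j))ᴴ := by
  ext p q
  obtain ⟨⟨p, p'⟩, rfl⟩ := finProdFinEquiv.surjective p
  obtain ⟨⟨q, q'⟩, rfl⟩ := finProdFinEquiv.surjective q
  rw [kron_apply, Matrix.sum_apply]
  by_cases h : p' = q'
  · subst h
    simp [inj, Matrix.mul_apply, Matrix.conjTranspose_apply, ite_and]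
  · have h' : ¬ q' = p' := fun h' => h h'.symm
    simp [inj, Matrix.mul_apply, Matrix.conjTranspose_apply, ite_and, h, h']

theorem kron_one_left (B : Matrix (Fin c) (Fin c) ℂ) : kron (1 : Matrix (Fin a) (Fin a) ℂ) B =
    ∑ i : Fin a, inj (fun j : Fin c => finProdFinEquiv (i, j)) * B *
      (inj fun j : Fin c => finProdFinEquiv (i, j))ᴴ := by
  ext p q
  obtain ⟨⟨p, p'⟩, rfl⟩ := finProdFinEquiv.surjective p
  obtain ⟨⟨q, q'⟩, rfl⟩ := finProdFinEquiv.surjective q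
  rw [kron_apply, Matrix.sum_apply]
  by_cases h : p = q
  · subst h
    simp [inj, Matrix.mul_apply, Matrix.conjTranspose_apply, ite_and]
  · have h' : ¬ q = p := fun h' => h h'.symm
    simp [inj, Matrix.mul_apply, Matrix.conjTranspose_apply, ite_and, h, h']

/-- A homomorphism that places copies of `SU(a)` in disjoint sets of coordinates is the product of
the corresponding embeddings. -/
theorem prod_exi (f : Fin r → Fin a → Fin b) (hf : ∀ j, Function.Injective (f j))
    (hd : ∀ i j, i ≠ j → ∀ u v, f i u ≠ f j v) (x : SU a) (L : List (Fin r)) (hL : L.Nodup) :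
    SU.toMat (L.map fun j => exi (f j) (hf j) x).prod =
      1 + (L.map fun j => inj (f j) * (SU.toMat x - 1) * (inj (f j))ᴴ).sum := by
  induction L with
  | nil => simp [SU.toMat_one]
  | cons i L ih =>
    rw [List.nodup_cons] at hL
    have hz : inj (f i) * (SU.toMat x - 1) * (inj (f i))ᴴ *
        (L.map fun j => inj (f j) * (SU.toMat x - 1) * (inj (f j))ᴴ).sum = 0 := by
      rw [← List.sum_map_mul_left]
      refine List.sum_eq_zero fun M hM => ?_
      obtain ⟨j, hj, rfl⟩ := List.mem_map.1 hM
      have hij : i ≠ j := fun h => hL.1 (h ▸ hj)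
      have h0 : (inj (f i))ᴴ * inj (f j) = 0 := by
        ext u v
        simp [inj, Matrix.mul_apply, (hd i j hij u v).symm]
      have : inj (f i) * (SU.toMat x - 1) * (inj (f i))ᴴ *
          (inj (f j) * (SU.toMat x - 1) * (inj (f j))ᴴ) = inj (f i) * (SU.toMat x - 1) *
            ((inj (f i))ᴴ * inj (f j)) * ((SU.toMat x - 1) * (inj (f j))ᴴ) := by
        simp only [Matrix.mul_assoc]
      rw [this, h0, Matrix.mul_zero, Matrix.zero_mul]
    rw [List.map_cons, List.prod_cons, SU.toMat_mul, ih hL.2, List.map_cons, List.sum_cons]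
    have h1 : SU.toMat (exi (f i) (hf i) x) =
      1 + inj (f i) * (SU.toMat x - 1) * (inj (f i))ᴴ := rfl
    rw [h1, add_mul, one_mul, mul_add, mul_one, hz, add_zero]
    abel

/-- A sum of `r` copies of the defining representation on disjoint blocks is homotopic to the `r`-th
power of a single block inclusion. -/
theorem PiG.map_eq_pow (hb : 1 ≤ b) (f : Fin r → Fin a → Fin b) (hf : ∀ j, Function.Injective (f j))
    (hd : ∀ i j, i ≠ j → ∀ u v, f i u ≠ f j v) (κ : SU a →ₜ* SU b)
    (hκ : ∀ x, SU.toMat (κ x) = 1 + ∑ j, inj (f j) * (SU.toMat x - 1) * (inj (f j))ᴴ)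
    (g : Fin a → Fin b) (hg : Function.Injective g) (x : PiG e (SU a)) :
    PiG.map e κ x = PiG.map e (exi g hg) x ^ r := by
  have h1 : ∀ y, κ y = ((List.finRange r).map fun j => exi (f j) (hf j) y).prod := fun y => by
    apply SU.toMat_injective
    rw [prod_exi f hf hd y _ (List.nodup_finRange r), hκ, ← Fin.sum_univ_def]
  have h2 : PiG.map e κ x =
      ((List.finRange r).map fun j => PiG.map e (exi (f j) (hf j)) x).prod := by
    induction x using QuotientGroup.induction_on with | _ l => ?_
    have h3 : Lp.map e κ l =
        ((List.finRange r).map fun j => Lp.map e (exi (f j) (hf j)) l).prod := by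
      refine Subtype.ext (ContinuousMap.ext fun t => ?_)
      let ev : Lp e (SU b) →* SU b :=
        { toFun := fun l => l.1 t, map_one' := rfl, map_mul' := fun _ _ => rfl }
      change ev (Lp.map e κ l) = ev ((List.finRange r).map fun j => Lp.map e (exi (f j) (hf j)) l).prod
      rw [map_list_prod, List.map_map]
      exact h1 _
    rw [PiG.map_mk, h3]
    change QuotientGroup.mk' (Nl e (SU b)) _ = _
    rw [map_list_prod, List.map_map]
    rfl
  rw [h2]
  have h4 : ∀ j, PiG.map e (exi (f j) (hf j)) x = PiG.map e (exi g hg) x := fun j => by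
    rw [PiG.map_exi_eq hb (f j) g (hf j) hg]
  simp [h4]

/-- Composed with stabilization, `A ↦ A ⊗ I_c` is stabilization followed by the `c`-th power. -/
theorem PiG.map_kronL (ha : 1 ≤ a) (hc : 1 ≤ c) (h : a * c ≤ N) (h' : a ≤ N)
    (x : PiG e (SU a)) :
    PiG.map e (stle h) (PiG.map e (kronL a c) x) = PiG.map e (stle h') x ^ c := by
  have hac : a ≤ a * c := Nat.le_mul_of_pos_right a hc
  rw [PiG.map_eq_pow (ha.trans hac) (fun (j : Fin c) (i : Fin a) => finProdFinEquiv (i, j))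
    (fun j u v huv => by simpa using huv) (fun i j hij u v huv => hij (by simpa using
      (Prod.ext_iff.1 (finProdFinEquiv.injective huv)).2)) (kronL a c)
    (fun x => ?_) (Fin.castLE hac) (Fin.castLE_injective hac), map_pow, PiG.map_map]
  · unfold stle
    rw [exi_comp]
    rfl
  · rw [toMat_kronL]
    have h1 := kron_one_right (c := c) (1 : Matrix (Fin a) (Fin a) ℂ)
    rw [kron_one_one] at h1
    simp only [Matrix.mul_sub, Matrix.sub_mul, Finset.sum_sub_distrib]
    rw [← h1, kron_one_right]
    abel

theorem PiG.map_kronR (ha : 1 ≤ a) (hc : 1 ≤ c) (h : a * c ≤ N) (h' : c ≤ N)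
    (x : PiG e (SU c)) :
    PiG.map e (stle h) (PiG.map e (kronR a c) x) = PiG.map e (stle h') x ^ a := by
  have hac : c ≤ a * c := Nat.le_mul_of_pos_left c ha
  rw [PiG.map_eq_pow (hc.trans hac) (fun (i : Fin a) (j : Fin c) => finProdFinEquiv (i, j))
    (fun j u v huv => by simpa using huv) (fun i j hij u v huv => hij (by simpa using
      (Prod.ext_iff.1 (finProdFinEquiv.injective huv)).1)) (kronR a c)
    (fun x => ?_) (Fin.castLE hac) (Fin.castLE_injective hac), map_pow, PiG.map_map]
  · unfold stle
    rw [exi_comp]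
    rfl
  · rw [toMat_kronR]
    have h1 := kron_one_left (a := a) (1 : Matrix (Fin c) (Fin c) ℂ)
    rw [kron_one_one] at h1
    simp only [Matrix.mul_sub, Matrix.sub_mul, Finset.sum_sub_distrib]
    rw [← h1, kron_one_left]
    abel

end Kron

section Prod

variable {K L : Type*} [Group K] [TopologicalSpace K] [IsTopologicalGroup K]
  [Group L] [TopologicalSpace L] [IsTopologicalGroup L] {e : ℕ}

theorem PiG.prod_surj (x : PiG e K) (y : PiG e L) : ∃ z : PiG e (K × L),
    PiG.map e (ContinuousMonoidHom.fst K L) z = x ∧ PiG.map e (ContinuousMonoidHom.snd K L) z = y := by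
  induction x using QuotientGroup.induction_on with | _ f => ?_
  induction y using QuotientGroup.induction_on with | _ g => ?_
  exact ⟨((⟨f.1.prodMk g.1, fun t ht => Prod.ext (f.2 t ht) (g.2 t ht)⟩ : Lp e (K × L)) :
    PiG e (K × L)), rfl, rfl⟩

theorem PiG.prod_eq_one (z : PiG e (K × L)) (h1 : PiG.map e (ContinuousMonoidHom.fst K L) z = 1)
    (h2 : PiG.map e (ContinuousMonoidHom.snd K L) z = 1) : z = 1 := by
  induction z using QuotientGroup.induction_on with | _ f => ?_
  rw [PiG.map_mk, PiG.mk_eq_one] at h1 h2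
  rw [PiG.mk_eq_one]
  obtain ⟨Γ, hΓ⟩ := h1
  obtain ⟨Δ, hΔ⟩ := h2
  exact ⟨Γ.prodMk Δ, fun y => Prod.ext (hΓ.one' y) (hΔ.one' y),
    fun y => Prod.ext (hΓ.zero' y) (hΔ.zero' y),
    fun t y hy => Prod.ext (hΓ.side' t y hy) (hΔ.side' t y hy)⟩

theorem PiG.prod_ext (z w : PiG e (K × L))
    (h1 : PiG.map e (ContinuousMonoidHom.fst K L) z = PiG.map e (ContinuousMonoidHom.fst K L) w)
    (h2 : PiG.map e (ContinuousMonoidHom.snd K L) z = PiG.map e (ContinuousMonoidHom.snd K L) w) :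
    z = w := by
  rw [← mul_inv_eq_one]
  refine PiG.prod_eq_one _ ?_ ?_
  · rw [map_mul, map_inv, h1, mul_inv_cancel]
  · rw [map_mul, map_inv, h2, mul_inv_cancel]

end Prod

section KronPi

variable {a c e N : ℕ}

/-- Stably, the Kronecker homomorphism is `(α, β) ↦ α^c β^a` on homotopy groups. -/
theorem PiG.map_kron (ha : 1 ≤ a) (hc : 1 ≤ c) (h : a * c ≤ N) (h1 : a ≤ N) (h2 : c ≤ N)
    (φ : (SU a × SU c) →ₜ* SU (a * c))
    (hφ : ∀ A B, SU.toMat (φ (A, B)) = kron (SU.toMat A) (SU.toMat B))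
    (z : PiG e (SU a × SU c)) :
    PiG.map e (stle h) (PiG.map e φ z) =
      PiG.map e (stle h1) (PiG.map e (ContinuousMonoidHom.fst _ _) z) ^ c *
      PiG.map e (stle h2) (PiG.map e (ContinuousMonoidHom.snd _ _) z) ^ a := by
  rw [← PiG.map_kronL ha hc h h1, ← PiG.map_kronR ha hc h h2,
    ← map_mul (PiG.map e (stle h))]
  congr 1
  induction z using QuotientGroup.induction_on with | _ f => ?_
  refine congrArg (QuotientGroup.mk (s := Nl e (SU (a * c)))) (a₁ := Lp.map e φ f)
    (a₂ := Lp.map e (kronL a c) (Lp.map e (ContinuousMonoidHom.fst _ _) f) *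
      Lp.map e (kronR a c) (Lp.map e (ContinuousMonoidHom.snd _ _) f)) ?_
  refine Subtype.ext (ContinuousMap.ext fun t => SU.toMat_injective ?_)
  change SU.toMat (φ (f.1 t)) = SU.toMat (kronL a c (f.1 t).1 * kronR a c (f.1 t).2)
  rw [SU.toMat_mul, toMat_kronL, toMat_kronR, ← kron_mul, mul_one, one_mul, ← hφ]

end KronPi

/-! ### Arithmetic in abelian groups -/

section Arith

variable {T : Type*} [Group T]

theorem exists_pow_mul_pow {k l : ℕ} (h : Nat.gcd k l = 1) (t : T) :
    ∃ x y : T, x ^ l * y ^ k = t := by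
  have hb := Nat.gcd_eq_gcd_ab k l
  rw [h] at hb
  refine ⟨t ^ (Nat.gcdB k l), t ^ (Nat.gcdA k l), ?_⟩
  rw [← zpow_natCast, ← zpow_natCast, ← zpow_mul, ← zpow_mul, ← zpow_add]
  convert zpow_one t using 2
  rw [mul_comm, add_comm, mul_comm (Nat.gcdA k l), ← hb]; rfl

theorem eq_one_of_coprime_pow {t : T} {k l : ℕ} (h : Nat.gcd k l = 1) (hk : t ^ k = 1)
    (hl : t ^ l = 1) : t = 1 := by
  have := pow_gcd_eq_one.2 ⟨hk, hl⟩
  rwa [h, pow_one] at this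

/-- The map `(x, y) ↦ (x ^ m, y ^ n)` has trivial kernel on the solutions of
`x ^ l * y ^ k = 1`. -/
theorem kernel_inj (k l m n : ℕ) (h : Nat.gcd (k * m) (l * n) = 1) {x y : T}
    (hxy : x ^ l * y ^ k = 1) (hx : x ^ m = 1) (hy : y ^ n = 1) : x = 1 ∧ y = 1 := by
  have h1 : Nat.Coprime (k * m) (l * n) := h
  have e1 : x ^ l = (y ^ k)⁻¹ := eq_inv_of_mul_eq_one_left hxy
  have e2 : y ^ k = (x ^ l)⁻¹ := eq_inv_of_mul_eq_one_right hxy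
  constructor
  · refine eq_one_of_coprime_pow (k := m) (l := l * n) ?_ hx ?_
    · exact Nat.Coprime.coprime_dvd_left (Dvd.intro_left k rfl) h1
    · rw [pow_mul, e1, inv_pow, ← pow_mul, mul_comm, pow_mul, hy, one_pow, inv_one]
  · refine eq_one_of_coprime_pow (k := k * m) (l := n) ?_ ?_ hy
    · exact Nat.Coprime.coprime_dvd_right (Dvd.intro_left l rfl) h1
    · rw [pow_mul, e2, inv_pow, ← pow_mul, mul_comm, pow_mul, hx, one_pow, inv_one]

/-- The map `(x, y) ↦ (x ^ m, y ^ n)` from the solutions of `x ^ l * y ^ k = 1` to those of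
`x ^ (l * n) * y ^ (k * m) = 1` is onto. -/
theorem kernel_surj (hT : ∀ x y : T, x * y = y * x) (k l m n : ℕ)
    (h : Nat.gcd (k * m) (l * n) = 1) {x y : T} (hxy : x ^ (l * n) * y ^ (k * m) = 1) :
    ∃ x' y' : T, x' ^ l * y' ^ k = 1 ∧ x' ^ m = x ∧ y' ^ n = y := by
  let _ : CommGroup T := { (inferInstance : Group T) with mul_comm := hT }
  have hb := Nat.gcd_eq_gcd_ab (k * m) (l * n)
  rw [h] at hb
  set u := Nat.gcdA (k * m) (l * n)
  set v := Nat.gcdB (k * m) (l * n)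
  have e1 : x ^ (l * n) = (y ^ (k * m))⁻¹ := eq_inv_of_mul_eq_one_left hxy
  have e2 : y ^ (k * m) = (x ^ (l * n))⁻¹ := eq_inv_of_mul_eq_one_right hxy
  -- every element of the kernel is `(g^{km}, g^{-ln})` for this `g`
  set g := x ^ u * y ^ (-v) with hg
  have hgx : g ^ (k * m) = x := by
    have h1 : (y ^ (-v)) ^ (k * m) = x ^ (v * ((l * n : ℕ) : ℤ)) := by
      rw [← zpow_natCast, ← zpow_mul, mul_comm, zpow_mul, zpow_natCast, e2, inv_zpow, zpow_neg,
        inv_inv, ← zpow_natCast, ← zpow_mul, mul_comm]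
    rw [hg, mul_pow, h1, ← zpow_natCast, ← zpow_mul, ← zpow_add]
    convert zpow_one x using 2
    rw [mul_comm u, mul_comm v, ← hb]; rfl
  have hgy : g ^ (l * n) = y⁻¹ := by
    have h1 : (x ^ u) ^ (l * n) = y ^ (-(u * ((k * m : ℕ) : ℤ))) := by
      rw [← zpow_natCast, ← zpow_mul, mul_comm, zpow_mul, zpow_natCast, e1, inv_zpow, zpow_neg,
        ← zpow_natCast, ← zpow_mul, mul_comm]
    rw [hg, mul_pow, h1, ← zpow_natCast, ← zpow_mul, ← zpow_add]
    convert zpow_neg_one y using 2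
    rw [neg_mul, ← neg_add, mul_comm u, mul_comm v, ← hb]; rfl
  refine ⟨g ^ k, (g ^ l)⁻¹, ?_, ?_, ?_⟩
  · rw [inv_pow, ← pow_mul, ← pow_mul, mul_comm k l, mul_inv_cancel]
  · rw [← pow_mul, hgx]
  · rw [inv_pow, ← pow_mul, hgy, inv_inv]

end Arith

/-! ### The Kronecker homomorphism and its coset space -/

section KronHom

variable {a c d : ℕ} {φ : (SU a × SU c) →* SU (a * c)}

theorem kronHom_continuous (hφ : ∀ A B, SU.toMat (φ (A, B)) = kron (SU.toMat A) (SU.toMat B)) :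
    Continuous φ := by
  rw [SU.isEmbedding_toMat.continuous_iff]
  have : SU.toMat ∘ φ = fun z => kron (SU.toMat z.1) (SU.toMat z.2) :=
    funext fun z => hφ z.1 z.2
  rw [this]
  exact (SU.continuous_toMat.comp continuous_fst).kron (SU.continuous_toMat.comp continuous_snd)

/-- For coprime `a` and `c` the Kronecker homomorphism is injective: its kernel consists of pairs
of inverse scalars that are roots of unity of orders dividing both `a` and `c`. -/
theorem kronHom_injective (ha : 1 ≤ a) (hc : 1 ≤ c) (hac : Nat.gcd a c = 1)
    (hφ : ∀ A B, SU.toMat (φ (A, B)) = kron (SU.toMat A) (SU.toMat B)) :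
    Function.Injective φ := by
  rw [injective_iff_map_eq_one]
  rintro ⟨A, B⟩ h
  have h1 : kron (SU.toMat A) (SU.toMat B) = 1 := by rw [← hφ, h, SU.toMat_one]
  have h2 : ∀ p q p' q', SU.toMat A p q * SU.toMat B p' q' =
      (1 : Matrix (Fin a) (Fin a) ℂ) p q * (1 : Matrix (Fin c) (Fin c) ℂ) p' q' := by
    intro p q p' q'
    have h3 := congrFun (congrFun (h1.trans kron_one_one.symm) (finProdFinEquiv (p, p')))
      (finProdFinEquiv (q, q'))
    rwa [kron_apply, kron_apply] at h3
  let i0 : Fin a := ⟨0, ha⟩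
  let j0 : Fin c := ⟨0, hc⟩
  set x := SU.toMat A i0 i0 with hx
  set y := SU.toMat B j0 j0 with hy
  have hxy : x * y = 1 := by rw [hx, hy, h2]; simp
  have hA : SU.toMat A = x • 1 := by
    ext p q
    have h3 := h2 p q j0 j0
    rw [Matrix.one_apply_eq, mul_one] at h3
    rw [Matrix.smul_apply, smul_eq_mul, ← h3, mul_comm x, mul_assoc, ← hy, mul_comm y, hxy, mul_one]
  have hB : SU.toMat B = y • 1 := by
    ext p q
    have h3 := h2 i0 i0 p q
    rw [Matrix.one_apply_eq, one_mul] at h3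
    rw [Matrix.smul_apply, smul_eq_mul, ← h3, ← mul_assoc, mul_comm y, ← hx, hxy, one_mul]
  have hxa : x ^ a = 1 := by
    have := SU.det_toMat A
    rwa [hA, Matrix.det_smul, Matrix.det_one, mul_one, Fintype.card_fin] at this
  have hyc : y ^ c = 1 := by
    have := SU.det_toMat B
    rwa [hB, Matrix.det_smul, Matrix.det_one, mul_one, Fintype.card_fin] at this
  have hxc : x ^ c = 1 := by
    have : (x * y) ^ c = 1 := by rw [hxy, one_pow]
    rwa [mul_pow, hyc, mul_one] at this
  have hx1 : x = 1 := by
    have := pow_gcd_eq_one.2 ⟨hxa, hxc⟩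
    rwa [hac, pow_one] at this
  have hy1 : y = 1 := by rwa [hx1, one_mul] at hxy
  refine Prod.ext (SU.toMat_injective ?_) (SU.toMat_injective ?_)
  · rw [hA, hx1, one_smul]; exact SU.toMat_one.symm
  · rw [hB, hy1, one_smul]; exact SU.toMat_one.symm

/-- The Kronecker homomorphism as a continuous homomorphism. -/
def kronHom (φ : (SU a × SU c) →* SU (a * c))
    (hφ : ∀ A B, SU.toMat (φ (A, B)) = kron (SU.toMat A) (SU.toMat B)) :
    (SU a × SU c) →ₜ* SU (a * c) := ⟨φ, kronHom_continuous hφ⟩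

theorem isCosetProj_kronHom (hφ : ∀ A B, SU.toMat (φ (A, B)) = kron (SU.toMat A) (SU.toMat B)) :
    IsCosetProj (kronHom φ hφ) (QuotientGroup.mk : SU (a * c) → SU (a * c) ⧸ φ.range) where
  cont := QuotientGroup.continuous_mk
  surj := QuotientGroup.mk_surjective
  fib x y := by
    rw [QuotientGroup.eq, MonoidHom.mem_range]
    exact exists_congr fun h => ⟨fun e => eq_mul_of_inv_mul_eq e.symm,
      fun e => (inv_mul_eq_of_eq_mul e).symm⟩

theorem t2Space_kron (hφ : ∀ A B, SU.toMat (φ (A, B)) = kron (SU.toMat A) (SU.toMat B)) :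
    T2Space (SU (a * c) ⧸ φ.range) := by
  rw [t2Space_iff_of_isOpenQuotientMap QuotientGroup.isOpenQuotientMap_mk]
  have hcl : IsClosed (φ.range : Set (SU (a * c))) := by
    rw [MonoidHom.coe_range]
    exact (isCompact_range (kronHom_continuous hφ)).isClosed
  have hc : Continuous fun q : SU (a * c) × SU (a * c) => q.1⁻¹ * q.2 :=
    continuous_fst.inv.mul continuous_snd
  have he : {q : SU (a * c) × SU (a * c) |
      (QuotientGroup.mk q.1 : SU (a * c) ⧸ φ.range) = QuotientGroup.mk q.2} =
      (fun q : SU (a * c) × SU (a * c) => q.1⁻¹ * q.2) ⁻¹' (φ.range : Set (SU (a * c))) := by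
    ext q
    exact QuotientGroup.eq
  rw [he]
  exact hcl.preimage hc

/-- As `a` and `c` are coprime, every stable class has the form `α ^ c * β ^ a`. -/
theorem kronHom_surj (ha : 1 ≤ a) (hc : 1 ≤ c) (hac : Nat.gcd a c = 1)
    (hφ : ∀ A B, SU.toMat (φ (A, B)) = kron (SU.toMat A) (SU.toMat B))
    (hda : d < 2 * a) (hdc : d < 2 * c) : Function.Surjective (PiG.map d (kronHom φ hφ)) := by
  have h1 : a ≤ a * c := Nat.le_mul_of_pos_right a hc
  have h2 : c ≤ a * c := Nat.le_mul_of_pos_left c ha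
  intro y
  obtain ⟨α, β, hαβ⟩ := exists_pow_mul_pow hac (PiG.map d (stle (le_refl (a * c))) y)
  obtain ⟨α', rfl⟩ := stle_surj ha h1 hda.le α
  obtain ⟨β', rfl⟩ := stle_surj hc h2 hdc.le β
  obtain ⟨z, rfl, rfl⟩ := PiG.prod_surj α' β'
  refine ⟨z, stle_inj (ha.trans h1) (le_refl (a * c)) (by omega) ?_⟩
  rw [← hαβ]
  exact PiG.map_kron ha hc le_rfl h1 h2 (kronHom φ hφ) hφ z

end KronHom

/-! ### The unital embedding -/

section Emb

open scoped Kronecker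

variable {k l m n : ℕ}

theorem embMat_kron (A : Matrix (Fin k) (Fin k) ℂ) (B : Matrix (Fin l) (Fin l) ℂ) :
    embMat k l m n (kron A B) = kron (kron A 1) (kron B 1) := by
  ext u v
  obtain ⟨⟨u₁, u₂⟩, rfl⟩ := finProdFinEquiv.surjective u
  obtain ⟨⟨i, p⟩, rfl⟩ := finProdFinEquiv.surjective u₁
  obtain ⟨⟨j, q⟩, rfl⟩ := finProdFinEquiv.surjective u₂
  obtain ⟨⟨v₁, v₂⟩, rfl⟩ := finProdFinEquiv.surjective v
  obtain ⟨⟨i', p'⟩, rfl⟩ := finProdFinEquiv.surjective v₁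
  obtain ⟨⟨j', q'⟩, rfl⟩ := finProdFinEquiv.surjective v₂
  simp only [kron_apply]
  have h1 : embMat k l m n (kron A B)
      (finProdFinEquiv (finProdFinEquiv (i, p), finProdFinEquiv (j, q)))
      (finProdFinEquiv (finProdFinEquiv (i', p'), finProdFinEquiv (j', q'))) =
      kron A B (finProdFinEquiv (i, j)) (finProdFinEquiv (i', j')) *
        (1 : Matrix (Fin (m * n)) (Fin (m * n)) ℂ) (finProdFinEquiv (p, q))
          (finProdFinEquiv (p', q')) := by
    simp [embMat, reshuffle, Matrix.kroneckerMap_apply]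
  rw [h1, kron_apply, ← kron_one_one, kron_apply]
  ring

/-- The homomorphism `SU(kl) → SU(klmn)`, `A ↦ A ⊗ I_{mn}`, with reshuffled indices. -/
noncomputable def embHom (k l m n : ℕ) : SU (k * l) →ₜ* SU (k * m * (l * n)) :=
  SU.homMk (fun x => embMat k l m n (SU.toMat x))
    (by
      unfold embMat
      refine continuous_matrix fun i j => ?_
      simp only [Matrix.reindex_apply, Matrix.submatrix_apply, Matrix.kroneckerMap_apply]
      exact ((continuous_apply_apply _ _).comp SU.continuous_toMat).mul continuous_const)
    (by
      unfold embMat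
      rw [SU.toMat_one, Matrix.one_kronecker_one, Matrix.reindex_apply,
        Matrix.submatrix_one_equiv])
    (fun x y => by
      have h : SU.toMat (x * y) ⊗ₖ (1 : Matrix (Fin (m * n)) (Fin (m * n)) ℂ) =
          (SU.toMat x ⊗ₖ (1 : Matrix (Fin (m * n)) (Fin (m * n)) ℂ)) *
            (SU.toMat y ⊗ₖ (1 : Matrix (Fin (m * n)) (Fin (m * n)) ℂ)) := by
        rw [← Matrix.mul_kronecker_mul, SU.toMat_mul, one_mul]
      unfold embMat
      rw [h]
      simp only [Matrix.reindex_apply]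
      rw [Matrix.submatrix_mul_equiv])
    (fun x => by
      have h : star (SU.toMat x ⊗ₖ (1 : Matrix (Fin (m * n)) (Fin (m * n)) ℂ)) *
          (SU.toMat x ⊗ₖ (1 : Matrix (Fin (m * n)) (Fin (m * n)) ℂ)) = 1 := by
        rw [Matrix.star_eq_conjTranspose, Matrix.conjTranspose_kronecker,
          ← Matrix.mul_kronecker_mul, ← Matrix.star_eq_conjTranspose, SU.star_mul_toMat]
        simp
      unfold embMat
      rw [Matrix.star_eq_conjTranspose, Matrix.conjTranspose_reindex,
        ← Matrix.star_eq_conjTranspose]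
      simp only [Matrix.reindex_apply]
      rw [Matrix.submatrix_mul_equiv, h, Matrix.submatrix_one_equiv])
    (fun x => by
      unfold embMat
      rw [Matrix.det_reindex_self, Matrix.det_kronecker, SU.det_toMat]
      simp)

/-- The homomorphism of stabilizer groups `(A, B) ↦ (A ⊗ I_m, B ⊗ I_n)` covered by the unital
embedding. -/
noncomputable def embStab (k l m n : ℕ) : (SU k × SU l) →ₜ* (SU (k * m) × SU (l * n)) where
  toFun z := (kronL k m z.1, kronL l n z.2)
  map_one' := by simp
  map_mul' := by simp
  continuous_toFun := ((kronL k m).continuous_toFun.comp continuous_fst).prodMk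
    ((kronL l n).continuous_toFun.comp continuous_snd)

theorem PiG.map_fst_embStab {k l m n e : ℕ} (z : PiG e (SU k × SU l)) :
    PiG.map e (ContinuousMonoidHom.fst _ _) (PiG.map e (embStab k l m n) z) =
      PiG.map e (kronL k m) (PiG.map e (ContinuousMonoidHom.fst _ _) z) := by
  rw [PiG.map_map, PiG.map_map]
  rfl

theorem PiG.map_snd_embStab {k l m n e : ℕ} (z : PiG e (SU k × SU l)) :
    PiG.map e (ContinuousMonoidHom.snd _ _) (PiG.map e (embStab k l m n) z) =
      PiG.map e (kronL l n) (PiG.map e (ContinuousMonoidHom.snd _ _) z) := by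
  rw [PiG.map_map, PiG.map_map]
  rfl

end Emb

/-- A continuous map induces a map on homotopy groups. -/
theorem exists_induced {B₁ B₂ : Type*} [TopologicalSpace B₁] [TopologicalSpace B₂] {b₁ : B₁}
    {b₂ : B₂} {d : ℕ} {f : B₁ → B₂} (hf : Continuous f) (hfb : f b₁ = b₂) :
    ∃ Φ : HomotopyGroup (Fin d) B₁ b₁ → HomotopyGroup (Fin d) B₂ b₂,
      ∀ (γ : GenLoop (Fin d) B₁ b₁) (δ : GenLoop (Fin d) B₂ b₂),
        (∀ t, δ t = f (γ t)) → Φ (Quotient.mk _ γ) = Quotient.mk _ δ := by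
  let fl : GenLoop (Fin d) B₁ b₁ → GenLoop (Fin d) B₂ b₂ := fun γ =>
    ⟨⟨fun x => f (γ x), hf.comp γ.1.continuous⟩, fun x hx => by
      change f (γ x) = b₂
      rw [← hfb]; exact congrArg f (γ.2 x hx)⟩
  refine ⟨Quotient.map fl fun γ γ' h => ?_, fun γ δ h => ?_⟩
  · exact ContinuousMap.HomotopicRel.comp_continuousMap h ⟨f, hf⟩
  · have : δ = fl γ := GenLoop.ext _ _ h
    rw [this]
    rfl

/-- A continuous homomorphism mapping a subgroup `K` into a subgroup `L` induces a continuous map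
of the coset spaces. -/
theorem exists_cosetMap {G H : Type*} [Group G] [TopologicalSpace G] [Group H]
    [TopologicalSpace H] (ι : G →ₜ* H) (K : Subgroup G) (L : Subgroup H)
    (hKL : ∀ x ∈ K, ι x ∈ L) :
    ∃ f : G ⧸ K → H ⧸ L, Continuous f ∧
      ∀ x, f (QuotientGroup.mk x) = QuotientGroup.mk (ι x) := by
  have hwd : ∀ x y : G, (QuotientGroup.leftRel K) x y →
      (QuotientGroup.mk (ι x) : H ⧸ L) = QuotientGroup.mk (ι y) := fun x y hxy => by
    have hz := hKL _ (QuotientGroup.leftRel_apply.1 hxy)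
    rw [map_mul, map_inv] at hz
    exact QuotientGroup.eq.2 hz
  refine ⟨Quotient.lift _ hwd, ?_, fun x => rfl⟩
  exact (QuotientGroup.continuous_mk.comp ι.continuous_toFun).quotient_lift hwd

end Auxiliary

/-! ### Stabilization -/

set_option maxHeartbeats 1000000 in
/-- Let `gcd(k,l) = 1` and `gcd(km,ln) = 1`, and let `Gr_{k,l} = SU(kl) ⧸ (SU(k) ⊗ SU(l))`
and `Gr_{km,ln} = SU(klmn) ⧸ (SU(km) ⊗ SU(ln))` be the matrix Grassmannians, where the
subgroups are the ranges of the Kronecker homomorphisms `φ₁`, `φ₂`.  Then the map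
`Gr_{k,l} → Gr_{km,ln}` induced by `A ↦ A ⊗ I_{mn}` is a well-defined continuous map
inducing an isomorphism on homotopy groups `π_d` for all `1 ≤ d < 2·min(k,l)`. -/
theorem matrixGrassmannian_stabilization (k l m n : ℕ)
    (hk : 0 < k) (hl : 0 < l) (hm : 0 < m) (hn : 0 < n)
    (hkl : Nat.gcd k l = 1) (hkmln : Nat.gcd (k * m) (l * n) = 1)
    (φ₁ : (SU k × SU l) →* SU (k * l))
    (hφ₁ : ∀ (A : SU k) (B : SU l),
      SU.toMat (φ₁ (A, B)) = kron (SU.toMat A) (SU.toMat B))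
    (φ₂ : (SU (k * m) × SU (l * n)) →* SU (k * m * (l * n)))
    (hφ₂ : ∀ (A : SU (k * m)) (B : SU (l * n)),
      SU.toMat (φ₂ (A, B)) = kron (SU.toMat A) (SU.toMat B)) :
    ∃ f : (SU (k * l) ⧸ φ₁.range) → (SU (k * m * (l * n)) ⧸ φ₂.range),
      Continuous f ∧
      (∀ x : SU (k * l), ∃ y : SU (k * m * (l * n)),
        SU.toMat y = embMat k l m n (SU.toMat x) ∧
        f (QuotientGroup.mk x) = QuotientGroup.mk y) ∧
      (∀ d : ℕ, 1 ≤ d → d < 2 * min k l →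
        (∃ Φ : HomotopyGroup (Fin d) (SU (k * l) ⧸ φ₁.range) (QuotientGroup.mk 1) →
            HomotopyGroup (Fin d) (SU (k * m * (l * n)) ⧸ φ₂.range) (QuotientGroup.mk 1),
          ∀ (γ : Ω^ (Fin d) (SU (k * l) ⧸ φ₁.range) (QuotientGroup.mk 1))
            (δ : Ω^ (Fin d) (SU (k * m * (l * n)) ⧸ φ₂.range) (QuotientGroup.mk 1)),
            (∀ t, δ t = f (γ t)) → Φ ⟦γ⟧ = ⟦δ⟧) ∧
        (∀ Φ : HomotopyGroup (Fin d) (SU (k * l) ⧸ φ₁.range) (QuotientGroup.mk 1) →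
            HomotopyGroup (Fin d) (SU (k * m * (l * n)) ⧸ φ₂.range) (QuotientGroup.mk 1),
          (∀ (γ : Ω^ (Fin d) (SU (k * l) ⧸ φ₁.range) (QuotientGroup.mk 1))
            (δ : Ω^ (Fin d) (SU (k * m * (l * n)) ⧸ φ₂.range) (QuotientGroup.mk 1)),
            (∀ t, δ t = f (γ t)) → Φ ⟦γ⟧ = ⟦δ⟧) →
          Function.Bijective Φ)) := by
  have hικ : ∀ z, embHom k l m n (φ₁ z) = φ₂ (embStab k l m n z) := by
    rintro ⟨A, B⟩
    apply SU.toMat_injective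
    change embMat k l m n (SU.toMat (φ₁ (A, B))) = SU.toMat (φ₂ (kronL k m A, kronL l n B))
    rw [hφ₁, hφ₂, embMat_kron, toMat_kronL, toMat_kronL]
  obtain ⟨f, hf, hfq⟩ := exists_cosetMap (embHom k l m n) φ₁.range φ₂.range (by
    rintro _ ⟨z, rfl⟩
    exact ⟨_, (hικ z).symm⟩)
  refine ⟨f, hf, fun x => ⟨embHom k l m n x, rfl, hfq x⟩, fun d hd1 hd2 => ⟨?_, fun Φ hΦ => ?_⟩⟩
  · exact exists_induced hf (by rw [hfq, map_one])
  obtain ⟨e, rfl⟩ : ∃ e, d = e + 1 := ⟨d - 1, by omega⟩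
  have hdk : e + 1 < 2 * k := by omega
  have hdl : e + 1 < 2 * l := by omega
  have hkm : k ≤ k * m := Nat.le_mul_of_pos_right k hm
  have hln : l ≤ l * n := Nat.le_mul_of_pos_right l hn
  have hkN : k * m ≤ k * m * (l * n) := Nat.le_mul_of_pos_right _ (Nat.mul_pos hl hn)
  have hlN : l * n ≤ k * m * (l * n) := Nat.le_mul_of_pos_left _ (Nat.mul_pos hk hm)
  have hklN : k * l ≤ k * m * (l * n) := Nat.mul_le_mul hkm hln
  have hk1 : k ≤ k * m * (l * n) := hkm.trans hkN
  have hl1 : l ≤ k * m * (l * n) := hln.trans hlN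
  have hkkl : k ≤ k * l := Nat.le_mul_of_pos_right k hl
  have := t2Space_kron hφ₁
  have := t2Space_kron hφ₂
  -- the stabilizer map is `(α, β) ↦ (α ^ m, β ^ n)` in the stable homotopy groups
  have hκ1 : ∀ z : PiG e (SU k × SU l), PiG.map e (stle hkN) (PiG.map e
      (ContinuousMonoidHom.fst _ _) (PiG.map e (embStab k l m n) z)) =
      PiG.map e (stle hk1) (PiG.map e (ContinuousMonoidHom.fst _ _) z) ^ m := fun z => by
    rw [PiG.map_fst_embStab, PiG.map_kronL hk hm hkN hk1]
  have hκ2 : ∀ z : PiG e (SU k × SU l), PiG.map e (stle hlN) (PiG.map e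
      (ContinuousMonoidHom.snd _ _) (PiG.map e (embStab k l m n) z)) =
      PiG.map e (stle hl1) (PiG.map e (ContinuousMonoidHom.snd _ _) z) ^ n := fun z => by
    rw [PiG.map_snd_embStab, PiG.map_kronL hl hn hlN hl1]
  have hφ1 := PiG.map_kron (e := e) hk hl hklN hk1 hl1 (kronHom φ₁ hφ₁) hφ₁
  have hφ2 := PiG.map_kron (e := e) (hk.trans_le hkm) (hl.trans_le hln) le_rfl hkN hlN
    (kronHom φ₂ hφ₂) hφ₂
  have hT : ∀ x y : PiG e (SU (k * m * (l * n))), x * y = y * x :=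
    PiG.comm (hk.trans_le hk1) (by omega)
  refine bijective_of_kernels (isCosetProj_kronHom hφ₁) (isCosetProj_kronHom hφ₂)
    ((SU.sqrtNear k).prod (SU.sqrtNear l)) ((SU.sqrtNear (k * m)).prod (SU.sqrtNear (l * n)))
    (kronHom_injective hk hl hkl hφ₁)
    (kronHom_injective (hk.trans_le hkm) (hl.trans_le hln) hkmln hφ₂) rfl rfl
    (embHom k l m n) (embStab k l m n) hικ hf hfq
    (kronHom_surj hk hl hkl hφ₁ hdk hdl)
    (kronHom_surj (hk.trans_le hkm) (hl.trans_le hln) hkmln hφ₂ (by omega) (by omega))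
    (fun z hz1 hz2 => ?_) (fun w hw => ?_) Φ hΦ
  · have h1 := hφ1 z
    rw [hz1, map_one, eq_comm] at h1
    have h2 := hκ1 z
    have h3 := hκ2 z
    rw [hz2, map_one, map_one, eq_comm] at h2 h3
    obtain ⟨hα, hβ⟩ := kernel_inj k l m n hkmln h1 h2 h3
    exact PiG.prod_eq_one z
      ((injective_iff_map_eq_one _).1 (stle_inj hk hk1 (by omega)) _ hα)
      ((injective_iff_map_eq_one _).1 (stle_inj hl hl1 (by omega)) _ hβ)
  · have h1 := hφ2 w
    rw [hw, map_one, eq_comm] at h1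
    obtain ⟨α, β, hαβ, hα, hβ⟩ := kernel_surj hT k l m n hkmln h1
    obtain ⟨α', rfl⟩ := stle_surj hk hk1 (by omega : e ≤ 2 * k) α
    obtain ⟨β', rfl⟩ := stle_surj hl hl1 (by omega : e ≤ 2 * l) β
    obtain ⟨z, rfl, rfl⟩ := PiG.prod_surj α' β'
    refine ⟨z, ?_, PiG.prod_ext _ _ ?_ ?_⟩
    · refine (injective_iff_map_eq_one _).1 (stle_inj (hk.trans_le hkkl) hklN (by omega)) _ ?_
      rw [hφ1, hαβ]
    · refine stle_inj (hk.trans_le hkm) hkN (by omega) ?_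
      rw [hκ1, hα]
    · refine stle_inj (hl.trans_le hln) hlN (by omega) ?_
      rw [hκ2, hβ]
end
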